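/- Let U(R) = 10(1+R²/3)^{−2} − (20R²/3)(1+R²/3)^{−3}, let φ(·,ξ) be the solution of −φ'' − 5(1+R²/3)^{−2} φ = ξφ with φ(0,ξ)=0, ∂_Rφ(0,ξ)=1, and define F(ξ,η) = ∫₀^∞ U(R) φ(R,ξ) φ(R,η) dR for ξ, η > 0. Then F is symmetric (F(ξ,η) = F(η,ξ)), of class C² on (0,∞) × (0,∞), and for every integer N there is a constant C_N such that: |F(ξ,η)| ≤ C_N (ξ+η) when ξ+η ≤ 1 and |F(ξ,η)| ≤ C_N (ξ+η)^{−1} (1+|√ξ−√η|)^{−N} when ξ+η ≥ 1; |∂_ξ F| + |∂_η F| ≤ C_N when ξ+η ≤ 1 and ≤ C_N (ξ+η)^{−3/2} (1+|√ξ−√η|)^{−N} when ξ+η ≥ 1; and all second derivatives ∂^j_ξ ∂^k_η F with j+k = 2 are bounded by C_N (ξ+η)^{−1/2} when ξ+η ≤ 1 and by C_N (ξ+η)^{−2} (1+|√ξ−√η|)^{−N} when ξ+η ≥ 1. -/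

import Mathlib

open MeasureTheory

noncomputable section

namespace TransferenceKernel

/-- `U(R) = 10(1+R²/3)^{-2} - (20R²/3)(1+R²/3)^{-3}`, from `[𝓛, R∂_R] = 2𝓛 + U`. -/
def U (R : ℝ) : ℝ := 10 / (1 + R ^ 2 / 3) ^ 2 - (20 * R ^ 2 / 3) / (1 + R ^ 2 / 3) ^ 3

section Helpers

open Filter Topology

def w (R : ℝ) : ℝ := (1 + R ^ 2 / 3)⁻¹

def V (R : ℝ) : ℝ := 5 * w R ^ 2

lemma w_pos (R : ℝ) : 0 < w R := by unfold w; positivity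

lemma w_le_one (R : ℝ) : w R ≤ 1 := by
  unfold w; apply inv_le_one_of_one_le₀; nlinarith [sq_nonneg R]

lemma w_mul (R : ℝ) : w R * (1 + R ^ 2 / 3) = 1 := by
  unfold w; exact inv_mul_cancel₀ (by positivity)

lemma V_nonneg (R : ℝ) : 0 ≤ V R := by unfold V; positivity

lemma V_le (R : ℝ) : V R ≤ 5 := by
  unfold V; nlinarith [w_pos R, w_le_one R]

lemma V_abs_le (R : ℝ) : |V R| ≤ 5 := by rw [abs_of_nonneg (V_nonneg R)]; exact V_le R

lemma w_deriv (R : ℝ) : HasDerivAt w (-(2 / 3) * R * w R ^ 2) R := by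
  have h : HasDerivAt (fun R : ℝ => 1 + R ^ 2 / 3) (2 * R / 3) R := by
    have := ((hasDerivAt_pow 2 R).div_const 3).const_add 1
    simpa using this
  have := h.inv (by positivity)
  refine this.congr_deriv ?_
  unfold w
  field_simp

lemma w_cont : Continuous w := continuous_iff_continuousAt.2 fun R => (w_deriv R).continuousAt

lemma w_neg (R : ℝ) : w (-R) = w R := by unfold w; simp

lemma V_neg (R : ℝ) : V (-R) = V R := by unfold V; rw [w_neg]

def Sol (ξ : ℝ) (u u' f : ℝ → ℝ) : Prop :=
  (∀ R, HasDerivAt u (u' R) R) ∧ ∀ R, HasDerivAt u' (-(V R + ξ) * u R - f R) R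

lemma Sol.lin {ξ : ℝ} {u u' f v v' g : ℝ → ℝ} (h : Sol ξ u u' f) (k : Sol ξ v v' g) (a b : ℝ) :
    Sol ξ (fun R => a * u R + b * v R) (fun R => a * u' R + b * v' R)
      (fun R => a * f R + b * g R) := by
  refine ⟨fun R => ((h.1 R).const_mul a).add ((k.1 R).const_mul b), fun R => ?_⟩
  exact (((h.2 R).const_mul a).add ((k.2 R).const_mul b)).congr_deriv (by ring)

lemma Sol.shift {ξ : ℝ} {u u' f : ℝ → ℝ} (h : Sol ξ u u' f) (ζ : ℝ) :
    Sol ζ u u' (fun R => f R + (ξ - ζ) * u R) := by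
  refine ⟨h.1, fun R => ?_⟩
  exact (h.2 R).congr_deriv (by ring)

lemma Sol.congr {ξ : ℝ} {u u' f g : ℝ → ℝ} (h : Sol ξ u u' f) (e : ∀ R, f R = g R) :
    Sol ξ u u' g := by
  have : f = g := funext e
  exact this ▸ h

lemma Sol.refl {ξ : ℝ} {u u' f : ℝ → ℝ} (h : Sol ξ u u' f) :
    Sol ξ (fun R => u (-R)) (fun R => -u' (-R)) (fun R => f (-R)) := by
  constructor
  · intro R
    have := (h.1 (-R)).comp R (hasDerivAt_neg R)
    exact this.congr_deriv (by ring)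
  · intro R
    have := ((h.2 (-R)).comp R (hasDerivAt_neg R)).neg
    exact this.congr_deriv (by rw [V_neg]; ring)

lemma ap_pos (X R1 : ℝ) (hX : 0 ≤ X) (hR : 0 ≤ R1) : ∃ C : ℝ, 0 ≤ C ∧ ∀ ξ : ℝ, |ξ| ≤ X →
    ∀ u u' f : ℝ → ℝ, Sol ξ u u' f → ∀ M : ℝ, 0 ≤ M → |u 0| ≤ M → |u' 0| ≤ M →
    (∀ R, 0 ≤ R → R ≤ R1 → |f R| ≤ M) →
    ∀ R, 0 ≤ R → R ≤ R1 → |u R| ≤ C * M ∧ |u' R| ≤ C * M := by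
  have hK : (6 + X) ≠ 0 := by positivity
  refine ⟨Real.exp ((6 + X) * R1) + 1 / (6 + X) * (Real.exp ((6 + X) * R1) - 1), ?_, ?_⟩
  · have : 1 ≤ Real.exp ((6 + X) * R1) := Real.one_le_exp (by positivity)
    have : 0 ≤ Real.exp ((6 + X) * R1) - 1 := by linarith
    positivity
  intro ξ hξ u u' f h M hM h0 h0' hf R hR0 hRR
  have key := norm_le_gronwallBound_of_norm_deriv_right_le (E := ℝ × ℝ)
    (f := fun R => (u R, u' R)) (f' := fun R => (u' R, -(V R + ξ) * u R - f R))
    (δ := M) (K := 6 + X) (ε := M) (a := 0) (b := R1) ?_ ?_ ?_ ?_ R ⟨hR0, hRR⟩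
  · rw [gronwallBound_of_K_ne_0 hK] at key
    have hle : M * Real.exp ((6 + X) * (R - 0)) + M / (6 + X) * (Real.exp ((6 + X) * (R - 0)) - 1)
        ≤ (Real.exp ((6 + X) * R1) + 1 / (6 + X) * (Real.exp ((6 + X) * R1) - 1)) * M := by
      have e : Real.exp ((6 + X) * (R - 0)) ≤ Real.exp ((6 + X) * R1) := by
        apply Real.exp_le_exp.2; apply mul_le_mul_of_nonneg_left <;> linarith
      have : M / (6 + X) * (Real.exp ((6 + X) * (R - 0)) - 1) ≤
        M / (6 + X) * (Real.exp ((6 + X) * R1) - 1) := by gcongr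
      have : M * Real.exp ((6 + X) * (R - 0)) ≤ M * Real.exp ((6 + X) * R1) := by gcongr
      calc _ ≤ M * Real.exp ((6 + X) * R1) + M / (6 + X) * (Real.exp ((6 + X) * R1) - 1) := by
            linarith
        _ = _ := by ring
    have := key.trans hle
    rw [Prod.norm_mk, max_le_iff] at this
    simpa [Real.norm_eq_abs] using this
  · exact fun x _ => ((h.1 x).continuousAt.prodMk (h.2 x).continuousAt).continuousWithinAt
  · exact fun x _ => ((h.1 x).prodMk (h.2 x)).hasDerivWithinAt
  · rw [Prod.norm_mk, max_le_iff]; exact ⟨h0, h0'⟩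
  · intro x hx
    have n1 : |u x| ≤ ‖(u x, u' x)‖ := le_max_left _ _
    have n2 : |u' x| ≤ ‖(u x, u' x)‖ := le_max_right _ _
    have n0 : 0 ≤ ‖(u x, u' x)‖ := norm_nonneg _
    rw [Prod.norm_mk (u' x), max_le_iff]
    constructor
    · rw [Real.norm_eq_abs]; nlinarith
    · rw [Real.norm_eq_abs]
      have e1 : |(-(V x + ξ) * u x - f x)| ≤ (|V x| + |ξ|) * |u x| + |f x| := by
        refine (abs_sub _ _).trans ?_
        rw [abs_mul, abs_neg]
        gcongr
        exact abs_add_le _ _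
      have e2 := hf x hx.1 hx.2.le
      have e3 : (|V x| + |ξ|) * |u x| ≤ (5 + X) * ‖(u x, u' x)‖ := by
        gcongr; exact V_abs_le x
      nlinarith

lemma ap (X R1 : ℝ) (hX : 0 ≤ X) (hR : 0 ≤ R1) : ∃ C : ℝ, 0 ≤ C ∧ ∀ ξ : ℝ, |ξ| ≤ X →
    ∀ u u' f : ℝ → ℝ, Sol ξ u u' f → ∀ M : ℝ, 0 ≤ M → |u 0| ≤ M → |u' 0| ≤ M →
    (∀ R, |R| ≤ R1 → |f R| ≤ M) →
    ∀ R, |R| ≤ R1 → |u R| ≤ C * M ∧ |u' R| ≤ C * M := by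
  obtain ⟨C, hC, H⟩ := ap_pos X R1 hX hR
  refine ⟨C, hC, ?_⟩
  intro ξ hξ u u' f h M hM h0 h0' hf R hRR
  rcases le_total 0 R with hR0 | hR0
  · exact H ξ hξ u u' f h M hM h0 h0' (fun R a b => hf R (by rwa [abs_of_nonneg a])) R hR0
      ((le_abs_self R).trans hRR)
  · have := H ξ hξ _ _ _ h.refl M hM (by simpa using h0) (by simpa using h0')
      (fun R a b => hf (-R) (by rwa [abs_neg, abs_of_nonneg a])) (-R) (by linarith)
      ((neg_le_abs R).trans hRR)
    simpa using this

def C11 (f g : ℝ → ℝ → ℝ) : Prop := ∀ B : ℝ, 0 < B → ∃ C : ℝ, 0 ≤ C ∧ ∀ ξ ζ R : ℝ,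
  |ξ| ≤ B → |ζ| ≤ B → |R| ≤ B → |f ζ R - f ξ R - (ζ - ξ) * g ξ R| ≤ C * (ζ - ξ) ^ 2

def LB (f : ℝ → ℝ → ℝ) : Prop := ∀ B : ℝ, 0 < B → ∃ C : ℝ, 0 ≤ C ∧ ∀ ξ R : ℝ,
  |ξ| ≤ B → |R| ≤ B → |f ξ R| ≤ C

lemma C11.hasDerivAt {f g : ℝ → ℝ → ℝ} (h : C11 f g) (ξ R : ℝ) :
    HasDerivAt (fun ξ => f ξ R) (g ξ R) ξ := by
  obtain ⟨C, hC, H⟩ := h (|ξ| + |R| + 1) (by positivity)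
  rw [hasDerivAt_iff_isLittleO]
  have h1 : (fun x' => f x' R - f ξ R - (x' - ξ) • g ξ R) =O[𝓝 ξ] fun x' => (x' - ξ) ^ 2 := by
    apply Asymptotics.IsBigO.of_bound C
    have : ∀ᶠ x in 𝓝 ξ, |x - ξ| < 1 := by
      have := Metric.ball_mem_nhds ξ one_pos
      filter_upwards [this] with x hx
      simpa [Real.dist_eq] using hx
    filter_upwards [this] with x hx
    have hx' : |x| ≤ |ξ| + |R| + 1 := by
      have := abs_sub_abs_le_abs_sub x ξ
      linarith [abs_nonneg R]
    have := H ξ x R (by linarith [abs_nonneg R]) hx' (by linarith [abs_nonneg ξ])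
    simpa [Real.norm_eq_abs] using this
  refine h1.trans_isLittleO ?_
  have h2 : (fun x' : ℝ => (x' - ξ) ^ 2) = fun x' => (x' - ξ) * (x' - ξ) := by ext; ring
  rw [h2]
  have h3 : (fun x' : ℝ => x' - ξ) =o[𝓝 ξ] (fun _ => (1 : ℝ)) := by
    rw [Asymptotics.isLittleO_one_iff]
    have : ContinuousAt (fun x' : ℝ => x' - ξ) ξ := by fun_prop
    simpa [ContinuousAt] using this
  simpa using (Asymptotics.isBigO_refl (fun x' : ℝ => x' - ξ) (𝓝 ξ)).mul_isLittleO h3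

lemma deriv_lim (f f' : ℕ → ℝ → ℝ) (g g' : ℝ → ℝ) (B C D : ℝ)
    (h : ∀ n x, HasDerivAt (f n) (f' n x) x)
    (h1 : ∀ n x, |x| ≤ B → |f n x - g x| ≤ C * (1 / ((n : ℝ) + 1)))
    (h2 : ∀ n x, |x| ≤ B → |f' n x - g' x| ≤ D * (1 / ((n : ℝ) + 1))) (x : ℝ) (hx : |x| < B) :
    HasDerivAt g (g' x) x := by
  have hs : IsOpen {x : ℝ | |x| < B} := isOpen_lt continuous_abs continuous_const
  have T : ∀ C : ℝ, Tendsto (fun n : ℕ => C * (1 / ((n : ℝ) + 1))) atTop (𝓝 0) := fun C => by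
    simpa using (tendsto_one_div_add_atTop_nhds_zero_nat (𝕜 := ℝ)).const_mul C
  refine hasDerivAt_of_tendstoUniformlyOn (l := atTop) (f := f) (f' := f') hs ?_
    (Eventually.of_forall fun n x _ => h n x) ?_ hx
  · rw [Metric.tendstoUniformlyOn_iff]
    intro ε hε
    filter_upwards [(T D).eventually (gt_mem_nhds hε)] with n hn y hy
    rw [dist_comm, Real.dist_eq]
    exact (h2 n y (le_of_lt hy)).trans_lt hn
  · intro y hy
    rw [tendsto_iff_dist_tendsto_zero]
    exact squeeze_zero (fun n => dist_nonneg) (fun n => h1 n y (le_of_lt hy)) (T C)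

lemma lip_param {u u' f g : ℝ → ℝ → ℝ} {a0 b0 : ℝ} (hS : ∀ ξ, Sol ξ (u ξ) (u' ξ) (f ξ))
    (h0 : ∀ ξ, u ξ 0 = a0) (h0' : ∀ ξ, u' ξ 0 = b0) (hu : LB u) (hf : C11 f g) (hg : LB g)
    (B : ℝ) (hB : 0 < B) : ∃ C : ℝ, 0 ≤ C ∧ ∀ ξ ζ R : ℝ, |ξ| ≤ B → |ζ| ≤ B → |R| ≤ B →
      |u ζ R - u ξ R| ≤ C * |ζ - ξ| := by
  obtain ⟨Cu, hCu, Hu⟩ := hu B hB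
  obtain ⟨Cf, hCf, Hf⟩ := hf B hB
  obtain ⟨Cg, hCg, Hg⟩ := hg B hB
  obtain ⟨Ca, hCa, Ha⟩ := ap B B hB.le hB.le
  refine ⟨Ca * (Cu + Cg + 2 * B * Cf), by positivity, ?_⟩
  intro ξ ζ R hξ hζ hR
  have S := (((hS ζ).shift ξ).lin (hS ξ) 1 (-1))
  have := (Ha ξ hξ _ _ _ S ((Cu + Cg + 2 * B * Cf) * |ζ - ξ|) (by positivity)
    (by simp [h0]; positivity) (by simp [h0']; positivity) ?_ R hR).1
  · rw [mul_assoc]; convert this using 2; ring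
  intro R hR
  have e1 := Hu ζ R hζ hR
  have e2 := Hf ξ ζ R hξ hζ hR
  have e3 := Hg ξ R hξ hR
  have e4 : |ζ - ξ| ≤ 2 * B := (abs_sub _ _).trans (by linarith)
  calc |1 * (f ζ R + (ζ - ξ) * u ζ R) + -1 * f ξ R|
      = |(f ζ R - f ξ R - (ζ - ξ) * g ξ R) + ((ζ - ξ) * g ξ R + (ζ - ξ) * u ζ R)| := by
        congr 1; ring
    _ ≤ |f ζ R - f ξ R - (ζ - ξ) * g ξ R| + (|ζ - ξ| * |g ξ R| + |ζ - ξ| * |u ζ R|) := by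
        rw [← abs_mul, ← abs_mul]
        exact (abs_add_le _ _).trans (by gcongr; exact abs_add_le _ _)
    _ ≤ Cf * (ζ - ξ) ^ 2 + (|ζ - ξ| * Cg + |ζ - ξ| * Cu) := by gcongr
    _ ≤ _ := by
        rw [← sq_abs]
        nlinarith [mul_le_mul_of_nonneg_left e4 (mul_nonneg hCf (abs_nonneg (ζ - ξ)))]

lemma exists_v {u u' f g : ℝ → ℝ → ℝ} {a0 b0 : ℝ} (hS : ∀ ξ, Sol ξ (u ξ) (u' ξ) (f ξ))
    (h0 : ∀ ξ, u ξ 0 = a0) (h0' : ∀ ξ, u' ξ 0 = b0) (hu : LB u) (hf : C11 f g) (hg : LB g)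
    (ξ : ℝ) : ∃ v v' : ℝ → ℝ, Sol ξ v v' (fun R => g ξ R + u ξ R) ∧ v 0 = 0 ∧ v' 0 = 0 := by
  let h : ℕ → ℝ := fun n => 1 / ((n : ℝ) + 1)
  have hpos : ∀ n, 0 < h n := fun n => by positivity
  have hle : ∀ n, h n ≤ 1 := fun n => by
    show 1 / ((n : ℝ) + 1) ≤ 1
    rw [div_le_one (by positivity)]; linarith [(Nat.cast_nonneg n : (0 : ℝ) ≤ n)]
  have hlim : Tendsto h atTop (𝓝 0) := tendsto_one_div_add_atTop_nhds_zero_nat (𝕜 := ℝ)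
  let q : ℕ → ℝ → ℝ := fun n R => (h n)⁻¹ * u (ξ + h n) R + (-(h n)⁻¹) * u ξ R
  let q' : ℕ → ℝ → ℝ := fun n R => (h n)⁻¹ * u' (ξ + h n) R + (-(h n)⁻¹) * u' ξ R
  let s : ℕ → ℝ → ℝ := fun n R => u (ξ + h n) R + (h n)⁻¹ * (f (ξ + h n) R - f ξ R)
  have Sq : ∀ n, Sol ξ (q n) (q' n) (s n) := fun n => by
    refine (((hS (ξ + h n)).shift ξ).lin (hS ξ) ((h n)⁻¹) (-(h n)⁻¹)).congr fun R => ?_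
    simp only [s]
    have := (hpos n).ne'
    field_simp
    ring
  -- uniform estimate on sources
  have src : ∀ B, |ξ| + 1 ≤ B → ∃ C : ℝ, 0 ≤ C ∧ ∀ n R, |R| ≤ B →
      |s n R - (g ξ R + u ξ R)| ≤ C * h n := by
    intro B hB
    have hB0 : 0 < B := by linarith [abs_nonneg ξ]
    obtain ⟨Cl, hCl, Hl⟩ := lip_param hS h0 h0' hu hf hg B hB0
    obtain ⟨Cf, hCf, Hf⟩ := hf B hB0
    refine ⟨Cl + Cf, by positivity, fun n R hR => ?_⟩
    have hz : |ξ + h n| ≤ B := (abs_add_le _ _).trans (by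
      rw [abs_of_pos (hpos n)]; linarith [hle n])
    have e1 := Hl ξ (ξ + h n) R (by linarith) hz hR
    have e2 := Hf ξ (ξ + h n) R (by linarith) hz hR
    simp only [add_sub_cancel_left, abs_of_pos (hpos n)] at e1 e2
    have : s n R - (g ξ R + u ξ R) = (u (ξ + h n) R - u ξ R) +
        (h n)⁻¹ * (f (ξ + h n) R - f ξ R - h n * g ξ R) := by
      simp only [s]
      have := (hpos n).ne'
      field_simp
      ring
    rw [this]
    refine (abs_add_le _ _).trans ?_
    rw [abs_mul, abs_of_pos (inv_pos.2 (hpos n))]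
    have : (h n)⁻¹ * |f (ξ + h n) R - f ξ R - h n * g ξ R| ≤ (h n)⁻¹ * (Cf * h n ^ 2) := by
      have := hpos n
      gcongr
    have e3 : (h n)⁻¹ * (Cf * h n ^ 2) = Cf * h n := by
      have := (hpos n).ne'
      field_simp
    linarith
  have cau : ∀ B, |ξ| + 1 ≤ B → ∃ C : ℝ, 0 ≤ C ∧ ∀ n m R, |R| ≤ B →
      |q n R - q m R| ≤ C * (h n + h m) ∧ |q' n R - q' m R| ≤ C * (h n + h m) := by
    intro B hB
    have hB0 : 0 < B := by linarith [abs_nonneg ξ]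
    obtain ⟨C, hC, H⟩ := src B hB
    obtain ⟨Ca, hCa, Ha⟩ := ap B B hB0.le hB0.le
    refine ⟨Ca * C, by positivity, fun n m R hR => ?_⟩
    have p1 := hpos n
    have p2 := hpos m
    have := Ha ξ (by linarith) _ _ _ ((Sq n).lin (Sq m) 1 (-1)) (C * (h n + h m)) (by positivity)
      (by simp [q, h0]; positivity) (by simp [q', h0']; positivity) (fun R hR => by
        have e1 := H n R hR
        have e2 := H m R hR
        have : 1 * s n R + -1 * s m R = (s n R - (g ξ R + u ξ R)) - (s m R - (g ξ R + u ξ R)) := by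
          ring
        rw [this]
        exact (abs_sub _ _).trans (by linarith)) R hR
    constructor
    · rw [mul_assoc]; convert this.1 using 2; ring
    · rw [mul_assoc]; convert this.2 using 2; ring
  have lim : ∀ (Q : ℕ → ℝ), (∃ C : ℝ, 0 ≤ C ∧ ∀ n m, |Q n - Q m| ≤ C * (h n + h m)) →
      ∃ L, Tendsto Q atTop (𝓝 L) := by
    rintro Q ⟨C, hC, H⟩
    apply cauchySeq_tendsto_of_complete
    have hanti : ∀ n N : ℕ, N ≤ n → h n ≤ h N := fun n N hn => by
      apply one_div_le_one_div_of_le (by positivity)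
      have : (N : ℝ) ≤ n := by exact_mod_cast hn
      linarith
    refine cauchySeq_of_le_tendsto_0 (fun N => C * (h N + h N)) (fun n m N hn hm => ?_) ?_
    · rw [Real.dist_eq]
      refine (H n m).trans ?_
      have := hanti n N hn
      have := hanti m N hm
      gcongr
    · simpa using (hlim.add hlim).const_mul C
  have hB1 : ∀ R, |ξ| + 1 ≤ |ξ| + 1 + |R| := fun R => by linarith [abs_nonneg R]
  have hB2 : ∀ R, |R| ≤ |ξ| + 1 + |R| := fun R => by linarith [abs_nonneg ξ]
  have ex1 : ∀ R, ∃ L, Tendsto (fun n => q n R) atTop (𝓝 L) := fun R => by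
    obtain ⟨C, hC, H⟩ := cau _ (hB1 R)
    exact lim _ ⟨C, hC, fun n m => (H n m R (hB2 R)).1⟩
  have ex2 : ∀ R, ∃ L, Tendsto (fun n => q' n R) atTop (𝓝 L) := fun R => by
    obtain ⟨C, hC, H⟩ := cau _ (hB1 R)
    exact lim _ ⟨C, hC, fun n m => (H n m R (hB2 R)).2⟩
  choose v hv using ex1
  choose v' hv' using ex2
  have conv : ∀ B, |ξ| + 1 ≤ B → ∃ C : ℝ, 0 ≤ C ∧ ∀ n R, |R| ≤ B →
      |q n R - v R| ≤ C * h n ∧ |q' n R - v' R| ≤ C * h n := by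
    intro B hB
    obtain ⟨C, hC, H⟩ := cau B hB
    refine ⟨C, hC, fun n R hR => ⟨?_, ?_⟩⟩
    · have t1 : Tendsto (fun m => |q n R - q m R|) atTop (𝓝 |q n R - v R|) :=
        ((hv R).const_sub _).abs
      have t2 : Tendsto (fun m => C * (h n + h m)) atTop (𝓝 (C * (h n + 0))) :=
        (hlim.const_add _).const_mul C
      rw [add_zero] at t2
      exact le_of_tendsto_of_tendsto' t1 t2 fun m => (H n m R hR).1
    · have t1 : Tendsto (fun m => |q' n R - q' m R|) atTop (𝓝 |q' n R - v' R|) :=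
        ((hv' R).const_sub _).abs
      have t2 : Tendsto (fun m => C * (h n + h m)) atTop (𝓝 (C * (h n + 0))) :=
        (hlim.const_add _).const_mul C
      rw [add_zero] at t2
      exact le_of_tendsto_of_tendsto' t1 t2 fun m => (H n m R hR).2
  refine ⟨v, v', ⟨fun R => ?_, fun R => ?_⟩, ?_, ?_⟩
  · obtain ⟨C, hC, H⟩ := conv (|ξ| + 1 + |R|) (hB1 R)
    exact deriv_lim q q' v v' (|ξ| + 1 + |R|) C C (fun n x => (Sq n).1 x)
      (fun n x hx => (H n x hx).1) (fun n x hx => (H n x hx).2) R (by linarith [abs_nonneg ξ])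
  · obtain ⟨C, hC, H⟩ := conv (|ξ| + 1 + |R|) (hB1 R)
    obtain ⟨D, hD, G⟩ := src (|ξ| + 1 + |R|) (hB1 R)
    refine deriv_lim q' (fun n R => -(V R + ξ) * q n R - s n R) v'
      (fun R => -(V R + ξ) * v R - (g ξ R + u ξ R))
      (|ξ| + 1 + |R|) C ((5 + |ξ|) * C + D) (fun n x => (Sq n).2 x)
      (fun n x hx => (H n x hx).2) (fun n x hx => ?_) R (by linarith [abs_nonneg ξ])
    have e1 := (H n x hx).1
    have e2 := G n x hx
    have e3 : |V x + ξ| ≤ 5 + |ξ| := (abs_add_le _ _).trans (by linarith [V_abs_le x])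
    have : -(V x + ξ) * q n x - s n x - (-(V x + ξ) * v x - (g ξ x + u ξ x)) =
      -((V x + ξ) * (q n x - v x)) - (s n x - (g ξ x + u ξ x)) := by ring
    rw [this]
    refine (abs_sub _ _).trans ?_
    rw [abs_neg, abs_mul]
    have : |V x + ξ| * |q n x - v x| ≤ (5 + |ξ|) * (C * h n) := by gcongr
    calc _ ≤ (5 + |ξ|) * (C * h n) + D * h n := add_le_add this e2
      _ = _ := by simp only [h]; ring
  · refine tendsto_nhds_unique (hv 0) ?_
    have : (fun n => q n 0) = fun _ => 0 := by ext n; simp [q, h0]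
    rw [this]; exact tendsto_const_nhds
  · refine tendsto_nhds_unique (hv' 0) ?_
    have : (fun n => q' n 0) = fun _ => 0 := by ext n; simp [q', h0']
    rw [this]; exact tendsto_const_nhds

lemma param {u u' f g : ℝ → ℝ → ℝ} {a0 b0 : ℝ} (hS : ∀ ξ, Sol ξ (u ξ) (u' ξ) (f ξ))
    (h0 : ∀ ξ, u ξ 0 = a0) (h0' : ∀ ξ, u' ξ 0 = b0) (hu : LB u) (hf : C11 f g) (hg : LB g) :
    ∃ v v' : ℝ → ℝ → ℝ, (∀ ξ, Sol ξ (v ξ) (v' ξ) (fun R => g ξ R + u ξ R)) ∧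
      (∀ ξ, v ξ 0 = 0) ∧ (∀ ξ, v' ξ 0 = 0) ∧ C11 u v ∧ C11 u' v' ∧ LB v := by
  choose v v' hv hv0 hv0' using exists_v hS h0 h0' hu hf hg
  have key : ∀ B : ℝ, 0 < B → ∃ C : ℝ, 0 ≤ C ∧ ∀ ξ ζ R : ℝ,
      |ξ| ≤ B → |ζ| ≤ B → |R| ≤ B → |u ζ R - u ξ R - (ζ - ξ) * v ξ R| ≤ C * (ζ - ξ) ^ 2 ∧
      |u' ζ R - u' ξ R - (ζ - ξ) * v' ξ R| ≤ C * (ζ - ξ) ^ 2 := by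
    intro B hB
    obtain ⟨Cl, hCl, Hl⟩ := lip_param hS h0 h0' hu hf hg B hB
    obtain ⟨Cf, hCf, Hf⟩ := hf B hB
    obtain ⟨Ca, hCa, Ha⟩ := ap B B hB.le hB.le
    refine ⟨Ca * (Cl + Cf), by positivity, ?_⟩
    intro ξ ζ R hξ hζ hR
    have S := ((((hS ζ).shift ξ).lin (hS ξ) 1 (-1)).lin (hv ξ) 1 (-(ζ - ξ)))
    have := (Ha ξ hξ _ _ _ S ((Cl + Cf) * (ζ - ξ) ^ 2) (by positivity)
      (by simp [h0, hv0]; positivity) (by simp [h0', hv0']; positivity) ?_ R hR)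
    · rw [mul_assoc]
      constructor
      · convert this.1 using 2; ring
      · convert this.2 using 2; ring
    intro R hR
    have e1 := Hl ξ ζ R hξ hζ hR
    have e2 := Hf ξ ζ R hξ hζ hR
    calc _ = |(f ζ R - f ξ R - (ζ - ξ) * g ξ R) + (ζ - ξ) * (u ζ R - u ξ R)| := by
          congr 1; ring
      _ ≤ |f ζ R - f ξ R - (ζ - ξ) * g ξ R| + |ζ - ξ| * |u ζ R - u ξ R| := by
          rw [← abs_mul]
          exact (abs_add_le _ _)
      _ ≤ Cf * (ζ - ξ) ^ 2 + |ζ - ξ| * (Cl * |ζ - ξ|) := by gcongr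
      _ = _ := by
          rw [← sq_abs]; ring
  refine ⟨v, v', hv, hv0, hv0', ?_, ?_, ?_⟩
  · intro B hB
    obtain ⟨C, hC, H⟩ := key B hB
    exact ⟨C, hC, fun ξ ζ R a b c => (H ξ ζ R a b c).1⟩
  · intro B hB
    obtain ⟨C, hC, H⟩ := key B hB
    exact ⟨C, hC, fun ξ ζ R a b c => (H ξ ζ R a b c).2⟩
  · intro B hB
    obtain ⟨Cu, hCu, Hu⟩ := hu B hB
    obtain ⟨Cg, hCg, Hg⟩ := hg B hB
    obtain ⟨Ca, hCa, Ha⟩ := ap B B hB.le hB.le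
    refine ⟨Ca * (Cg + Cu), by positivity, fun ξ R hξ hR => ?_⟩
    refine (Ha ξ hξ _ _ _ (hv ξ) (Cg + Cu) (by positivity) (by simp [hv0]; positivity)
      (by simp [hv0']; positivity) (fun R hR => ?_) R hR).1
    exact (abs_add_le _ _).trans (add_le_add (Hg ξ R hξ hR) (Hu ξ R hξ hR))

/-- the family of `ξ`-derivatives -/
structure Data (p q : ℕ → ℝ → ℝ → ℝ) : Prop where
  s0 : ∀ ξ, Sol ξ (p 0 ξ) (q 0 ξ) (fun _ => 0)
  s1 : ∀ ξ, Sol ξ (p 1 ξ) (q 1 ξ) (p 0 ξ)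
  s2 : ∀ ξ, Sol ξ (p 2 ξ) (q 2 ξ) (fun R => 2 * p 1 ξ R)
  i0 : ∀ ξ, p 0 ξ 0 = 0
  i0' : ∀ ξ, q 0 ξ 0 = 1
  i1 : ∀ ξ, p 1 ξ 0 = 0
  i1' : ∀ ξ, q 1 ξ 0 = 0
  i2 : ∀ ξ, p 2 ξ 0 = 0
  i2' : ∀ ξ, q 2 ξ 0 = 0
  dp : ∀ j, j < 3 → ∀ ξ R, HasDerivAt (fun ξ => p j ξ R) (p (j + 1) ξ R) ξ
  dq : ∀ j, j < 3 → ∀ ξ R, HasDerivAt (fun ξ => q j ξ R) (q (j + 1) ξ R) ξ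

lemma exists_data (φ : ℝ → ℝ → ℝ)
    (hφ : ∀ ξ : ℝ,
      φ ξ 0 = 0 ∧ deriv (φ ξ) 0 = 1 ∧
      (∀ R : ℝ, HasDerivAt (φ ξ) (deriv (φ ξ) R) R) ∧
      (∀ R : ℝ, HasDerivAt (deriv (φ ξ)) (deriv (deriv (φ ξ)) R) R) ∧
      (∀ R : ℝ, - deriv (deriv (φ ξ)) R - (5 / (1 + R ^ 2 / 3) ^ 2) * φ ξ R = ξ * φ ξ R)) :
    ∃ p q, Data p q ∧ p 0 = φ := by
  have s0 : ∀ ξ, Sol ξ (φ ξ) (deriv (φ ξ)) (fun _ => 0) := fun ξ => by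
    obtain ⟨h1, h2, h3, h4, h5⟩ := hφ ξ
    refine ⟨h3, fun R => (h4 R).congr_deriv ?_⟩
    have : V R = 5 / (1 + R ^ 2 / 3) ^ 2 := by unfold V w; rw [inv_pow]; rfl
    rw [this]
    linarith [h5 R]
  have z : LB (fun _ _ => 0) := fun B _ => ⟨0, le_rfl, fun _ _ _ _ => by simp⟩
  have zc : C11 (fun _ _ => 0) (fun _ _ => 0) := fun B _ => ⟨0, le_rfl, fun _ _ _ _ _ _ => by simp⟩
  have lb0 : LB φ := fun B hB => by
    obtain ⟨Ca, hCa, Ha⟩ := ap B B hB.le hB.le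
    refine ⟨Ca * 1, by positivity, fun ξ R hξ hR => ?_⟩
    exact (Ha ξ hξ _ _ _ (s0 ξ) 1 (by positivity) (by simp [(hφ ξ).1])
      (by simp [(hφ ξ).2.1]) (fun R hR => by simp) R hR).1
  obtain ⟨v, v', s1, i1, i1', c1, c1', lb1⟩ := param s0 (fun ξ => (hφ ξ).1) (fun ξ => (hφ ξ).2.1)
    lb0 zc z
  obtain ⟨y, y', s2, i2, i2', c2, c2', lb2⟩ := param (f := φ) (g := v)
    (fun ξ => (s1 ξ).congr fun R => by simp) i1 i1' lb1 c1 lb1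
  have c2d : C11 (fun ξ R => 2 * v ξ R) (fun ξ R => 2 * y ξ R) := fun B hB => by
    obtain ⟨C, hC, H⟩ := c2 B hB
    refine ⟨2 * C, by positivity, fun ξ ζ R a b c => ?_⟩
    have := H ξ ζ R a b c
    have e : 2 * v ζ R - 2 * v ξ R - (ζ - ξ) * (2 * y ξ R) =
      2 * (v ζ R - v ξ R - (ζ - ξ) * y ξ R) := by ring
    rw [e, abs_mul, abs_two]; linarith
  have lb2d : LB (fun ξ R => 2 * y ξ R) := fun B hB => by
    obtain ⟨C, hC, H⟩ := lb2 B hB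
    refine ⟨2 * C, by positivity, fun ξ R a b => ?_⟩
    rw [abs_mul, abs_two]; linarith [H ξ R a b]
  have s2' : ∀ ξ, Sol ξ (y ξ) (y' ξ) (fun R => 2 * v ξ R) :=
    fun ξ => (s2 ξ).congr fun R => by ring
  obtain ⟨z, z', s3, i3, i3', c3, c3', lb3⟩ := param (f := fun ξ R => 2 * v ξ R)
    (g := fun ξ R => 2 * y ξ R) s2' i2 i2' lb2 c2d lb2d
  refine ⟨fun j => match j with | 0 => φ | 1 => v | 2 => y | _ => z,
    fun j => match j with | 0 => fun ξ => deriv (φ ξ) | 1 => v' | 2 => y' | _ => z', ?_, rfl⟩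
  refine ⟨s0, fun ξ => (s1 ξ).congr fun R => by simp, s2', fun ξ => (hφ ξ).1,
    fun ξ => (hφ ξ).2.1, i1, i1', i2, i2', ?_, ?_⟩
  · intro j hj ξ R
    interval_cases j
    · exact c1.hasDerivAt ξ R
    · exact c2.hasDerivAt ξ R
    · exact c3.hasDerivAt ξ R
  · intro j hj ξ R
    interval_cases j
    · exact c1'.hasDerivAt ξ R
    · exact c2'.hasDerivAt ξ R
    · exact c3'.hasDerivAt ξ R

def sw (R : ℝ) : ℝ := Real.sqrt (w R)

lemma sw_pos (R : ℝ) : 0 < sw R := Real.sqrt_pos.2 (w_pos R)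

lemma sw_sq (R : ℝ) : sw R ^ 2 = w R := Real.sq_sqrt (w_pos R).le

lemma sw_mul (R : ℝ) : sw R ^ 2 * (1 + R ^ 2 / 3) = 1 := by rw [sw_sq, w_mul]

lemma sw_deriv (R : ℝ) : HasDerivAt sw (-(1 / 3) * R * sw R ^ 3) R := by
  refine ((w_deriv R).sqrt (w_pos R).ne').congr_deriv ?_
  have h := sw_pos R
  have : √(w R) = sw R := rfl
  rw [this, ← sw_sq]
  field_simp

def f0 (R : ℝ) : ℝ := (R - R ^ 3 / 3) * sw R ^ 3
def g0 (R : ℝ) : ℝ := (1 - 5 * R ^ 2 / 3) * sw R ^ 5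
def t0 (R : ℝ) : ℝ := (1 - 2 * R ^ 2 + R ^ 4 / 9) * sw R ^ 3
def t1 (R : ℝ) : ℝ := (-5 * R + 10 * R ^ 3 / 9 + R ^ 5 / 27) * sw R ^ 5

lemma f0_deriv (R : ℝ) : HasDerivAt f0 (g0 R) R := by
  have h1 : HasDerivAt (fun R : ℝ => R - R ^ 3 / 3) (1 - R ^ 2) R :=
    ((hasDerivAt_id R).sub ((hasDerivAt_pow 3 R).div_const 3)).congr_deriv (by norm_num)
  refine (h1.mul ((sw_deriv R).pow 3)).congr_deriv ?_
  have e := sw_mul R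
  simp only [g0, Pi.pow_apply]
  push_cast
  linear_combination ((1 - R ^ 2) * sw R ^ 3) * (-e)

lemma g0_deriv (R : ℝ) : HasDerivAt g0 (-V R * f0 R) R := by
  have h1 : HasDerivAt (fun R : ℝ => 1 - 5 * R ^ 2 / 3) (-(10 * R / 3)) R :=
    ((((hasDerivAt_pow 2 R).const_mul 5).div_const 3).const_sub 1).congr_deriv (by norm_num; ring)
  refine (h1.mul ((sw_deriv R).pow 5)).congr_deriv ?_
  have e := sw_mul R
  simp only [f0, V, ← sw_sq, Pi.pow_apply]
  push_cast
  linear_combination (-(10 * R / 3) * sw R ^ 5) * (-e)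

lemma t0_deriv (R : ℝ) : HasDerivAt t0 (t1 R) R := by
  have h1 : HasDerivAt (fun R : ℝ => 1 - 2 * R ^ 2 + R ^ 4 / 9) (-4 * R + 4 * R ^ 3 / 9) R :=
    ((((hasDerivAt_pow 2 R).const_mul 2).const_sub 1).add
      ((hasDerivAt_pow 4 R).div_const 9)).congr_deriv (by norm_num; ring)
  refine (h1.mul ((sw_deriv R).pow 3)).congr_deriv ?_
  have e := sw_mul R
  simp only [t1, Pi.pow_apply]
  push_cast
  linear_combination ((-4 * R + 4 * R ^ 3 / 9) * sw R ^ 3) * (-e)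

lemma t1_deriv (R : ℝ) : HasDerivAt t1 (-V R * t0 R) R := by
  have h1 : HasDerivAt (fun R : ℝ => -5 * R + 10 * R ^ 3 / 9 + R ^ 5 / 27)
      (-5 + 10 * R ^ 2 / 3 + 5 * R ^ 4 / 27) R :=
    ((((hasDerivAt_id R).const_mul (-5)).add (((hasDerivAt_pow 3 R).const_mul 10).div_const 9)).add
      ((hasDerivAt_pow 5 R).div_const 27)).congr_deriv (by norm_num; ring)
  refine (h1.mul ((sw_deriv R).pow 5)).congr_deriv ?_
  have e := sw_mul R
  simp only [t0, V, ← sw_sq, Pi.pow_apply]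
  push_cast
  linear_combination ((-5 + 10 * R ^ 2 / 3 + 5 * R ^ 4 / 27) * sw R ^ 5) * (-e)

lemma wron (R : ℝ) : g0 R * t0 R - f0 R * t1 R = 1 := by
  have e := sw_mul R
  have : g0 R * t0 R - f0 R * t1 R = (sw R ^ 2 * (1 + R ^ 2 / 3)) ^ 4 := by
    simp only [g0, t0, f0, t1]; ring
  rw [this, e]; norm_num

lemma sw_le (R : ℝ) : sw R ≤ 1 := by
  have h1 := sw_sq R
  have h2 := w_le_one R
  nlinarith [sw_pos R]

lemma sw_R (R : ℝ) (h : 0 ≤ R) : R * sw R ≤ 2 := by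
  have e := sw_mul R
  have := sw_pos R
  nlinarith [mul_nonneg h this.le, sq_nonneg (sw R)]

lemma bnd_f0 (R : ℝ) (h : 0 ≤ R) : |f0 R| ≤ 5 := by
  have h1 := sw_R R h
  have h2 := sw_le R
  have h3 := sw_pos R
  have h4 : 0 ≤ R * sw R := by positivity
  have e : f0 R = (R * sw R) * sw R ^ 2 - (R * sw R) ^ 3 / 3 := by simp only [f0]; ring
  have e1 : (R * sw R) * sw R ^ 2 ≤ 2 * 1 ^ 2 := by gcongr
  have e2 : (R * sw R) ^ 3 / 3 ≤ 2 ^ 3 / 3 := by gcongr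
  have e3 : 0 ≤ (R * sw R) * sw R ^ 2 := by positivity
  have e4 : 0 ≤ (R * sw R) ^ 3 / 3 := by positivity
  rw [e, abs_le]; constructor <;> linarith

lemma bnd_t0 (R : ℝ) (h : 0 ≤ R) : |t0 R| ≤ 9 * (1 + R) := by
  have h1 := sw_R R h
  have h2 := sw_le R
  have h3 := sw_pos R
  have h4 : 0 ≤ R * sw R := by positivity
  have e : t0 R = sw R ^ 3 - 2 * (R * sw R) ^ 2 * sw R + (R * sw R) ^ 3 * R / 9 := by
    simp only [t0]; ring
  have e1 : sw R ^ 3 ≤ 1 ^ 3 := by gcongr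
  have e2 : 2 * (R * sw R) ^ 2 * sw R ≤ 2 * 2 ^ 2 * 1 := by gcongr
  have e3 : (R * sw R) ^ 3 * R / 9 ≤ 2 ^ 3 * R / 9 := by gcongr
  have e4 : 0 ≤ sw R ^ 3 := by positivity
  have e5 : 0 ≤ 2 * (R * sw R) ^ 2 * sw R := by positivity
  have e6 : 0 ≤ (R * sw R) ^ 3 * R / 9 := by positivity
  rw [e, abs_le]; constructor <;> linarith

lemma bnd_g0 (R : ℝ) (h : 0 ≤ R) : |g0 R| * (1 + R) ≤ 24 := by
  have h1 := sw_R R h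
  have h2 := sw_le R
  have h3 := sw_pos R
  have h4 : 0 ≤ R * sw R := by positivity
  have e : |g0 R| * (1 + R) =
      |sw R ^ 4 - 5 / 3 * (R * sw R) ^ 2 * sw R ^ 2| * (sw R + R * sw R) := by
    have : g0 R = (sw R ^ 4 - 5 / 3 * (R * sw R) ^ 2 * sw R ^ 2) * sw R := by
      simp only [g0]; ring
    rw [this, abs_mul, abs_of_pos h3]; ring
  have e1 : sw R ^ 4 ≤ 1 ^ 4 := by gcongr
  have e2 : 5 / 3 * (R * sw R) ^ 2 * sw R ^ 2 ≤ 5 / 3 * 2 ^ 2 * 1 ^ 2 := by gcongr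
  have e4 : 0 ≤ sw R ^ 4 := by positivity
  have e5 : 0 ≤ 5 / 3 * (R * sw R) ^ 2 * sw R ^ 2 := by positivity
  rw [e]
  have : |sw R ^ 4 - 5 / 3 * (R * sw R) ^ 2 * sw R ^ 2| ≤ 8 := by
    rw [abs_le]; constructor <;> linarith
  calc _ ≤ 8 * ((1 : ℝ) + 2) := by gcongr
    _ = 24 := by norm_num

lemma bnd_t1 (R : ℝ) (h : 0 ≤ R) : |t1 R| ≤ 21 := by
  have h1 := sw_R R h
  have h2 := sw_le R
  have h3 := sw_pos R
  have h4 : 0 ≤ R * sw R := by positivity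
  have e : t1 R = -(5 * (R * sw R) * sw R ^ 4) + 10 / 9 * (R * sw R) ^ 3 * sw R ^ 2
      + (R * sw R) ^ 5 / 27 := by
    simp only [t1]; ring
  have e1 : 5 * (R * sw R) * sw R ^ 4 ≤ 5 * 2 * 1 ^ 4 := by gcongr
  have e2 : 10 / 9 * (R * sw R) ^ 3 * sw R ^ 2 ≤ 10 / 9 * 2 ^ 3 * 1 ^ 2 := by gcongr
  have e3 : (R * sw R) ^ 5 / 27 ≤ 2 ^ 5 / 27 := by gcongr
  have e4 : 0 ≤ 5 * (R * sw R) * sw R ^ 4 := by positivity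
  have e5 : 0 ≤ 10 / 9 * (R * sw R) ^ 3 * sw R ^ 2 := by positivity
  have e6 : 0 ≤ (R * sw R) ^ 5 / 27 := by positivity
  rw [e, abs_le]; constructor <;> linarith

lemma inner : ∃ C : ℝ, 1 ≤ C ∧ ∀ (ξ R1 δ M : ℝ) (u u' f : ℝ → ℝ), 0 ≤ ξ → 1 ≤ R1 →
    ξ * R1 ^ 2 ≤ 1 → Sol ξ u u' f → u 0 = 0 → |u' 0| ≤ δ → 0 ≤ M →
    (∀ R, 0 ≤ R → R ≤ R1 → |f R| ≤ M) →
    (∀ R, 0 ≤ R → R ≤ R1 → |u R| ≤ C * (δ + R1 ^ 2 * M)) ∧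
    |u' R1| * R1 ≤ C * (δ + R1 ^ 2 * M) := by
  refine ⟨45 * Real.exp 414, ?_, ?_⟩
  · have : 1 ≤ Real.exp 414 := Real.one_le_exp (by norm_num)
    linarith
  intro ξ R1 δ M u u' f hξ hR1 hξR hS h0 hδ hM hf
  have hR0 : 0 < R1 := by linarith
  have hδ0 : 0 ≤ δ := (abs_nonneg _).trans hδ
  let a : ℝ → ℝ := fun R => u' R * t0 R - u R * t1 R
  let b : ℝ → ℝ := fun R => u R * g0 R - u' R * f0 R
  have ha : ∀ R, HasDerivAt a (-(ξ * u R + f R) * t0 R) R := fun R =>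
    (((hS.2 R).mul (t0_deriv R)).sub ((hS.1 R).mul (t1_deriv R))).congr_deriv (by ring)
  have hb : ∀ R, HasDerivAt b ((ξ * u R + f R) * f0 R) R := fun R =>
    (((hS.1 R).mul (g0_deriv R)).sub ((hS.2 R).mul (f0_deriv R))).congr_deriv (by ring)
  have hu : ∀ R, u R = a R * f0 R + b R * t0 R := fun R => by
    have := wron R
    simp only [a, b]
    linear_combination (-u R) * this
  have hu' : ∀ R, u' R = a R * g0 R + b R * t1 R := fun R => by
    have := wron R
    simp only [a, b]
    linear_combination (-u' R) * this
  have nb : ∀ R, |b R| * R1 ≤ ‖(a R, R1 * b R)‖ := fun R => by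
    have : ‖R1 * b R‖ ≤ ‖(a R, R1 * b R)‖ := le_max_right _ _
    rwa [Real.norm_eq_abs, abs_mul, abs_of_pos hR0, mul_comm] at this
  have na : ∀ R, |a R| ≤ ‖(a R, R1 * b R)‖ := fun R => le_max_left _ _
  have nu : ∀ R, 0 ≤ R → R ≤ R1 → |u R| ≤ 23 * ‖(a R, R1 * b R)‖ := fun R h1 h2 => by
    have e1 := bnd_f0 R h1
    have e2 := bnd_t0 R h1
    rw [hu R]
    refine (abs_add_le _ _).trans ?_
    rw [abs_mul, abs_mul]
    have e3 : |a R| * |f0 R| ≤ ‖(a R, R1 * b R)‖ * 5 := by gcongr; exact na R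
    have e4 : |b R| * |t0 R| ≤ |b R| * (18 * R1) := by
      gcongr; linarith
    linarith [nb R]
  have key : ∀ R, 0 ≤ R → R ≤ R1 → ‖(a R, R1 * b R)‖ ≤ Real.exp 414 * (δ + R1 ^ 2 * M) := by
    intro R hR hRR
    have g := norm_le_gronwallBound_of_norm_deriv_right_le (E := ℝ × ℝ)
      (f := fun R => (a R, R1 * b R))
      (f' := fun R => (-(ξ * u R + f R) * t0 R, R1 * ((ξ * u R + f R) * f0 R)))
      (δ := δ) (K := 414 / R1) (ε := 18 * R1 * M) (a := 0) (b := R1) ?_ ?_ ?_ ?_ R ⟨hR, hRR⟩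
    · rw [gronwallBound_of_K_ne_0 (by positivity)] at g
      refine g.trans ?_
      have e : Real.exp (414 / R1 * (R - 0)) ≤ Real.exp 414 := by
        apply Real.exp_le_exp.2
        rw [sub_zero, div_mul_eq_mul_div, div_le_iff₀ hR0]; linarith
      have e1 : 18 * R1 * M / (414 / R1) = R1 ^ 2 * M * (18 / 414) := by field_simp
      have e2 : δ * Real.exp (414 / R1 * (R - 0)) ≤ δ * Real.exp 414 := by gcongr
      have e3 : R1 ^ 2 * M * (18 / 414) * (Real.exp (414 / R1 * (R - 0)) - 1) ≤
          R1 ^ 2 * M * 1 * (Real.exp 414) := by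
        have : (0 : ℝ) < Real.exp 414 := Real.exp_pos _
        have h1 : 1 ≤ Real.exp (414 / R1 * (R - 0)) := Real.one_le_exp (by rw [sub_zero]; positivity)
        have h2 : 0 ≤ R1 ^ 2 * M := by positivity
        apply mul_le_mul
        · nlinarith
        · linarith
        · linarith
        · linarith
      simp only
      rw [e1]
      linarith
    · exact fun x _ =>
        ((ha x).continuousAt.prodMk ((hb x).continuousAt.const_mul R1)).continuousWithinAt
    · exact fun x _ => ((ha x).prodMk ((hb x).const_mul R1)).hasDerivWithinAt
    · have a0 : a 0 = u' 0 := by simp [a, t0, t1, h0, sw, w]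
      have b0 : b 0 = 0 := by simp [b, f0, h0]
      rw [a0, b0, Prod.norm_mk, max_le_iff]
      simp [hδ, hδ0]
    · intro x hx
      have e0 := nu x hx.1 hx.2.le
      have n0 : 0 ≤ ‖(a x, R1 * b x)‖ := norm_nonneg _
      have e1 : |ξ * u x + f x| ≤ ξ * (23 * ‖(a x, R1 * b x)‖) + M := by
        refine (abs_add_le _ _).trans ?_
        rw [abs_mul, abs_of_nonneg hξ]
        have := hf x hx.1 hx.2.le
        gcongr
      have e2 : 18 * R1 * (ξ * (23 * ‖(a x, R1 * b x)‖) + M) ≤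
          414 / R1 * ‖(a x, R1 * b x)‖ + 18 * R1 * M := by
        have : ξ * R1 ≤ 1 / R1 := by
          rw [le_div_iff₀ hR0]; nlinarith
        have : 414 * (ξ * R1) * ‖(a x, R1 * b x)‖ ≤ 414 * (1 / R1) * ‖(a x, R1 * b x)‖ := by
          gcongr
        have e : 414 * (1 / R1) = 414 / R1 := by ring
        rw [e] at this
        linarith
      refine le_trans ?_ e2
      have f1 := bnd_t0 x hx.1
      have f2 := bnd_f0 x hx.1
      have hnn : 0 ≤ ξ * (23 * ‖(a x, R1 * b x)‖) + M := by positivity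
      rw [Prod.norm_mk (-(ξ * u x + f x) * t0 x), max_le_iff]
      constructor
      · rw [Real.norm_eq_abs, abs_mul, abs_neg]
        calc _ ≤ (ξ * (23 * ‖(a x, R1 * b x)‖) + M) * (18 * R1) := by
              gcongr; linarith [hx.2]
          _ = _ := by ring
      · rw [Real.norm_eq_abs, abs_mul, abs_mul, abs_of_pos hR0]
        calc _ ≤ R1 * ((ξ * (23 * ‖(a x, R1 * b x)‖) + M) * 18) := by
              gcongr; linarith
          _ = _ := by ring
  refine ⟨fun R h1 h2 => ?_, ?_⟩
  · have := nu R h1 h2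
    have := key R h1 h2
    linarith [norm_nonneg (a R, R1 * b R)]
  · have k := key R1 hR0.le le_rfl
    have e1 := bnd_g0 R1 hR0.le
    have e2 := bnd_t1 R1 hR0.le
    have n0 : 0 ≤ ‖(a R1, R1 * b R1)‖ := norm_nonneg _
    rw [hu' R1]
    have : |a R1 * g0 R1 + b R1 * t1 R1| ≤ |a R1| * |g0 R1| + |b R1| * |t1 R1| := by
      rw [← abs_mul, ← abs_mul]; exact abs_add_le _ _
    calc _ ≤ (|a R1| * |g0 R1| + |b R1| * |t1 R1|) * R1 := by gcongr
      _ = |a R1| * (|g0 R1| * R1) + (|b R1| * R1) * |t1 R1| := by ring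
      _ ≤ ‖(a R1, R1 * b R1)‖ * 24 + ‖(a R1, R1 * b R1)‖ * 21 := by
          have : |g0 R1| * R1 ≤ 24 := by linarith [abs_nonneg (g0 R1)]
          gcongr
          · exact na R1
          · exact nb R1
      _ ≤ _ := by linarith

lemma outer : ∃ C : ℝ, 1 ≤ C ∧ ∀ (k R0 R1 M : ℝ) (u u' f : ℝ → ℝ), 0 < k → 0 ≤ R0 → R0 ≤ R1 →
    0 < R1 → (1 ≤ k ∨ 1 ≤ k * R0) → Sol (k ^ 2) u u' f → 0 ≤ M →
    (∀ R, R0 ≤ R → R ≤ R1 → |f R| ≤ M) →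
    u' R1 ^ 2 + (k * u R1) ^ 2 ≤ C * (u' R0 ^ 2 + (k * u R0) ^ 2 + (R1 * M) ^ 2) := by
  let A : ℝ → ℝ := fun R => 5 * Real.sqrt 3 * Real.arctan (R / Real.sqrt 3)
  have s3 : 0 < Real.sqrt 3 := by positivity
  have hA : ∀ R, HasDerivAt A (5 * w R) R := fun R => by
    have h1 : HasDerivAt (fun R : ℝ => R / Real.sqrt 3) (1 / Real.sqrt 3) R :=
      (hasDerivAt_id R).div_const _
    refine (h1.arctan.const_mul (5 * Real.sqrt 3)).congr_deriv ?_
    rw [div_pow, Real.sq_sqrt (by norm_num)]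
    unfold w
    field_simp
  have hA0 : ∀ R, 0 ≤ R → 0 ≤ A R := fun R hR => by
    have : 0 ≤ Real.arctan (R / Real.sqrt 3) := by
      rw [← Real.arctan_zero]; exact Real.arctan_strictMono.monotone (by positivity)
    positivity
  have hA1 : ∀ R, A R ≤ 5 * Real.sqrt 3 * (Real.pi / 2) := fun R => by
    have := (Real.arctan_lt_pi_div_two (R / Real.sqrt 3)).le
    simp only [A]; gcongr
  refine ⟨Real.exp (5 * Real.sqrt 3 * (Real.pi / 2) + 1), Real.one_le_exp (by positivity), ?_⟩
  intro k R0 R1 M u u' f hk hR0 hR01 hR1 hkk hS hM hf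
  let E : ℝ → ℝ := fun R => u' R ^ 2 + (k * u R) ^ 2
  have hE : ∀ R, HasDerivAt E (2 * u' R * (-V R * u R - f R)) R := fun R =>
    (((hS.2 R).pow 2).add (((hS.1 R).const_mul k).pow 2)).congr_deriv (by push_cast; ring)
  have hVk : ∀ R, R0 ≤ R → V R ≤ 5 * k * w R := fun R hR => by
    have h1 := w_pos R
    have h2 := w_le_one R
    unfold V
    have hR' : 0 ≤ R := by linarith
    have : w R ≤ k := by
      rcases hkk with h | h
      · linarith
      · have h3 : 1 ≤ k * R := h.trans (by gcongr)
        have h4 : w R * R ≤ 1 := by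
          have := w_mul R
          nlinarith [sq_nonneg (R - 3 / 2)]
        by_contra hc
        push Not at hc
        nlinarith
    nlinarith
  have hE1 : ∀ R, R0 ≤ R → R ≤ R1 →
      2 * u' R * (-V R * u R - f R) ≤ (5 * w R + 1 / R1) * E R + R1 * M ^ 2 := fun R h1 h2 => by
    have e1 : |2 * u' R * (V R * u R)| ≤ 5 * w R * E R := by
      have : |2 * u' R * (V R * u R)| = V R * (2 * |u' R| * |u R|) := by
        rw [abs_mul, abs_mul, abs_mul, abs_two, abs_of_nonneg (V_nonneg R)]; ring
      rw [this]
      calc _ ≤ 5 * k * w R * (2 * |u' R| * |u R|) := by gcongr; exact hVk R h1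
        _ = 5 * w R * (2 * |u' R| * (k * |u R|)) := by ring
        _ ≤ 5 * w R * E R := by
          have := w_pos R
          gcongr
          have := two_mul_le_add_sq (|u' R|) (k * |u R|)
          rw [mul_pow k (|u R|), sq_abs, sq_abs, ← mul_pow] at this
          exact this
    have e2 : |2 * u' R * f R| ≤ 1 / R1 * E R + R1 * M ^ 2 := by
      have h3 : |2 * u' R * f R| = 2 * |u' R| * |f R| := by rw [abs_mul, abs_mul, abs_two]
      have h4 := hf R h1 h2
      have h5 : 2 * |u' R| * |f R| ≤ 2 * |u' R| * M := by gcongr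
      have h6 : 2 * |u' R| * M ≤ 1 / R1 * u' R ^ 2 + R1 * M ^ 2 := by
        have : 0 ≤ (|u' R| - R1 * M) ^ 2 / R1 := by positivity
        have h7 : (|u' R| - R1 * M) ^ 2 / R1 = 1 / R1 * u' R ^ 2 + R1 * M ^ 2 - 2 * |u' R| * M := by
          rw [← sq_abs (u' R)]; field_simp; ring
        linarith
      have h8 : 1 / R1 * u' R ^ 2 ≤ 1 / R1 * E R := by
        gcongr; simp only [E]; linarith [sq_nonneg (k * u R)]
      linarith
    have a1 := neg_le_of_abs_le e1
    have a2 := neg_le_of_abs_le e2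
    linarith
  let hh : ℝ → ℝ := fun R => E R * Real.exp (-(A R + R / R1)) - R1 * M ^ 2 * R
  have hhd : ∀ R, HasDerivAt hh (2 * u' R * (-V R * u R - f R) * Real.exp (-(A R + R / R1)) +
      E R * (Real.exp (-(A R + R / R1)) * (-(5 * w R + 1 / R1))) - R1 * M ^ 2) R := fun R => by
    have h1 : HasDerivAt (fun R => -(A R + R / R1)) (-(5 * w R + 1 / R1)) R :=
      ((hA R).add ((hasDerivAt_id R).div_const R1)).neg
    exact (((hE R).mul h1.exp).sub ((hasDerivAt_id R).const_mul (R1 * M ^ 2))).congr_deriv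
      (by simp)
  have anti : AntitoneOn hh (Set.Icc R0 R1) := by
    apply antitoneOn_of_deriv_nonpos (convex_Icc _ _)
    · exact fun x _ => (hhd x).continuousAt.continuousWithinAt
    · exact fun x _ => (hhd x).differentiableAt.differentiableWithinAt
    · intro x hx
      rw [interior_Icc] at hx
      rw [(hhd x).deriv]
      have e1 := hE1 x hx.1.le hx.2.le
      have e2 : Real.exp (-(A x + x / R1)) ≤ 1 := by
        rw [Real.exp_le_one_iff]
        have := hA0 x (by linarith [hx.1])
        have : 0 ≤ x / R1 := by have := hx.1; have : 0 ≤ x := by linarith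
                                positivity
        linarith
      have e3 := Real.exp_pos (-(A x + x / R1))
      have e4 : 0 ≤ R1 * M ^ 2 := by positivity
      nlinarith
  have fin := anti ⟨le_rfl, hR01⟩ ⟨hR01, le_rfl⟩ hR01
  simp only [hh] at fin
  have e0 : Real.exp (-(A R0 + R0 / R1)) ≤ 1 := by
    rw [Real.exp_le_one_iff]
    have := hA0 R0 hR0
    have : 0 ≤ R0 / R1 := by positivity
    linarith
  have hEn : ∀ R, 0 ≤ E R := fun R => by simp only [E]; positivity
  have e1 : E R1 * Real.exp (-(A R1 + 1)) ≤ E R0 + (R1 * M) ^ 2 := by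
    rw [div_self hR1.ne'] at fin
    have := mul_le_mul_of_nonneg_left e0 (hEn R0)
    have : 0 ≤ R1 * M ^ 2 * R0 := by positivity
    nlinarith
  have e2 : E R1 = Real.exp (A R1 + 1) * (E R1 * Real.exp (-(A R1 + 1))) := by
    rw [Real.exp_neg]; have := Real.exp_pos (A R1 + 1); field_simp
  show E R1 ≤ _ * (E R0 + (R1 * M) ^ 2)
  rw [e2]
  have : 0 ≤ E R1 * Real.exp (-(A R1 + 1)) := mul_nonneg (hEn _) (Real.exp_pos _).le
  gcongr
  exact hA1 R1

lemma sq_add_sq_le_aux {a b : ℝ} {C : ℝ} (ha : 0 ≤ a) (hb : 0 ≤ b) (hC : 1 ≤ C) {x : ℝ}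
    (h : x ^ 2 ≤ C * (a ^ 2 + b ^ 2)) : |x| ≤ C * (a + b) := by
  apply abs_le_of_sq_le_sq
  · nlinarith [mul_nonneg ha hb, sq_nonneg (a + b), mul_nonneg (sub_nonneg.2 hC) (sq_nonneg (a+b))]
  · positivity

lemma genb : ∃ C : ℝ, 1 ≤ C ∧ ∀ (k R δ M : ℝ) (u u' f : ℝ → ℝ), 0 ≤ k → 0 ≤ R →
    Sol (k ^ 2) u u' f → u 0 = 0 → |u' 0| ≤ δ → 0 ≤ M →
    (∀ x, 0 ≤ x → x ≤ 1 + R → |f x| ≤ M) →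
    |u R| * Real.sqrt (1 + k ^ 2) ≤ C * (δ + (1 + R) ^ 2 * M) ∧
    |u R| * k ≤ C * (k * δ + (1 + R) * M) := by
  obtain ⟨Ci, hCi, Hi⟩ := inner
  obtain ⟨Co, hCo, Ho⟩ := outer
  -- low energies
  have low : ∀ (k R δ M : ℝ) (u u' f : ℝ → ℝ), 0 ≤ k → k ≤ 1 → 0 ≤ R →
    Sol (k ^ 2) u u' f → u 0 = 0 → |u' 0| ≤ δ → 0 ≤ M →
    (∀ x, 0 ≤ x → x ≤ 1 + R → |f x| ≤ M) →
    |u R| ≤ 2 * Co * Ci ^ 2 * 2 * (δ + (1 + R) ^ 2 * M) ∧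
    |u R| * k ≤ 2 * Co * Ci ^ 2 * 2 * (k * δ + (1 + R) * M) := by
    intro k R δ M u u' f hk hk1 hR hS h0 hδ hM hf
    have hδ0 : 0 ≤ δ := (abs_nonneg _).trans hδ
    have hCC : Ci ≤ 2 * Co * Ci ^ 2 * 2 := by nlinarith [mul_le_mul hCo hCi (by norm_num) (by linarith)]
    rcases le_or_gt (k * max R 1) 1 with h | h
    · have h1 : 1 ≤ max R 1 := le_max_right _ _
      have h2 : max R 1 ≤ 1 + R := max_le (by linarith) (by linarith)
      have := (Hi (k ^ 2) (max R 1) δ M u u' f (by positivity) h1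
        (by rw [← mul_pow]; exact pow_le_one₀ (by positivity) h) hS h0 hδ hM
        (fun x a b => hf x a (b.trans h2))).1 R hR (le_max_left _ _)
      have e1 : Ci * (δ + max R 1 ^ 2 * M) ≤ 2 * Co * Ci ^ 2 * 2 * (δ + max R 1 ^ 2 * M) := by
        gcongr
      constructor
      · refine this.trans (e1.trans ?_)
        gcongr
      · calc |u R| * k ≤ (2 * Co * Ci ^ 2 * 2 * (δ + max R 1 ^ 2 * M)) * k := by
              gcongr; exact this.trans e1
          _ = 2 * Co * Ci ^ 2 * 2 * (k * δ + max R 1 * ((k * max R 1) * M)) := by ring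
          _ ≤ 2 * Co * Ci ^ 2 * 2 * (k * δ + (1 + R) * (1 * M)) := by gcongr
          _ = _ := by ring
    · have hR1 : 1 < R := by
        by_contra hc
        rw [max_eq_right (not_lt.1 hc)] at h; linarith
      rw [max_eq_left hR1.le] at h
      have hk0 : 0 < k := by
        rcases hk.eq_or_lt with h' | h'
        · rw [← h'] at h; linarith
        · exact h'
      have hr : 1 ≤ 1 / k := by rw [le_div_iff₀ hk0]; linarith
      have hr2 : 1 / k ≤ R := by rw [div_le_iff₀ hk0]; linarith
      have I := Hi (k ^ 2) (1 / k) δ M u u' f (by positivity) hr (by field_simp; rfl) hS h0 hδ hM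
        (fun x a b => hf x a (by linarith))
      have I1 := I.1 (1 / k) (by positivity) le_rfl
      have I2 := I.2
      have O := Ho k (1 / k) R M u u' f hk0 (by positivity) hr2 (by linarith)
        (Or.inr (by field_simp; rfl)) hS hM (fun x a b => hf x ((by positivity : 0 ≤ 1 / k).trans a) (by linarith))
      have X0 : 0 ≤ k * δ + R * M := by positivity
      have x1 : k * (Ci * (δ + (1 / k) ^ 2 * M)) ≤ Ci * (k * δ + R * M) := by
        have : k * (Ci * (δ + (1 / k) ^ 2 * M)) = Ci * (k * δ + 1 / k * M) := by field_simp
        rw [this]; gcongr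
      have x2 : |k * u (1 / k)| ≤ Ci * (k * δ + R * M) := by
        rw [abs_mul, abs_of_pos hk0]
        exact le_trans (by gcongr) x1
      have x3 : |u' (1 / k)| ≤ Ci * (k * δ + R * M) := by
        refine le_trans ?_ x1
        have : |u' (1 / k)| = k * (|u' (1 / k)| * (1 / k)) := by field_simp
        rw [this]; gcongr
      have x4 := sq_le_sq' (neg_le_of_abs_le x2) (le_of_abs_le x2)
      have x5 := sq_le_sq' (neg_le_of_abs_le x3) (le_of_abs_le x3)
      have x6 : R * M ≤ Ci * (k * δ + R * M) := by
        have : 0 ≤ R * M := by positivity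
        have : 0 ≤ k * δ := by positivity
        nlinarith
      have x7 : (R * M) ^ 2 ≤ (Ci * (k * δ + R * M)) ^ 2 := by gcongr
      have x8 : |k * u R| ≤ 2 * Co * Ci ^ 2 * (k * δ + R * M) := by
        apply abs_le_of_sq_le_sq _ (by positivity)
        calc (k * u R) ^ 2 ≤ u' R ^ 2 + (k * u R) ^ 2 := by linarith [sq_nonneg (u' R)]
          _ ≤ _ := O
          _ ≤ Co * ((Ci * (k * δ + R * M)) ^ 2 + (Ci * (k * δ + R * M)) ^ 2
              + (Ci * (k * δ + R * M)) ^ 2) := by gcongr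
          _ = Co * 1 * 3 * 1 * (Ci * (k * δ + R * M)) ^ 2 := by ring
          _ ≤ Co * Co * 4 * (Ci ^ 2) * (Ci * (k * δ + R * M)) ^ 2 := by
              have : 1 ≤ Ci ^ 2 := one_le_pow₀ hCi
              gcongr
              norm_num
          _ = _ := by ring
      rw [abs_mul, abs_of_pos hk0] at x8
      constructor
      · have : |u R| = 1 / k * (k * |u R|) := by field_simp
        rw [this]
        calc _ ≤ 1 / k * (2 * Co * Ci ^ 2 * (k * δ + R * M)) := by gcongr
          _ = 2 * Co * Ci ^ 2 * (δ + (1 / k) * R * M) := by field_simp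
          _ ≤ 2 * Co * Ci ^ 2 * 2 * (δ + (1 + R) ^ 2 * M) := by
            have : (1 / k) * R * M ≤ (1 + R) ^ 2 * M := by
              gcongr
              nlinarith
            have h5 : 2 * Co * Ci ^ 2 ≤ 2 * Co * Ci ^ 2 * 2 := by
              have : 0 ≤ 2 * Co * Ci ^ 2 := by positivity
              linarith
            gcongr
      · calc |u R| * k = k * |u R| := by ring
          _ ≤ _ := x8
          _ ≤ _ := by
            have h5 : 2 * Co * Ci ^ 2 ≤ 2 * Co * Ci ^ 2 * 2 := by
              have : 0 ≤ 2 * Co * Ci ^ 2 := by positivity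
              linarith
            gcongr
            linarith
  have hC1 : 1 ≤ Co * Ci ^ 2 := by
    have := mul_le_mul hCo (one_le_pow₀ hCi (n := 2)) (by norm_num) (by linarith)
    linarith
  refine ⟨8 * (Co * Ci ^ 2), by linarith, ?_⟩
  intro k R δ M u u' f hk hR hS h0 hδ hM hf
  have hδ0 : 0 ≤ δ := (abs_nonneg _).trans hδ
  have hP : 0 ≤ Co * Ci ^ 2 := by linarith
  rcases le_or_gt k 1 with h1 | h1
  · have l := low k R δ M u u' f hk h1 hR hS h0 hδ hM hf
    have s : Real.sqrt (1 + k ^ 2) ≤ 2 := by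
      rw [Real.sqrt_le_left (by norm_num)]; nlinarith
    constructor
    · calc _ ≤ (2 * Co * Ci ^ 2 * 2 * (δ + (1 + R) ^ 2 * M)) * 2 := by
            gcongr; exact l.1
        _ = _ := by ring
    · refine l.2.trans ?_
      have : 0 ≤ Co * Ci ^ 2 * (k * δ + (1 + R) * M) := by positivity
      linarith
  · have hk0 : 0 < k := by linarith
    have b : |k * u R| ≤ Co * (δ + R * M) := by
      rcases hR.eq_or_lt with h | h
      · rw [← h, h0]; simp; positivity
      · have O := Ho k 0 R M u u' f hk0 le_rfl hR h (Or.inl h1.le) hS hM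
          (fun x a b => hf x a (by linarith))
        apply sq_add_sq_le_aux hδ0 (by positivity) hCo
        rw [h0] at O
        have : u' 0 ^ 2 ≤ δ ^ 2 := sq_le_sq' (neg_le_of_abs_le hδ) (le_of_abs_le hδ)
        calc (k * u R) ^ 2 ≤ u' R ^ 2 + (k * u R) ^ 2 := by linarith [sq_nonneg (u' R)]
          _ ≤ _ := O
          _ ≤ _ := by gcongr; linarith
    rw [abs_mul, abs_of_pos hk0] at b
    have c1 : Co ≤ Co * Ci ^ 2 := by nlinarith [one_le_pow₀ hCi (n := 2)]
    constructor
    · have s : Real.sqrt (1 + k ^ 2) ≤ 2 * k := by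
        rw [Real.sqrt_le_left (by positivity)]; nlinarith
      calc _ ≤ |u R| * (2 * k) := by gcongr
        _ = 2 * (k * |u R|) := by ring
        _ ≤ 2 * (Co * (δ + R * M)) := by gcongr
        _ ≤ 8 * ((Co * Ci ^ 2) * (δ + (1 + R) ^ 2 * M)) := by
          gcongr
          · norm_num
          · nlinarith
        _ = _ := by ring
    · calc |u R| * k = k * |u R| := by ring
        _ ≤ 1 * (Co * (1 * δ + R * M)) := by linarith
        _ ≤ 8 * ((Co * Ci ^ 2) * (k * δ + (1 + R) * M)) := by
          gcongr
          · norm_num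
          · linarith
        _ = _ := by ring

structure Bd (p q : ℕ → ℝ → ℝ → ℝ) (C : ℝ) : Prop where
  one_le : 1 ≤ C
  crude : ∀ j, j ≤ 2 → ∀ ξ R, 0 ≤ ξ → 0 ≤ R →
    |p j ξ R| * Real.sqrt (1 + ξ) ^ (j + 1) ≤ C * (1 + R) ^ (2 * j)
  fine : ∀ j, j ≤ 2 → ∀ ξ R, 0 ≤ ξ → 0 ≤ R →
    |p j ξ R| * Real.sqrt ξ ^ j * Real.sqrt (1 + ξ) ≤ C * (1 + R) ^ j
  qb : ∀ j, j ≤ 2 → ∀ ξ R, 0 ≤ ξ → 1 ≤ R → ξ * R ^ 2 ≤ 1 → |q j ξ R| * R ≤ C * R ^ (2 * j)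

lemma Data.bd {p q : ℕ → ℝ → ℝ → ℝ} (d : Data p q) : ∃ C, Bd p q C := by
  obtain ⟨C, hC, H⟩ := genb
  obtain ⟨Ci, hCi, Hi⟩ := inner
  have hC0 : 0 ≤ C := by linarith
  have kap : ∀ ξ : ℝ, 0 ≤ ξ → 1 ≤ Real.sqrt (1 + ξ) := fun ξ h => by
    rw [Real.one_le_sqrt]; linarith
  have s0 : ∀ ξ, 0 ≤ ξ → Sol (Real.sqrt ξ ^ 2) (p 0 ξ) (q 0 ξ) (fun _ => 0) := fun ξ h => by
    rw [Real.sq_sqrt h]; exact d.s0 ξ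
  have s1 : ∀ ξ, 0 ≤ ξ → Sol (Real.sqrt ξ ^ 2) (p 1 ξ) (q 1 ξ) (p 0 ξ) := fun ξ h => by
    rw [Real.sq_sqrt h]; exact d.s1 ξ
  have s2 : ∀ ξ, 0 ≤ ξ → Sol (Real.sqrt ξ ^ 2) (p 2 ξ) (q 2 ξ) (fun R => 2 * p 1 ξ R) := fun ξ h => by
    rw [Real.sq_sqrt h]; exact d.s2 ξ
  have P0 : ∀ ξ R, 0 ≤ ξ → 0 ≤ R → |p 0 ξ R| * Real.sqrt (1 + ξ) ≤ C := by
    intro ξ R h hR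
    have := (H (Real.sqrt ξ) R 1 0 _ _ _ (Real.sqrt_nonneg _) hR (s0 ξ h) (d.i0 ξ)
      (by rw [d.i0']; simp) le_rfl (by simp)).1
    rw [Real.sq_sqrt h] at this
    linarith
  have P0' : ∀ ξ R, 0 ≤ ξ → 0 ≤ R → |p 0 ξ R| ≤ C / Real.sqrt (1 + ξ) := by
    intro ξ R h hR
    rw [le_div_iff₀ (by linarith [kap ξ h])]; exact P0 ξ R h hR
  have P1 : ∀ ξ R, 0 ≤ ξ → 0 ≤ R → |p 1 ξ R| * Real.sqrt (1 + ξ) ≤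
        C * ((1 + R) ^ 2 * (C / Real.sqrt (1 + ξ))) ∧
      |p 1 ξ R| * Real.sqrt ξ ≤ C * ((1 + R) * (C / Real.sqrt (1 + ξ))) := by
    intro ξ R h hR
    have := (H (Real.sqrt ξ) R 0 (C / Real.sqrt (1 + ξ)) _ _ _ (Real.sqrt_nonneg _) hR (s1 ξ h)
      (d.i1 ξ) (by rw [d.i1']; simp) (by positivity) (fun x a b => P0' ξ x h a))
    rw [Real.sq_sqrt h] at this
    simpa using this
  have P1c : ∀ ξ R, 0 ≤ ξ → 0 ≤ R → |p 1 ξ R| ≤ C ^ 2 * (1 + R) ^ 2 / Real.sqrt (1 + ξ) ^ 2 := by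
    intro ξ R h hR
    have k := kap ξ h
    rw [le_div_iff₀ (by positivity)]
    have := (P1 ξ R h hR).1
    calc _ = (|p 1 ξ R| * Real.sqrt (1 + ξ)) * Real.sqrt (1 + ξ) := by ring
      _ ≤ (C * ((1 + R) ^ 2 * (C / Real.sqrt (1 + ξ)))) * Real.sqrt (1 + ξ) := by gcongr
      _ = _ := by field_simp
  have P1f : ∀ ξ R, 0 ≤ ξ → 0 ≤ R →
      |p 1 ξ R| * Real.sqrt ξ * Real.sqrt (1 + ξ) ≤ C ^ 2 * (1 + R) := by
    intro ξ R h hR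
    have k := kap ξ h
    calc _ ≤ (C * ((1 + R) * (C / Real.sqrt (1 + ξ)))) * Real.sqrt (1 + ξ) := by
          exact mul_le_mul_of_nonneg_right (P1 ξ R h hR).2 (by positivity)
      _ = _ := by field_simp
  have P2c : ∀ ξ R, 0 ≤ ξ → 0 ≤ R → |p 2 ξ R| * Real.sqrt (1 + ξ) ^ 3 ≤
      8 * C ^ 3 * (1 + R) ^ 4 := by
    intro ξ R h hR
    have k := kap ξ h
    have := (H (Real.sqrt ξ) R 0 (2 * (C ^ 2 * (2 * (1 + R)) ^ 2 / Real.sqrt (1 + ξ) ^ 2)) _ _ _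
      (Real.sqrt_nonneg _) hR (s2 ξ h)
      (d.i2 ξ) (by rw [d.i2']; simp) (by positivity) (fun x a b => by
        rw [abs_mul, abs_two]
        refine mul_le_mul_of_nonneg_left ((P1c ξ x h a).trans ?_) (by norm_num)
        gcongr; linarith)).1
    rw [Real.sq_sqrt h] at this
    calc _ = (|p 2 ξ R| * Real.sqrt (1 + ξ)) * Real.sqrt (1 + ξ) ^ 2 := by ring
      _ ≤ _ := mul_le_mul_of_nonneg_right this (by positivity)
      _ = _ := by field_simp; ring
  have P2f : ∀ ξ R, 0 ≤ ξ → 0 ≤ R → |p 2 ξ R| * Real.sqrt ξ ^ 2 * Real.sqrt (1 + ξ) ≤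
      8 * C ^ 3 * (1 + R) ^ 2 := by
    intro ξ R h hR
    have k := kap ξ h
    rcases h.eq_or_lt with h' | h'
    · rw [← h']; simp; positivity
    have hs : 0 < Real.sqrt ξ := Real.sqrt_pos.2 h'
    have := (H (Real.sqrt ξ) R 0 (2 * (C ^ 2 * (2 * (1 + R)) / (Real.sqrt ξ * Real.sqrt (1 + ξ)))) _ _ _
      (Real.sqrt_nonneg _) hR (s2 ξ h)
      (d.i2 ξ) (by rw [d.i2']; simp) (by positivity) (fun x a b => by
        rw [abs_mul, abs_two]
        refine mul_le_mul_of_nonneg_left ?_ (by norm_num)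
        rw [le_div_iff₀ (by positivity), ← mul_assoc]
        refine (P1f ξ x h a).trans ?_
        gcongr; linarith)).2
    calc _ = (|p 2 ξ R| * Real.sqrt ξ) * (Real.sqrt ξ * Real.sqrt (1 + ξ)) := by ring
      _ ≤ _ := mul_le_mul_of_nonneg_right this (by positivity)
      _ = 4 * C ^ 3 * (1 + R) ^ 2 := by field_simp; ring
      _ ≤ _ := by gcongr; norm_num
  have low : ∀ ξ R, 0 ≤ ξ → 0 ≤ R → |p 0 ξ R| ≤ C ∧ |p 1 ξ R| ≤ C ^ 2 * (1 + R) ^ 2 := by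
    intro ξ R h hR
    have k := kap ξ h
    refine ⟨(P0' ξ R h hR).trans (div_le_self hC0 k), (P1c ξ R h hR).trans
      (div_le_self (by positivity) (one_le_pow₀ k))⟩
  have c1 : C ≤ C ^ 3 := le_self_pow₀ hC (by norm_num)
  have c2 : C ^ 2 ≤ C ^ 3 := pow_le_pow_right₀ hC (by norm_num)
  have cp : 0 ≤ C ^ 3 := by positivity
  refine ⟨8 * C ^ 3 * Ci, ?_, ?_, ?_, ?_⟩
  · nlinarith [one_le_pow₀ hC (n := 3)]
  · intro j hj ξ R h hR
    have hh : 8 * C ^ 3 * 1 ≤ 8 * C ^ 3 * Ci := by gcongr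
    interval_cases j
    · simp only [zero_add, pow_one, mul_zero, pow_zero]
      linarith [P0 ξ R h hR]
    · have := P1c ξ R h hR
      rw [le_div_iff₀ (by have := kap ξ h; positivity)] at this
      refine this.trans ?_
      simp only [mul_one]
      gcongr
      linarith
    · refine (P2c ξ R h hR).trans ?_
      exact mul_le_mul_of_nonneg_right (by linarith) (by positivity)
  · intro j hj ξ R h hR
    have hh : 8 * C ^ 3 * 1 ≤ 8 * C ^ 3 * Ci := by gcongr
    interval_cases j
    · simp only [pow_zero, mul_one]
      linarith [P0 ξ R h hR]
    · simp only [pow_one]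
      refine (P1f ξ R h hR).trans ?_
      gcongr
      linarith
    · refine (P2f ξ R h hR).trans ?_
      exact mul_le_mul_of_nonneg_right (by linarith) (by positivity)
  · intro j hj ξ R h hR hξR
    have hR0 : 0 ≤ R := by linarith
    interval_cases j
    · have := (Hi ξ R 1 0 _ _ _ h hR hξR (d.s0 ξ) (d.i0 ξ) (by rw [d.i0']; simp) le_rfl (by simp)).2
      simp only [mul_zero, add_zero, mul_one, pow_zero] at this ⊢
      nlinarith [one_le_pow₀ hC (n := 3)]
    · have := (Hi ξ R 0 C _ _ _ h hR hξR (d.s1 ξ) (d.i1 ξ) (by rw [d.i1']; simp) hC0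
        (fun x a b => (low ξ x h a).1)).2
      refine this.trans ?_
      rw [zero_add, mul_one, show Ci * (R ^ 2 * C) = C * Ci * R ^ 2 by ring]
      gcongr
      linarith
    · have := (Hi ξ R 0 (2 * (C ^ 2 * (2 * R) ^ 2)) _ _ _ h hR hξR (d.s2 ξ) (d.i2 ξ)
        (by rw [d.i2']; simp) (by positivity)
        (fun x a b => by
          rw [abs_mul, abs_two]
          refine mul_le_mul_of_nonneg_left ((low ξ x h a).2.trans ?_) (by norm_num)
          gcongr; linarith)).2
      refine this.trans ?_
      rw [zero_add, show Ci * (R ^ 2 * (2 * (C ^ 2 * (2 * R) ^ 2))) = 8 * C ^ 2 * Ci * R ^ 4 by ring]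
      gcongr

/-- boundedness near infinity for a fixed energy -/
lemma Data.q0_bdd {p q : ℕ → ℝ → ℝ → ℝ} (d : Data p q) (ξ : ℝ) (hξ : 0 < ξ) :
    ∃ A : ℝ, 0 ≤ A ∧ ∀ᶠ R in atTop, |p 0 ξ R| ≤ A ∧ |q 0 ξ R| ≤ A := by
  obtain ⟨C, hC, H⟩ := outer
  set k := Real.sqrt ξ with hk
  have hk0 : 0 < k := Real.sqrt_pos.2 hξ
  set A := C * (q 0 ξ (1 / k) ^ 2 + (k * p 0 ξ (1 / k)) ^ 2) with hA
  have hA0 : 0 ≤ A := by positivity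
  refine ⟨Real.sqrt A / k + Real.sqrt A, by positivity, ?_⟩
  filter_upwards [eventually_ge_atTop (1 / k), eventually_gt_atTop 0] with R h1 h2
  have := H k (1 / k) R 0 _ _ _ hk0 (by positivity) h1 h2 (Or.inr (by field_simp; rfl))
    (by rw [hk, Real.sq_sqrt hξ.le]; exact d.s0 ξ) le_rfl (by simp)
  simp only [mul_zero, ne_eq, OfNat.ofNat_ne_zero, not_false_eq_true, zero_pow, add_zero] at this
  rw [← hA] at this
  have a1 : |q 0 ξ R| ≤ Real.sqrt A := Real.abs_le_sqrt (by linarith [sq_nonneg (k * p 0 ξ R)])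
  have a2 : |k * p 0 ξ R| ≤ Real.sqrt A := Real.abs_le_sqrt (by linarith [sq_nonneg (q 0 ξ R)])
  rw [abs_mul, abs_of_pos hk0] at a2
  have a3 : |p 0 ξ R| ≤ Real.sqrt A / k := by rw [le_div_iff₀ hk0]; linarith
  have : 0 ≤ Real.sqrt A / k := by positivity
  have := Real.sqrt_nonneg A
  exact ⟨by linarith, by linarith⟩

lemma z_int (r : ℝ) (hr : 0 ≤ r) : IntegrableOn (fun R : ℝ => ((1 + R) ^ 2)⁻¹) (Set.Ioi r) ∧
    ∫ R in Set.Ioi r, ((1 + R) ^ 2)⁻¹ = (1 + r)⁻¹ := by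
  have hd : ∀ x ∈ Set.Ici r, HasDerivAt (fun R : ℝ => -(1 + R)⁻¹) ((1 + x) ^ 2)⁻¹ x := by
    intro x hx
    have hx0 : 0 < 1 + x := by have : r ≤ x := hx; linarith
    have hx' : (1 + x) ≠ 0 := hx0.ne'
    refine (((hasDerivAt_id x).const_add 1).inv hx').neg.congr_deriv ?_
    simp; field_simp
  have ht : Tendsto (fun R : ℝ => -(1 + R)⁻¹) atTop (𝓝 0) := by
    have : Tendsto (fun R : ℝ => (1 + R)⁻¹) atTop (𝓝 0) :=
      tendsto_inv_atTop_zero.comp (tendsto_atTop_add_const_left _ _ tendsto_id)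
    simpa using this.neg
  have h1 := integrableOn_Ioi_deriv_of_nonneg' hd (fun x _ => by positivity) ht
  refine ⟨h1, ?_⟩
  rw [integral_Ioi_of_hasDerivAt_of_tendsto' hd h1 ht]; ring

lemma dom_int {g : ℝ → ℝ} {r A : ℝ} (hr : 0 ≤ r) (hg : Continuous g)
    (h : ∀ R, r < R → |g R| ≤ A * ((1 + R) ^ 2)⁻¹) :
    IntegrableOn g (Set.Ioi r) ∧ |∫ R in Set.Ioi r, g R| ≤ A * (1 + r)⁻¹ := by
  obtain ⟨z1, z2⟩ := z_int r hr
  have h1 : IntegrableOn (fun R : ℝ => A * ((1 + R) ^ 2)⁻¹) (Set.Ioi r) := z1.const_mul A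
  have h2 : ∀ᵐ R ∂(volume.restrict (Set.Ioi r)), ‖g R‖ ≤ A * ((1 + R) ^ 2)⁻¹ := by
    filter_upwards [ae_restrict_mem measurableSet_Ioi] with R hR using h R hR
  refine ⟨h1.mono' hg.aestronglyMeasurable h2, ?_⟩
  have := norm_integral_le_of_norm_le h1 h2
  rwa [integral_const_mul, z2] at this

lemma w_sq_le (R : ℝ) (hR : 0 ≤ R) : w R * (1 + R) ^ 2 ≤ 6 := by
  have h1 := w_mul R
  have h2 := w_pos R
  nlinarith [mul_pos h2 (by nlinarith [sq_nonneg (R - 1)] : (0:ℝ) < 3 * R ^ 2 - 6 * R + 15)]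

lemma w_pow_le (n : ℕ) (R : ℝ) (hR : 0 ≤ R) : w R ^ n * (1 + R) ^ (2 * n) ≤ 6 ^ n := by
  rw [pow_mul, ← mul_pow]
  exact pow_le_pow_left₀ (by have := w_pos R; positivity) (w_sq_le R hR) n

/-- basic pointwise domination -/
lemma pt_dom {n m e : ℕ} {R a b A B : ℝ} (hR : 0 ≤ R) (hA : 0 ≤ A)
    (ha : |a * b| ≤ A * (1 + R) ^ m) (hn : m + 2 + e ≤ 2 * n) (hB : B ≤ 1 + R) (hB0 : 0 ≤ B) :
    |w R ^ n * a * b| * B ^ e ≤ 6 ^ n * A * ((1 + R) ^ 2)⁻¹ := by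
  have h1 := w_pos R
  rw [mul_assoc, abs_mul, abs_of_pos (pow_pos h1 n)]
  have h2 : 1 ≤ 1 + R := by linarith
  have e3 : (w R ^ n * |a * b| * B ^ e) * (1 + R) ^ 2 ≤ 6 ^ n * A := by
    calc (w R ^ n * |a * b| * B ^ e) * (1 + R) ^ 2
        ≤ (w R ^ n * (A * (1 + R) ^ m) * (1 + R) ^ e) * (1 + R) ^ 2 := by gcongr
      _ = w R ^ n * A * (1 + R) ^ (m + 2 + e) := by ring
      _ ≤ w R ^ n * A * (1 + R) ^ (2 * n) := by
        gcongr
      _ = (w R ^ n * (1 + R) ^ (2 * n)) * A := by ring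
      _ ≤ _ := by gcongr; exact w_pow_le n R hR
  rw [← div_eq_mul_inv, le_div_iff₀ (by positivity)]
  exact e3

def I (p : ℕ → ℝ → ℝ → ℝ) (n : ℕ) (r : ℝ) (j l : ℕ) (ξ η : ℝ) : ℝ :=
  ∫ R in Set.Ioi r, w R ^ n * p j ξ R * p l η R

lemma I_symm (p : ℕ → ℝ → ℝ → ℝ) (n : ℕ) (r : ℝ) (j l : ℕ) (ξ η : ℝ) :
    I p n r j l ξ η = I p n r l j η ξ := by
  unfold I; congr 1; ext R; ring

section
variable {p q : ℕ → ℝ → ℝ → ℝ} {C : ℝ}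

lemma Data.sp (d : Data p q) {j : ℕ} (hj : j ≤ 2) (ξ R : ℝ) :
    HasDerivAt (p j ξ) (q j ξ R) R := by
  interval_cases j
  · exact (d.s0 ξ).1 R
  · exact (d.s1 ξ).1 R
  · exact (d.s2 ξ).1 R

lemma Data.cp (d : Data p q) {j : ℕ} (hj : j ≤ 2) (ξ : ℝ) : Continuous (p j ξ) :=
  continuous_iff_continuousAt.2 fun R => (d.sp hj ξ R).continuousAt

lemma Data.cint (d : Data p q) {j l : ℕ} (hj : j ≤ 2) (hl : l ≤ 2) (n : ℕ) (ξ η : ℝ) :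
    Continuous (fun R => w R ^ n * p j ξ R * p l η R) :=
  ((w_cont.pow n).mul (d.cp hj ξ)).mul (d.cp hl η)

/-- fine bounds, uniform for energies bounded below -/
lemma Bd.unif (b : Bd p q C) {s : ℝ} (hs : 0 < s) {j : ℕ} (hj : j ≤ 2) {ξ R : ℝ} (hξ : s < ξ)
    (hR : 0 ≤ R) : |p j ξ R| ≤ C * (1 + 1 / Real.sqrt s) ^ 2 * (1 + R) ^ j := by
  have h := b.fine j hj ξ R (hs.trans hξ).le hR
  have hC := b.one_le
  have hss : 0 < Real.sqrt s := Real.sqrt_pos.2 hs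
  have h1 : Real.sqrt s ≤ Real.sqrt ξ := Real.sqrt_le_sqrt hξ.le
  have h2 : 1 ≤ Real.sqrt (1 + ξ) := by rw [Real.one_le_sqrt]; linarith
  have h3 : |p j ξ R| * Real.sqrt s ^ j ≤ C * (1 + R) ^ j := by
    calc _ = |p j ξ R| * Real.sqrt s ^ j * 1 := by ring
      _ ≤ |p j ξ R| * Real.sqrt ξ ^ j * Real.sqrt (1 + ξ) := by gcongr
      _ ≤ _ := h
  have h4 : (1 / Real.sqrt s) ^ j ≤ (1 + 1 / Real.sqrt s) ^ 2 := by
    have : 0 < 1 / Real.sqrt s := by positivity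
    calc (1 / Real.sqrt s) ^ j ≤ (1 + 1 / Real.sqrt s) ^ j := by gcongr; linarith
      _ ≤ _ := pow_le_pow_right₀ (by linarith) hj
  calc |p j ξ R| = (|p j ξ R| * Real.sqrt s ^ j) * (1 / Real.sqrt s) ^ j := by
        rw [one_div, inv_pow]; field_simp
    _ ≤ (C * (1 + R) ^ j) * (1 + 1 / Real.sqrt s) ^ 2 := by gcongr
    _ = _ := by ring

lemma Bd.unif2 (b : Bd p q C) {s : ℝ} (hs : 0 < s) {n j l : ℕ} (hjl : j + l ≤ 2) (hn : 2 ≤ n)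
    {ξ η R : ℝ} (hξ : s < ξ) (hη : s < η) (hR : 0 ≤ R) :
    |w R ^ n * p j ξ R * p l η R| ≤
      6 ^ n * (C * (1 + 1 / Real.sqrt s) ^ 2) ^ 2 * ((1 + R) ^ 2)⁻¹ := by
  have h1 := b.unif hs (by omega : j ≤ 2) hξ hR
  have h2 := b.unif hs (by omega : l ≤ 2) hη hR
  have hC := b.one_le
  have := pt_dom (n := n) (m := j + l) (e := 0) (a := p j ξ R) (b := p l η R) (B := 0)
    (A := (C * (1 + 1 / Real.sqrt s) ^ 2) ^ 2) hR (by positivity) ?_ (by omega)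
    (by linarith) le_rfl
  · simpa using this
  · rw [abs_mul]
    calc _ ≤ (C * (1 + 1 / Real.sqrt s) ^ 2 * (1 + R) ^ j) *
          (C * (1 + 1 / Real.sqrt s) ^ 2 * (1 + R) ^ l) := by gcongr
      _ = _ := by ring

lemma I_int (d : Data p q) (b : Bd p q C) {n j l : ℕ} (hjl : j + l ≤ 2) (hn : 2 ≤ n)
    {ξ η r : ℝ} (hξ : 0 < ξ) (hη : 0 < η) (hr : 0 ≤ r) :
    IntegrableOn (fun R => w R ^ n * p j ξ R * p l η R) (Set.Ioi r) := by
  have hs : 0 < min ξ η / 2 := by positivity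
  have h1 : min ξ η / 2 < ξ := by linarith [min_le_left ξ η, lt_min hξ hη]
  have h2 : min ξ η / 2 < η := by linarith [min_le_right ξ η, lt_min hξ hη]
  exact (dom_int hr (d.cint (by omega) (by omega) n ξ η)
    (fun R hR => b.unif2 hs hjl hn h1 h2 (hr.trans hR.le))).1

lemma nhd_min {x : ℝ × ℝ} (h1 : 0 < x.1) (h2 : 0 < x.2) :
    {y : ℝ × ℝ | min x.1 x.2 / 2 < y.1 ∧ min x.1 x.2 / 2 < y.2} ∈ 𝓝 x := by
  apply IsOpen.mem_nhds
  · exact (isOpen_lt continuous_const continuous_fst).inter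
      (isOpen_lt continuous_const continuous_snd)
  · exact ⟨by linarith [min_le_left x.1 x.2, lt_min h1 h2],
      by linarith [min_le_right x.1 x.2, lt_min h1 h2]⟩

lemma I_cont (d : Data p q) (b : Bd p q C) {n j l : ℕ} (hjl : j + l ≤ 2) (hn : 2 ≤ n)
    {r : ℝ} (hr : 0 ≤ r) {x : ℝ × ℝ} (h1 : 0 < x.1) (h2 : 0 < x.2) :
    ContinuousAt (fun x : ℝ × ℝ => I p n r j l x.1 x.2) x := by
  unfold I
  have hs : 0 < min x.1 x.2 / 2 := by positivity
  apply continuousAt_of_dominated (bound := fun R => 6 ^ n *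
    (C * (1 + 1 / Real.sqrt (min x.1 x.2 / 2)) ^ 2) ^ 2 * ((1 + R) ^ 2)⁻¹)
  · exact Eventually.of_forall fun y =>
      (d.cint (by omega) (by omega) n y.1 y.2).aestronglyMeasurable
  · filter_upwards [nhd_min h1 h2] with y hy
    filter_upwards [ae_restrict_mem measurableSet_Ioi] with R hR
    exact b.unif2 hs hjl hn hy.1 hy.2 (hr.trans (le_of_lt hR))
  · exact (z_int r hr).1.const_mul _
  · refine Eventually.of_forall fun R => ?_
    have e1 : ContinuousAt (fun y : ℝ × ℝ => p j y.1 R) x :=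
      (d.dp j (by omega) x.1 R).continuousAt.comp (f := Prod.fst) continuousAt_fst
    have e2 : ContinuousAt (fun y : ℝ × ℝ => p l y.2 R) x :=
      (d.dp l (by omega) x.2 R).continuousAt.comp (f := Prod.snd) continuousAt_snd
    exact (continuousAt_const.mul e1).mul e2

lemma I_fderiv (d : Data p q) (b : Bd p q C) {n j l : ℕ} (hjl : j + l ≤ 1) (hn : 2 ≤ n)
    {r : ℝ} (hr : 0 ≤ r) {x : ℝ × ℝ} (h1 : 0 < x.1) (h2 : 0 < x.2) :
    HasFDerivAt (fun x : ℝ × ℝ => I p n r j l x.1 x.2)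
      (I p n r (j + 1) l x.1 x.2 • ContinuousLinearMap.fst ℝ ℝ ℝ +
        I p n r j (l + 1) x.1 x.2 • ContinuousLinearMap.snd ℝ ℝ ℝ) x := by
  have hs : 0 < min x.1 x.2 / 2 := by positivity
  set K := 6 ^ n * (C * (1 + 1 / Real.sqrt (min x.1 x.2 / 2)) ^ 2) ^ 2 with hK
  have c1 : ∀ y : ℝ × ℝ, Continuous (fun R => w R ^ n * p (j + 1) y.1 R * p l y.2 R) := fun y =>
    d.cint (by omega) (by omega) n y.1 y.2
  have c2 : ∀ y : ℝ × ℝ, Continuous (fun R => w R ^ n * p j y.1 R * p (l + 1) y.2 R) := fun y =>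
    d.cint (by omega) (by omega) n y.1 y.2
  have H := hasFDerivAt_integral_of_dominated_of_fderiv_le (𝕜 := ℝ)
    (μ := volume.restrict (Set.Ioi r))
    (F := fun (y : ℝ × ℝ) R => w R ^ n * p j y.1 R * p l y.2 R)
    (F' := fun (y : ℝ × ℝ) R =>
      (w R ^ n * p (j + 1) y.1 R * p l y.2 R) • ContinuousLinearMap.fst ℝ ℝ ℝ +
        (w R ^ n * p j y.1 R * p (l + 1) y.2 R) • ContinuousLinearMap.snd ℝ ℝ ℝ)
    (bound := fun R => 2 * K * ((1 + R) ^ 2)⁻¹) (nhd_min h1 h2) ?_ ?_ ?_ ?_ ?_ ?_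
  · refine H.congr_fderiv ?_
    have i1 := I_int d b (by omega : (j + 1) + l ≤ 2) hn h1 h2 hr
    have i2 := I_int d b (by omega : j + (l + 1) ≤ 2) hn h1 h2 hr
    rw [integral_add (i1.smul_const _) (i2.smul_const _), integral_smul_const, integral_smul_const]
    rfl
  · exact Eventually.of_forall fun y =>
      (d.cint (by omega) (by omega) n y.1 y.2).aestronglyMeasurable
  · exact I_int d b (by omega) hn h1 h2 hr
  · exact (((c1 x).smul continuous_const).add ((c2 x).smul continuous_const)).aestronglyMeasurable
  · filter_upwards [ae_restrict_mem measurableSet_Ioi] with R hR y hy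
    have hR0 : 0 ≤ R := hr.trans (le_of_lt hR)
    have b1 := b.unif2 hs (by omega : (j + 1) + l ≤ 2) hn hy.1 hy.2 hR0
    have b2 := b.unif2 hs (by omega : j + (l + 1) ≤ 2) hn hy.1 hy.2 hR0
    refine (norm_add_le _ _).trans ?_
    rw [norm_smul, norm_smul]
    have f1 := ContinuousLinearMap.norm_fst_le ℝ ℝ ℝ
    have f2 := ContinuousLinearMap.norm_snd_le ℝ ℝ ℝ
    have g1 : ‖w R ^ n * p (j + 1) y.1 R * p l y.2 R‖ * ‖ContinuousLinearMap.fst ℝ ℝ ℝ‖ ≤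
        K * ((1 + R) ^ 2)⁻¹ :=
      (mul_le_of_le_one_right (norm_nonneg _) f1).trans b1
    have g2 : ‖w R ^ n * p j y.1 R * p (l + 1) y.2 R‖ * ‖ContinuousLinearMap.snd ℝ ℝ ℝ‖ ≤
        K * ((1 + R) ^ 2)⁻¹ :=
      (mul_le_of_le_one_right (norm_nonneg _) f2).trans b2
    linarith
  · exact (z_int r hr).1.const_mul _
  · refine Eventually.of_forall fun R y _ => ?_
    have e1 : HasFDerivAt (fun y : ℝ × ℝ => p j y.1 R)
        (p (j + 1) y.1 R • ContinuousLinearMap.fst ℝ ℝ ℝ) y :=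
      (d.dp j (by omega) y.1 R).comp_hasFDerivAt (f := Prod.fst) y hasFDerivAt_fst
    have e2 : HasFDerivAt (fun y : ℝ × ℝ => p l y.2 R)
        (p (l + 1) y.2 R • ContinuousLinearMap.snd ℝ ℝ ℝ) y :=
      (d.dp l (by omega) y.2 R).comp_hasFDerivAt (f := Prod.snd) y hasFDerivAt_snd
    refine ((e1.const_mul (w R ^ n)).mul e2).congr_fderiv ?_
    ext <;> simp <;> ring

lemma I_dξ (d : Data p q) (b : Bd p q C) {n j l : ℕ} (hjl : j + l ≤ 1) (hn : 2 ≤ n)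
    {r : ℝ} (hr : 0 ≤ r) {ξ η : ℝ} (h1 : 0 < ξ) (h2 : 0 < η) :
    HasDerivAt (fun ξ => I p n r j l ξ η) (I p n r (j + 1) l ξ η) ξ := by
  have H := I_fderiv d b hjl hn hr (x := (ξ, η)) h1 h2
  have g : HasDerivAt (fun t : ℝ => (t, η)) ((1 : ℝ), (0 : ℝ)) ξ :=
    (hasDerivAt_id ξ).prodMk (hasDerivAt_const ξ η)
  have := H.comp_hasDerivAt (f := fun t : ℝ => (t, η)) ξ g
  exact this.congr_deriv (by simp)

lemma I_dη (d : Data p q) (b : Bd p q C) {n j l : ℕ} (hjl : j + l ≤ 1) (hn : 2 ≤ n)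
    {r : ℝ} (hr : 0 ≤ r) {ξ η : ℝ} (h1 : 0 < ξ) (h2 : 0 < η) :
    HasDerivAt (fun η => I p n r j l ξ η) (I p n r j (l + 1) ξ η) η := by
  have := I_dξ d b (by omega : l + j ≤ 1) hn hr h2 h1
  rw [I_symm p n r j]
  exact this.congr_of_eventuallyEq (Eventually.of_forall fun t => I_symm _ _ _ _ _ _ _)

lemma contDiffOn_aux {f a b : ℝ × ℝ → ℝ} {s : Set (ℝ × ℝ)} (hs : IsOpen s) {n : ℕ}
    (h : ∀ x ∈ s, HasFDerivAt f (a x • ContinuousLinearMap.fst ℝ ℝ ℝ +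
      b x • ContinuousLinearMap.snd ℝ ℝ ℝ) x)
    (ha : ContDiffOn ℝ n a s) (hb : ContDiffOn ℝ n b s) : ContDiffOn ℝ (n + 1) f s := by
  rw [contDiffOn_succ_iff_hasFDerivWithinAt_of_uniqueDiffOn hs.uniqueDiffOn]
  refine ⟨fun h => ?_, _, (ha.smul contDiffOn_const).add (hb.smul contDiffOn_const),
    fun x hx => (h x hx).hasFDerivWithinAt⟩
  exact absurd h (by simp)

lemma I_contDiff (d : Data p q) (b : Bd p q C) {n : ℕ} (hn : 2 ≤ n) {r : ℝ} (hr : 0 ≤ r) :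
    ContDiffOn ℝ 2 (fun x : ℝ × ℝ => I p n r 0 0 x.1 x.2) (Set.Ioi 0 ×ˢ Set.Ioi 0) := by
  have hs : IsOpen (Set.Ioi (0 : ℝ) ×ˢ Set.Ioi (0 : ℝ)) := isOpen_Ioi.prod isOpen_Ioi
  have c0 : ∀ j l, j + l ≤ 2 →
      ContDiffOn ℝ (0 : ℕ) (fun x : ℝ × ℝ => I p n r j l x.1 x.2) (Set.Ioi 0 ×ˢ Set.Ioi 0) := by
    intro j l hjl
    rw [Nat.cast_zero, contDiffOn_zero]
    exact fun x hx => (I_cont d b hjl hn hr hx.1 hx.2).continuousWithinAt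
  have c1 : ∀ j l, j + l ≤ 1 →
      ContDiffOn ℝ (1 : ℕ) (fun x : ℝ × ℝ => I p n r j l x.1 x.2) (Set.Ioi 0 ×ˢ Set.Ioi 0) := by
    intro j l hjl
    have := contDiffOn_aux hs (fun x hx => I_fderiv d b hjl hn hr hx.1 hx.2)
      (c0 (j + 1) l (by omega)) (c0 j (l + 1) (by omega))
    simpa using this
  have := contDiffOn_aux hs (fun x hx => I_fderiv d b (by omega : 0 + 0 ≤ 1) hn hr hx.1 hx.2)
    (c1 1 0 le_rfl) (c1 0 1 le_rfl)
  norm_num at this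
  exact this
end

def c1 (n : ℕ) : ℝ := 2 * n * (2 * n + 1) / 3
def c2 (n : ℕ) : ℝ := 4 * n * (n + 1) / 3
def e2 (n : ℕ) : ℝ := c1 n * c1 (n + 1)
def e3 (n : ℕ) : ℝ := -c1 n * c2 (n + 1) - c2 n * c1 (n + 2) + 20 * c1 n + 80 * n / 3
def e4 (n : ℕ) : ℝ := c2 n * c2 (n + 2) - 20 * c2 n - 80 * n / 3

def B1 (n : ℕ) (R : ℝ) : ℝ := -(2 * n / 3) * (R * w R) * w R ^ n
def B2 (n : ℕ) (R : ℝ) : ℝ := c1 n * w R ^ (n + 1) - c2 n * w R ^ (n + 2)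
def B3 (n : ℕ) (R : ℝ) : ℝ := c1 n * B1 (n + 1) R - c2 n * B1 (n + 2) R

lemma a_deriv (n : ℕ) (R : ℝ) : HasDerivAt (fun R => w R ^ n) (B1 n R) R := by
  refine ((w_deriv R).pow n).congr_deriv ?_
  unfold B1
  rcases n with _ | n
  · simp
  · simp only [Nat.add_sub_cancel]; push_cast; ring

lemma B1_deriv (n : ℕ) (R : ℝ) : HasDerivAt (B1 n) (B2 n R) R := by
  have h := ((((hasDerivAt_id R).mul (w_deriv R)).const_mul (-(2 * n / 3 : ℝ))).mul (a_deriv n R))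
  refine h.congr_deriv ?_
  have e := w_mul R
  simp only [id, B1, B2, c1, c2, Pi.mul_apply]
  linear_combination ((4 * n / 3) * w R ^ (n + 1) + 4 * n ^ 2 / 3 * w R ^ (n + 1)) * e

lemma B2_deriv (n : ℕ) (R : ℝ) : HasDerivAt (B2 n) (B3 n R) R :=
  ((a_deriv (n + 1) R).const_mul (c1 n)).sub ((a_deriv (n + 2) R).const_mul (c2 n))

lemma B3_deriv (n : ℕ) (R : ℝ) :
    HasDerivAt (B3 n) (c1 n * B2 (n + 1) R - c2 n * B2 (n + 2) R) R :=
  ((B1_deriv (n + 1) R).const_mul (c1 n)).sub ((B1_deriv (n + 2) R).const_mul (c2 n))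

lemma V_deriv (R : ℝ) : HasDerivAt V (-(20 / 3) * R * w R ^ 3) R := by
  refine (((w_deriv R).pow 2).const_mul 5).congr_deriv ?_
  push_cast; ring

section
variable (p q : ℕ → ℝ → ℝ → ℝ)

def HB (n j l : ℕ) (ξ η R : ℝ) : ℝ :=
  -(ξ - η) * w R ^ n * (q j ξ R * p l η R - p j ξ R * q l η R)
    + 2 * B1 n R * (q j ξ R * q l η R) - B2 n R * (q j ξ R * p l η R + p j ξ R * q l η R)
    + (B3 n R + B1 n R * (ξ + η + 2 * V R)) * (p j ξ R * p l η R)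

def HX (n j l : ℕ) (ξ η R : ℝ) : ℝ := w R ^ n * (q j ξ R * p l η R - p j ξ R * q l η R)

def HY (n j l : ℕ) (ξ η R : ℝ) : ℝ := B1 n R * (p j ξ R * p l η R)

def KA (n : ℕ) (r : ℝ) (j l : ℕ) (ξ η : ℝ) : ℝ :=
  c1 n * I p (n + 1) r j l ξ η - c2 n * I p (n + 2) r j l ξ η

def KE (n : ℕ) (r : ℝ) (j l : ℕ) (ξ η : ℝ) : ℝ :=
  e2 n * I p (n + 2) r j l ξ η + e3 n * I p (n + 3) r j l ξ η + e4 n * I p (n + 4) r j l ξ η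
end

section
variable {p q : ℕ → ℝ → ℝ → ℝ} {C : ℝ}

lemma HB_deriv (d : Data p q) (n : ℕ) (ξ η R : ℝ) :
    HasDerivAt (HB p q n 0 0 ξ η) ((ξ - η) ^ 2 * (w R ^ n * p 0 ξ R * p 0 η R) +
      (2 * (ξ + η) * (c1 n * (w R ^ (n + 1) * p 0 ξ R * p 0 η R) -
        c2 n * (w R ^ (n + 2) * p 0 ξ R * p 0 η R)) +
      (e2 n * (w R ^ (n + 2) * p 0 ξ R * p 0 η R) + e3 n * (w R ^ (n + 3) * p 0 ξ R * p 0 η R)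
        + e4 n * (w R ^ (n + 4) * p 0 ξ R * p 0 η R)))) R := by
  have x1 := (d.s0 ξ).1 R
  have x2 := (d.s0 ξ).2 R
  have y1 := (d.s0 η).1 R
  have y2 := (d.s0 η).2 R
  have h := ((((a_deriv n R).const_mul (-(ξ - η))).mul ((x2.mul y1).sub (x1.mul y2))).add
    (((B1_deriv n R).const_mul 2).mul (x2.mul y2))).sub
    ((B2_deriv n R).mul ((x2.mul y1).add (x1.mul y2)))
  have h2 := h.add (((B3_deriv n R).add ((B1_deriv n R).mul
    (((V_deriv R).const_mul 2).const_add (ξ + η)))).mul (x1.mul y1))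
  refine h2.congr_deriv ?_
  have e := w_mul R
  simp only [Pi.mul_apply, Pi.add_apply, Pi.sub_apply]
  simp only [B1, B2, B3, V, e2, e3, e4]
  generalize p 0 ξ R = P
  generalize p 0 η R = P'
  generalize q 0 ξ R = Q
  generalize q 0 η R = Q'
  generalize c1 n = k1
  generalize c2 n = k2
  generalize c1 (n + 1) = k3
  generalize c2 (n + 1) = k4
  generalize c1 (n + 2) = k5
  generalize c2 (n + 2) = k6
  linear_combination (80 * n / 3 * w R ^ (n + 3) * P * P') * e

lemma zb {f g : ℝ → ℝ} (hf : Tendsto f atTop (𝓝 0)) (A : ℝ) (hg : ∀ᶠ R in atTop, |g R| ≤ A) :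
    Tendsto (fun R => f R * g R) atTop (𝓝 0) := by
  have h : Tendsto (fun R => |f R| * |A|) atTop (𝓝 0) := by
    have := (hf.abs).mul_const |A|
    simpa using this
  refine squeeze_zero_norm' ?_ h
  filter_upwards [hg] with R hR
  rw [Real.norm_eq_abs, abs_mul]
  exact mul_le_mul_of_nonneg_left (hR.trans (le_abs_self A)) (abs_nonneg _)

lemma w_tendsto : Tendsto w atTop (𝓝 0) := by
  have h : Tendsto (fun R : ℝ => 1 + R ^ 2 / 3) atTop atTop :=
    tendsto_atTop_add_const_left _ _ ((tendsto_pow_atTop (by norm_num)).atTop_div_const (by norm_num))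
  exact tendsto_inv_atTop_zero.comp h

lemma wpow_tendsto {n : ℕ} (hn : n ≠ 0) : Tendsto (fun R => w R ^ n) atTop (𝓝 0) := by
  have := w_tendsto.pow n
  rwa [zero_pow hn] at this

lemma Rw_le (R : ℝ) (hR : 0 ≤ R) : |R * w R| ≤ 1 := by
  have h1 := w_mul R
  have h2 := w_pos R
  rw [abs_of_nonneg (by positivity)]
  nlinarith [sq_nonneg (R - 3 / 2)]

lemma B1_tendsto {n : ℕ} (hn : n ≠ 0) : Tendsto (B1 n) atTop (𝓝 0) := by
  have h1 : Tendsto (fun R => -(2 * n / 3 : ℝ) * w R ^ n) atTop (𝓝 0) := by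
    simpa using (wpow_tendsto hn).const_mul (-(2 * n / 3 : ℝ))
  refine (zb h1 1 (g := fun R => R * w R) ?_).congr fun R => by unfold B1; ring
  filter_upwards [eventually_ge_atTop 0] with R hR using Rw_le R hR

lemma B2_tendsto (n : ℕ) : Tendsto (B2 n) atTop (𝓝 0) := by
  have := ((wpow_tendsto (n := n + 1) (by omega)).const_mul (c1 n)).sub
    ((wpow_tendsto (n := n + 2) (by omega)).const_mul (c2 n))
  simp only [mul_zero, sub_zero] at this
  exact this

lemma B3_tendsto (n : ℕ) : Tendsto (B3 n) atTop (𝓝 0) := by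
  have := ((B1_tendsto (n := n + 1) (by omega)).const_mul (c1 n)).sub
    ((B1_tendsto (n := n + 2) (by omega)).const_mul (c2 n))
  simp only [mul_zero, sub_zero] at this
  exact this

lemma HB_tendsto (d : Data p q) {n : ℕ} (hn : n ≠ 0) {ξ η : ℝ} (hξ : 0 < ξ) (hη : 0 < η) :
    Tendsto (HB p q n 0 0 ξ η) atTop (𝓝 0) := by
  obtain ⟨A, hA, h1⟩ := d.q0_bdd ξ hξ
  obtain ⟨A', hA', h2⟩ := d.q0_bdd η hη
  have mb : ∀ {f g : ℝ → ℝ}, (∀ᶠ R in atTop, |f R| ≤ A) → (∀ᶠ R in atTop, |g R| ≤ A') →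
      ∀ᶠ R in atTop, |f R * g R| ≤ A * A' := by
    intro f g hf hg
    filter_upwards [hf, hg] with R a b
    rw [abs_mul]; gcongr
  have pp := mb (h1.mono fun _ h => h.1) (h2.mono fun _ h => h.1)
  have pq := mb (h1.mono fun _ h => h.1) (h2.mono fun _ h => h.2)
  have qp := mb (h1.mono fun _ h => h.2) (h2.mono fun _ h => h.1)
  have qq := mb (h1.mono fun _ h => h.2) (h2.mono fun _ h => h.2)
  have t1 : Tendsto (fun R => -(ξ - η) * w R ^ n) atTop (𝓝 0) := by
    simpa using (wpow_tendsto hn).const_mul (-(ξ - η))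
  have t2 : Tendsto (fun R => 2 * B1 n R) atTop (𝓝 0) := by
    simpa using (B1_tendsto hn).const_mul 2
  have t3 : Tendsto (fun R => B3 n R + B1 n R * (ξ + η + 2 * V R)) atTop (𝓝 0) := by
    have := zb (B1_tendsto hn) (|ξ + η| + 10) (g := fun R => ξ + η + 2 * V R)
      (Eventually.of_forall fun R => (abs_add_le _ _).trans (by
        rw [abs_mul, abs_two]; linarith [V_abs_le R]))
    simpa using (B3_tendsto n).add this
  have r1 := zb t1 (A * A' + A * A') (g := fun R => q 0 ξ R * p 0 η R - p 0 ξ R * q 0 η R) (by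
    filter_upwards [qp, pq] with R a b using (abs_sub _ _).trans (add_le_add a b))
  have r2 := zb t2 (A * A') qq
  have r3 := zb (B2_tendsto n) (A * A' + A * A')
    (g := fun R => q 0 ξ R * p 0 η R + p 0 ξ R * q 0 η R) (by
    filter_upwards [qp, pq] with R a b using (abs_add_le _ _).trans (add_le_add a b))
  have r4 := zb t3 (A * A') pp
  have := ((r1.add r2).sub r3).add r4
  simp only [add_zero, sub_zero] at this
  exact this

lemma id0 (d : Data p q) (b : Bd p q C) {n : ℕ} (hn : 2 ≤ n) {r : ℝ} (hr : 0 ≤ r) {ξ η : ℝ}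
    (hξ : 0 < ξ) (hη : 0 < η) :
    (ξ - η) ^ 2 * I p n r 0 0 ξ η = -HB p q n 0 0 ξ η r -
      (2 * (ξ + η) * KA p n r 0 0 ξ η + KE p n r 0 0 ξ η) := by
  have i0 := (I_int d b (by omega : 0 + 0 ≤ 2) hn hξ hη hr).const_mul ((ξ - η) ^ 2)
  have ii : ∀ m, 2 ≤ m → ∀ c : ℝ, Integrable (fun R => c * (w R ^ m * p 0 ξ R * p 0 η R))
    (volume.restrict (Set.Ioi r)) := fun m hm c =>
    (I_int d b (by omega : 0 + 0 ≤ 2) hm hξ hη hr).const_mul c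
  have j1 := (((ii (n + 1) (by omega) (c1 n)).sub (ii (n + 2) (by omega) (c2 n))).const_mul
    (2 * (ξ + η)))
  have j2 := ((ii (n + 2) (by omega) (e2 n)).add (ii (n + 3) (by omega) (e3 n))).add
    (ii (n + 4) (by omega) (e4 n))
  have H := integral_Ioi_of_hasDerivAt_of_tendsto' (a := r)
    (fun x _ => HB_deriv d n ξ η x) (i0.add (j1.add j2)) (HB_tendsto d (by omega) hξ hη)
  have e1 := integral_add i0 (j1.add j2)
  have e2' := integral_add j1 j2
  have e3' := integral_add ((ii (n + 2) (by omega) (e2 n)).add (ii (n + 3) (by omega) (e3 n)))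
    (ii (n + 4) (by omega) (e4 n))
  have e4' := integral_add (ii (n + 2) (by omega) (e2 n)) (ii (n + 3) (by omega) (e3 n))
  have e5 := integral_sub (ii (n + 1) (by omega) (c1 n)) (ii (n + 2) (by omega) (c2 n))
  simp only [Pi.add_apply, Pi.sub_apply, integral_const_mul] at e1 e2' e3' e4' e5
  rw [H, e2', e3', e4', e5] at e1
  simp only [KA, KE, I]
  linarith

lemma KA_dξ (d : Data p q) (b : Bd p q C) {n j l : ℕ} (hjl : j + l ≤ 1) (hn : 2 ≤ n)
    {r : ℝ} (hr : 0 ≤ r) {ξ η : ℝ} (h1 : 0 < ξ) (h2 : 0 < η) :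
    HasDerivAt (fun ξ => KA p n r j l ξ η) (KA p n r (j + 1) l ξ η) ξ :=
  ((I_dξ d b hjl (by omega) hr h1 h2).const_mul _).sub
    ((I_dξ d b hjl (by omega) hr h1 h2).const_mul _)

lemma KE_dξ (d : Data p q) (b : Bd p q C) {n j l : ℕ} (hjl : j + l ≤ 1) (hn : 2 ≤ n)
    {r : ℝ} (hr : 0 ≤ r) {ξ η : ℝ} (h1 : 0 < ξ) (h2 : 0 < η) :
    HasDerivAt (fun ξ => KE p n r j l ξ η) (KE p n r (j + 1) l ξ η) ξ :=
  (((I_dξ d b hjl (by omega) hr h1 h2).const_mul _).add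
    ((I_dξ d b hjl (by omega) hr h1 h2).const_mul _)).add
    ((I_dξ d b hjl (by omega) hr h1 h2).const_mul _)

lemma KA_dη (d : Data p q) (b : Bd p q C) {n j l : ℕ} (hjl : j + l ≤ 1) (hn : 2 ≤ n)
    {r : ℝ} (hr : 0 ≤ r) {ξ η : ℝ} (h1 : 0 < ξ) (h2 : 0 < η) :
    HasDerivAt (fun η => KA p n r j l ξ η) (KA p n r j (l + 1) ξ η) η :=
  ((I_dη d b hjl (by omega) hr h1 h2).const_mul _).sub
    ((I_dη d b hjl (by omega) hr h1 h2).const_mul _)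

lemma KE_dη (d : Data p q) (b : Bd p q C) {n j l : ℕ} (hjl : j + l ≤ 1) (hn : 2 ≤ n)
    {r : ℝ} (hr : 0 ≤ r) {ξ η : ℝ} (h1 : 0 < ξ) (h2 : 0 < η) :
    HasDerivAt (fun η => KE p n r j l ξ η) (KE p n r j (l + 1) ξ η) η :=
  (((I_dη d b hjl (by omega) hr h1 h2).const_mul _).add
    ((I_dη d b hjl (by omega) hr h1 h2).const_mul _)).add
    ((I_dη d b hjl (by omega) hr h1 h2).const_mul _)

lemma HX_dξ (d : Data p q) {n j l : ℕ} (hj : j < 3) (ξ η r : ℝ) :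
    HasDerivAt (fun ξ => HX p q n j l ξ η r) (HX p q n (j + 1) l ξ η r) ξ :=
  (((d.dq j hj ξ r).mul_const (p l η r)).sub ((d.dp j hj ξ r).mul_const (q l η r))).const_mul _

lemma HY_dξ (d : Data p q) {n j l : ℕ} (hj : j < 3) (ξ η r : ℝ) :
    HasDerivAt (fun ξ => HY p n j l ξ η r) (HY p n (j + 1) l ξ η r) ξ :=
  ((d.dp j hj ξ r).mul_const (p l η r)).const_mul _

lemma HX_dη (d : Data p q) {n j l : ℕ} (hl : l < 3) (ξ η r : ℝ) :
    HasDerivAt (fun η => HX p q n j l ξ η r) (HX p q n j (l + 1) ξ η r) η :=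
  (((d.dp l hl η r).const_mul (q j ξ r)).sub ((d.dq l hl η r).const_mul (p j ξ r))).const_mul _

lemma HY_dη (d : Data p q) {n j l : ℕ} (hl : l < 3) (ξ η r : ℝ) :
    HasDerivAt (fun η => HY p n j l ξ η r) (HY p n j (l + 1) ξ η r) η :=
  ((d.dp l hl η r).const_mul (p j ξ r)).const_mul _

lemma HB_eq (n j l : ℕ) (ξ η R : ℝ) : HB p q n j l ξ η R =
    -(ξ - η) * HX p q n j l ξ η R
    + 2 * B1 n R * (q j ξ R * q l η R) - B2 n R * (q j ξ R * p l η R + p j ξ R * q l η R)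
    + (B3 n R + 2 * B1 n R * V R) * (p j ξ R * p l η R) + (ξ + η) * HY p n j l ξ η R := by
  unfold HB HX HY; ring

lemma HB_dξ (d : Data p q) {n j l : ℕ} (hj : j < 3) (ξ η r : ℝ) :
    HasDerivAt (fun ξ => HB p q n j l ξ η r)
      (HB p q n (j + 1) l ξ η r - HX p q n j l ξ η r + HY p n j l ξ η r) ξ := by
  have x := d.dp j hj ξ r
  have y := d.dq j hj ξ r
  simp only [HB_eq]
  have h1 := (((hasDerivAt_id ξ).sub_const η).neg).mul (HX_dξ d (n := n) (l := l) hj ξ η r)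
  have h2 := (y.mul_const (q l η r)).const_mul (2 * B1 n r)
  have h3 := ((y.mul_const (p l η r)).add (x.mul_const (q l η r))).const_mul (B2 n r)
  have h4 := (x.mul_const (p l η r)).const_mul (B3 n r + 2 * B1 n r * V r)
  have h5 := ((hasDerivAt_id ξ).add_const η).mul (HY_dξ d (n := n) (l := l) hj ξ η r)
  refine ((((h1.add h2).sub h3).add h4).add h5).congr_deriv ?_
  simp only [Pi.neg_apply, id]
  ring

lemma HB_dη (d : Data p q) {n j l : ℕ} (hl : l < 3) (ξ η r : ℝ) :
    HasDerivAt (fun η => HB p q n j l ξ η r)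
      (HB p q n j (l + 1) ξ η r + HX p q n j l ξ η r + HY p n j l ξ η r) η := by
  have x := d.dp l hl η r
  have y := d.dq l hl η r
  simp only [HB_eq]
  have h1 := (((hasDerivAt_id η).const_sub ξ).neg).mul (HX_dη d (n := n) (j := j) hl ξ η r)
  have h2 := (y.const_mul (q j ξ r)).const_mul (2 * B1 n r)
  have h3 := ((x.const_mul (q j ξ r)).add (y.const_mul (p j ξ r))).const_mul (B2 n r)
  have h4 := (x.const_mul (p j ξ r)).const_mul (B3 n r + 2 * B1 n r * V r)
  have h5 := ((hasDerivAt_id η).const_add ξ).mul (HY_dη d (n := n) (j := j) hl ξ η r)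
  refine ((((h1.add h2).sub h3).add h4).add h5).congr_deriv ?_
  simp only [Pi.neg_apply, id]
  ring

lemma deriv_uniq {f g : ℝ → ℝ} {f' g' x : ℝ} (hx : 0 < x) (hf : HasDerivAt f f' x)
    (hg : HasDerivAt g g' x) (h : ∀ y, 0 < y → f y = g y) : f' = g' := by
  have : f =ᶠ[𝓝 x] g := by
    filter_upwards [Ioi_mem_nhds hx] with y hy using h y hy
  exact hf.unique (hg.congr_of_eventuallyEq this)

lemma dδ (ξ η : ℝ) : HasDerivAt (fun ξ => (ξ - η) ^ 2) (2 * (ξ - η)) ξ := by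
  refine (((hasDerivAt_id ξ).sub_const η).pow 2).congr_deriv ?_
  simp

lemma dδ' (ξ η : ℝ) : HasDerivAt (fun η => (ξ - η) ^ 2) (-2 * (ξ - η)) η := by
  refine (((hasDerivAt_id η).const_sub ξ).pow 2).congr_deriv ?_
  simp

lemma dδ1 (ξ η : ℝ) : HasDerivAt (fun ξ => 2 * (ξ - η)) 2 ξ := by
  refine (((hasDerivAt_id ξ).sub_const η).const_mul 2).congr_deriv ?_
  simp

lemma dδ1' (ξ η : ℝ) : HasDerivAt (fun η => 2 * (ξ - η)) (-2) η := by
  refine (((hasDerivAt_id η).const_sub ξ).const_mul 2).congr_deriv ?_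
  simp

lemma dσ (ξ η : ℝ) : HasDerivAt (fun ξ => 2 * (ξ + η)) 2 ξ := by
  refine (((hasDerivAt_id ξ).add_const η).const_mul 2).congr_deriv ?_
  simp

lemma dσ' (ξ η : ℝ) : HasDerivAt (fun η => 2 * (ξ + η)) 2 η := by
  refine (((hasDerivAt_id η).const_add ξ).const_mul 2).congr_deriv ?_
  simp

lemma id1 (d : Data p q) (b : Bd p q C) {n : ℕ} (hn : 2 ≤ n) {r : ℝ} (hr : 0 ≤ r) {ξ η : ℝ}
    (hξ : 0 < ξ) (hη : 0 < η) :
    2 * (ξ - η) * I p n r 0 0 ξ η + (ξ - η) ^ 2 * I p n r 1 0 ξ η =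
      -(HB p q n 1 0 ξ η r - HX p q n 0 0 ξ η r + HY p n 0 0 ξ η r) -
      (2 * KA p n r 0 0 ξ η + 2 * (ξ + η) * KA p n r 1 0 ξ η + KE p n r 1 0 ξ η) :=
  deriv_uniq hξ ((dδ ξ η).mul (I_dξ d b (by omega) hn hr hξ hη))
    ((HB_dξ d (by norm_num) ξ η r).neg.sub
      (((dσ ξ η).mul (KA_dξ d b (by omega) hn hr hξ hη)).add (KE_dξ d b (by omega) hn hr hξ hη)))
    (fun _ hy => id0 d b hn hr hy hη)

lemma id20 (d : Data p q) (b : Bd p q C) {n : ℕ} (hn : 2 ≤ n) {r : ℝ} (hr : 0 ≤ r) {ξ η : ℝ}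
    (hξ : 0 < ξ) (hη : 0 < η) :
    (ξ - η) ^ 2 * I p n r 2 0 ξ η + 4 * (ξ - η) * I p n r 1 0 ξ η + 2 * I p n r 0 0 ξ η =
      -(HB p q n 2 0 ξ η r - 2 * HX p q n 1 0 ξ η r + 2 * HY p n 1 0 ξ η r) -
      (4 * KA p n r 1 0 ξ η + 2 * (ξ + η) * KA p n r 2 0 ξ η + KE p n r 2 0 ξ η) := by
  have := deriv_uniq hξ
    (((dδ1 ξ η).mul (I_dξ d b (by omega) hn hr hξ hη)).add
      ((dδ ξ η).mul (I_dξ d b (by omega) hn hr hξ hη)))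
    ((((HB_dξ d (by norm_num) ξ η r).sub (HX_dξ d (by norm_num) ξ η r)).add
      (HY_dξ d (by norm_num) ξ η r)).neg.sub
      ((((KA_dξ d b (by omega) hn hr hξ hη).const_mul 2).add
      ((dσ ξ η).mul (KA_dξ d b (by omega) hn hr hξ hη))).add (KE_dξ d b (by omega) hn hr hξ hη)))
    (fun _ hy => id1 d b hn hr hy hη)
  simp only [Nat.reduceAdd] at this
  linear_combination this

lemma id11 (d : Data p q) (b : Bd p q C) {n : ℕ} (hn : 2 ≤ n) {r : ℝ} (hr : 0 ≤ r) {ξ η : ℝ}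
    (hξ : 0 < ξ) (hη : 0 < η) :
    (ξ - η) ^ 2 * I p n r 1 1 ξ η - 2 * (ξ - η) * I p n r 1 0 ξ η
      + 2 * (ξ - η) * I p n r 0 1 ξ η - 2 * I p n r 0 0 ξ η =
      -(HB p q n 1 1 ξ η r + HX p q n 1 0 ξ η r + HY p n 1 0 ξ η r
        - HX p q n 0 1 ξ η r + HY p n 0 1 ξ η r) -
      (2 * KA p n r 1 0 ξ η + 2 * KA p n r 0 1 ξ η
        + 2 * (ξ + η) * KA p n r 1 1 ξ η + KE p n r 1 1 ξ η) := by
  have := deriv_uniq hη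
    (((dδ1' ξ η).mul (I_dη d b (by omega) hn hr hξ hη)).add
      ((dδ' ξ η).mul (I_dη d b (by omega) hn hr hξ hη)))
    ((((HB_dη d (by norm_num) ξ η r).sub (HX_dη d (by norm_num) ξ η r)).add
      (HY_dη d (by norm_num) ξ η r)).neg.sub
      ((((KA_dη d b (by omega) hn hr hξ hη).const_mul 2).add
      ((dσ' ξ η).mul (KA_dη d b (by omega) hn hr hξ hη))).add (KE_dη d b (by omega) hn hr hξ hη)))
    (fun _ hy => id1 d b hn hr hξ hy)
  simp only [Nat.reduceAdd] at this
  linear_combination this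
end

lemma sqrt_add_le' {x y : ℝ} (hx : 0 ≤ x) (hy : 0 ≤ y) :
    Real.sqrt (x + y) ≤ Real.sqrt x + Real.sqrt y := by
  rw [Real.sqrt_le_left (by positivity)]
  nlinarith [Real.sq_sqrt hx, Real.sq_sqrt hy, Real.sqrt_nonneg x, Real.sqrt_nonneg y,
    mul_nonneg (Real.sqrt_nonneg x) (Real.sqrt_nonneg y)]

section
variable {p q : ℕ → ℝ → ℝ → ℝ} {C : ℝ}

lemma I_bound (d : Data p q) {n j l m e : ℕ} (hj : j ≤ 2) (hl : l ≤ 2) {ξ η r W A : ℝ}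
    (hr : 0 ≤ r) (hW : 0 < W) (hA : 0 ≤ A) (hn : m + 2 + e ≤ 2 * n)
    (h : ∀ R, r < R → |p j ξ R| * |p l η R| * W ≤ A * (1 + R) ^ m) :
    |I p n r j l ξ η| * W * (1 + r) ^ (e + 1) ≤ 6 ^ n * A := by
  have hB : 0 < (1 + r) ^ e := by positivity
  have h1 : ∀ R, r < R → |w R ^ n * p j ξ R * p l η R| ≤
      (6 ^ n * (A / W) / (1 + r) ^ e) * ((1 + R) ^ 2)⁻¹ := by
    intro R hR
    have := pt_dom (n := n) (m := m) (e := e) (a := p j ξ R) (b := p l η R) (B := 1 + r)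
      (A := A / W) (R := R) (by linarith) (by positivity) ?_ hn (by linarith) (by linarith)
    · rw [div_mul_eq_mul_div, le_div_iff₀ hB]; exact this
    · rw [abs_mul, div_mul_eq_mul_div, le_div_iff₀ hW]; exact h R hR
  have h2 := (dom_int hr (d.cint hj hl n ξ η) h1).2
  have h3 : 0 < 1 + r := by linarith
  change |I p n r j l ξ η| ≤ _ at h2
  rw [← div_eq_mul_inv, div_div, le_div_iff₀ (by positivity), ← mul_div_assoc,
    le_div_iff₀ hW] at h2
  calc _ = |I p n r j l ξ η| * ((1 + r) ^ e * (1 + r)) * W := by ring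
    _ ≤ _ := h2

lemma D_aux {ξ η : ℝ} (hξ : 0 < ξ) (hη : 0 < η) :
    Real.sqrt (ξ + η) ≤ 2 * (1 + |Real.sqrt ξ - Real.sqrt η|) * Real.sqrt (1 + ξ) := by
  have h1 : Real.sqrt (ξ + η) ≤ Real.sqrt ξ + Real.sqrt η := sqrt_add_le' hξ.le hη.le
  have h2 : 1 ≤ Real.sqrt (1 + ξ) := by rw [Real.one_le_sqrt]; linarith
  have h3 : Real.sqrt ξ ≤ Real.sqrt (1 + ξ) := Real.sqrt_le_sqrt (by linarith)
  have h4 := neg_abs_le (Real.sqrt ξ - Real.sqrt η)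
  have h5 := abs_nonneg (Real.sqrt ξ - Real.sqrt η)
  nlinarith [mul_nonneg h5 (sub_nonneg.2 h2)]

lemma D_swap (ξ η : ℝ) : |Real.sqrt η - Real.sqrt ξ| = |Real.sqrt ξ - Real.sqrt η| :=
  abs_sub_comm _ _

lemma δ_eq {ξ η : ℝ} (hξ : 0 < ξ) (hη : 0 < η) :
    |ξ - η| = |Real.sqrt ξ - Real.sqrt η| * (Real.sqrt ξ + Real.sqrt η) := by
  have : 0 ≤ Real.sqrt ξ + Real.sqrt η := by positivity
  have e := abs_mul (Real.sqrt ξ - Real.sqrt η) (Real.sqrt ξ + Real.sqrt η)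
  rw [abs_of_nonneg this] at e
  rw [← e]
  congr 1
  nlinarith [Real.sq_sqrt hξ.le, Real.sq_sqrt hη.le]

lemma δ_ge {ξ η : ℝ} (hξ : 0 < ξ) (hη : 0 < η) :
    |Real.sqrt ξ - Real.sqrt η| * Real.sqrt (ξ + η) ≤ |ξ - η| := by
  rw [δ_eq hξ hη]
  exact mul_le_mul_of_nonneg_left (sqrt_add_le' hξ.le hη.le) (abs_nonneg _)

lemma δ_ge2 {ξ η : ℝ} (hξ : 0 < ξ) (hη : 0 < η) (h : Real.sqrt (ξ + η) ≤ 2 * |ξ - η|) :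
    (1 + |Real.sqrt ξ - Real.sqrt η|) * Real.sqrt (ξ + η) ≤ 4 * |ξ - η| := by
  have := δ_ge hξ hη
  have := abs_nonneg (ξ - η)
  nlinarith

lemma near (d : Data p q) (b : Bd p q C) {n j l : ℕ} (hjl : j + l ≤ 2) (hn : 2 ≤ n) {ξ η : ℝ}
    (hξ : 0 < ξ) (hη : 0 < η) (hσ : 1 ≤ ξ + η) (h : 2 * |ξ - η| ≤ Real.sqrt (ξ + η)) :
    |I p n 0 j l ξ η| * Real.sqrt (ξ + η) ^ (2 + j + l) ≤ 16 * 6 ^ n * C ^ 2 ∧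
      1 + |Real.sqrt ξ - Real.sqrt η| ≤ 2 := by
  have hs : 1 ≤ Real.sqrt (ξ + η) := by rw [Real.one_le_sqrt]; exact hσ
  have hss : Real.sqrt (ξ + η) ^ 2 = ξ + η := Real.sq_sqrt (by linarith)
  set s := Real.sqrt (ξ + η) with hsdef
  have hC := b.one_le
  constructor
  · have x1 : s / 2 ≤ Real.sqrt ξ := by
      apply Real.le_sqrt_of_sq_le
      nlinarith [neg_abs_le (ξ - η)]
    have y1 : s / 2 ≤ Real.sqrt η := by
      apply Real.le_sqrt_of_sq_le
      nlinarith [le_abs_self (ξ - η)]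
    have x2 : s / 2 ≤ Real.sqrt (1 + ξ) := x1.trans (Real.sqrt_le_sqrt (by linarith))
    have y2 : s / 2 ≤ Real.sqrt (1 + η) := y1.trans (Real.sqrt_le_sqrt (by linarith))
    have := I_bound d (n := n) (j := j) (l := l) (m := j + l) (e := 0) (ξ := ξ) (η := η)
      (r := 0) (W := (s / 2) ^ (2 + j + l)) (A := C ^ 2) (by omega) (by omega) le_rfl
      (by positivity) (by positivity) (by omega) ?_
    · simp only [div_pow] at this
      have h2 : (2:ℝ) ^ (2 + j + l) ≤ 16 := by
        calc (2:ℝ) ^ (2 + j + l) ≤ 2 ^ 4 := pow_le_pow_right₀ (by norm_num) (by omega)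
          _ = 16 := by norm_num
      have h3 : |I p n 0 j l ξ η| * s ^ (2 + j + l) / 2 ^ (2 + j + l) ≤ 6 ^ n * C ^ 2 := by
        refine le_trans (le_of_eq ?_) this
        simp; ring
      rw [div_le_iff₀ (by positivity)] at h3
      calc _ ≤ 6 ^ n * C ^ 2 * 2 ^ (2 + j + l) := h3
        _ ≤ 6 ^ n * C ^ 2 * 16 := by gcongr
        _ = _ := by ring
    · intro R hR
      have a1 := b.fine j (by omega) ξ R hξ.le hR.le
      have a2 := b.fine l (by omega) η R hη.le hR.le
      have k1 : |p j ξ R| * (s / 2) ^ j * (s / 2) ≤ C * (1 + R) ^ j :=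
        le_trans (by gcongr) a1
      have k2 : |p l η R| * (s / 2) ^ l * (s / 2) ≤ C * (1 + R) ^ l :=
        le_trans (by gcongr) a2
      calc |p j ξ R| * |p l η R| * (s / 2) ^ (2 + j + l)
          = (|p j ξ R| * (s / 2) ^ j * (s / 2)) * (|p l η R| * (s / 2) ^ l * (s / 2)) := by ring
        _ ≤ (C * (1 + R) ^ j) * (C * (1 + R) ^ l) := by
          have : 0 < R := hR
          gcongr
        _ = _ := by ring
  · have := δ_ge hξ hη
    by_contra hc
    push Not at hc
    nlinarith [abs_nonneg (ξ - η)]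

lemma far_base (d : Data p q) (b : Bd p q C) {n j l : ℕ} (hjl : j + l ≤ 2) (hn : 3 ≤ n) {ξ η : ℝ}
    (hξ : 0 < ξ) (hη : 0 < η) :
    |I p n 0 j l ξ η| * Real.sqrt (ξ + η) ^ (2 + j + l) ≤ 16 * 6 ^ n * C ^ 2 *
      (1 + |Real.sqrt ξ - Real.sqrt η|) ^ 4 := by
  have hC := b.one_le
  have x := D_aux hξ hη
  have y := D_aux hη hξ
  rw [D_swap, add_comm η ξ] at y
  set D := 1 + |Real.sqrt ξ - Real.sqrt η| with hD
  have hD1 : 1 ≤ D := by rw [hD]; linarith [abs_nonneg (Real.sqrt ξ - Real.sqrt η)]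
  set s := Real.sqrt (ξ + η) with hsdef
  have hs : 0 ≤ s := Real.sqrt_nonneg _
  have := I_bound d (n := n) (j := j) (l := l) (m := 2 * j + 2 * l) (e := 0) (ξ := ξ) (η := η)
      (r := 0) (W := Real.sqrt (1 + ξ) ^ (j + 1) * Real.sqrt (1 + η) ^ (l + 1)) (A := C ^ 2)
      (by omega) (by omega) le_rfl (by positivity) (by positivity) (by omega) ?_
  · have h2 : (2 * D) ^ (2 + j + l) ≤ 16 * D ^ 4 := by
      calc (2 * D) ^ (2 + j + l) ≤ (2 * D) ^ 4 := pow_le_pow_right₀ (by linarith) (by omega)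
        _ = _ := by ring
    have h3 : s ^ (2 + j + l) ≤ (2 * D) ^ (2 + j + l) *
        (Real.sqrt (1 + ξ) ^ (j + 1) * Real.sqrt (1 + η) ^ (l + 1)) := by
      calc s ^ (2 + j + l) = s ^ (j + 1) * s ^ (l + 1) := by ring
        _ ≤ (2 * D * Real.sqrt (1 + ξ)) ^ (j + 1) * (2 * D * Real.sqrt (1 + η)) ^ (l + 1) := by
          gcongr
        _ = _ := by rw [mul_pow (2 * D), mul_pow (2 * D)]; ring
    have h4 : |I p n 0 j l ξ η| * (Real.sqrt (1 + ξ) ^ (j + 1) * Real.sqrt (1 + η) ^ (l + 1))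
        ≤ 6 ^ n * C ^ 2 := by simpa using this
    calc |I p n 0 j l ξ η| * s ^ (2 + j + l) ≤ |I p n 0 j l ξ η| * ((2 * D) ^ (2 + j + l) *
        (Real.sqrt (1 + ξ) ^ (j + 1) * Real.sqrt (1 + η) ^ (l + 1))) := by gcongr
      _ = (2 * D) ^ (2 + j + l) * (|I p n 0 j l ξ η| *
        (Real.sqrt (1 + ξ) ^ (j + 1) * Real.sqrt (1 + η) ^ (l + 1))) := by ring
      _ ≤ (16 * D ^ 4) * (6 ^ n * C ^ 2) := by gcongr
      _ = _ := by ring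
  · intro R hR
    have hR0 : 0 < R := hR
    have a1 := b.crude j (by omega) ξ R hξ.le hR.le
    have a2 := b.crude l (by omega) η R hη.le hR.le
    calc _ = (|p j ξ R| * Real.sqrt (1 + ξ) ^ (j + 1)) *
          (|p l η R| * Real.sqrt (1 + η) ^ (l + 1)) := by ring
      _ ≤ (C * (1 + R) ^ (2 * j)) * (C * (1 + R) ^ (2 * l)) := by gcongr
      _ = _ := by ring

lemma HB_zero (d : Data p q) {n j l : ℕ} (hj : j ≤ 2) (hl : l ≤ 2) (ξ η : ℝ) :
    HB p q n j l ξ η 0 = 0 ∧ HX p q n j l ξ η 0 = 0 ∧ HY p n j l ξ η 0 = 0 := by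
  have h : ∀ j ≤ 2, ∀ ξ, p j ξ 0 = 0 := by
    intro j hj ξ
    interval_cases j
    · exact d.i0 ξ
    · exact d.i1 ξ
    · exact d.i2 ξ
  simp [HB, HX, HY, B1, h j hj, h l hl]

lemma stepY {s D t A a b' Y : ℝ} (hs : 1 ≤ s) (hD : 1 ≤ D) (ht : D * s ≤ 4 * t) (hA : 0 ≤ A)
    (ha : 0 ≤ a) (hb : 0 ≤ b') (h : t ^ 2 * Y ≤ a * t * s * A + b' * s ^ 2 * D ^ 2 * A) :
    Y ≤ (4 * a + 16 * b') * A := by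
  have hDs : 1 ≤ D * s := by nlinarith
  have ht0 : 0 < t := by linarith
  have hst : s ≤ 4 * t := by nlinarith
  have h1 : a * t * s * A ≤ a * t * (4 * t) * A := by gcongr
  have h2 : b' * s ^ 2 * D ^ 2 * A ≤ b' * (4 * t) ^ 2 * A := by
    calc b' * s ^ 2 * D ^ 2 * A = b' * (D * s) ^ 2 * A := by ring
      _ ≤ _ := by gcongr
  have h3 : t ^ 2 * Y ≤ t ^ 2 * ((4 * a + 16 * b') * A) := by
    calc _ ≤ _ := h
      _ ≤ a * t * (4 * t) * A + b' * (4 * t) ^ 2 * A := add_le_add h1 h2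
      _ = _ := by ring
  exact le_of_mul_le_mul_left h3 (by positivity)

lemma step_alg {s D δ A : ℝ} (hs : 1 ≤ s) (hD : 1 ≤ D) (ht : D * s ≤ 4 * |δ|) (hA : 0 ≤ A)
    {x a1 e : ℝ} (ha1 : |a1| * s ^ 2 ≤ A) (he : |e| * s ^ 2 ≤ A)
    (h : δ ^ 2 * x = -(2 * s ^ 2 * a1 + e)) : |x| * s ^ 2 * D ^ 2 ≤ 48 * A := by
  have := stepY (a := 0) (b' := 3) (Y := |x| * s ^ 2 * D ^ 2) hs hD ht hA le_rfl (by norm_num) ?_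
  · linarith
  have h1 : |δ| ^ 2 * |x| ≤ 2 * s ^ 2 * |a1| + |e| := by
    rw [← abs_pow, ← abs_mul, h, abs_neg]
    refine (abs_add_le _ _).trans ?_
    rw [abs_mul, abs_of_nonneg (by positivity : 0 ≤ 2 * s ^ 2)]
  have h2 : |δ| ^ 2 * |x| * s ^ 2 ≤ 3 * s ^ 2 * A := by
    calc _ ≤ (2 * s ^ 2 * |a1| + |e|) * s ^ 2 := by gcongr
      _ = 2 * s ^ 2 * (|a1| * s ^ 2) + |e| * s ^ 2 := by ring
      _ ≤ 2 * s ^ 2 * A + A := by gcongr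
      _ ≤ _ := by nlinarith [mul_le_mul_of_nonneg_right (one_le_pow₀ hs : 1 ≤ s ^ 2) hA]
  calc _ = (|δ| ^ 2 * |x| * s ^ 2) * D ^ 2 := by ring
    _ ≤ (3 * s ^ 2 * A) * D ^ 2 := by gcongr
    _ = _ := by ring

/-- first and second order step; `y` collects lower order terms -/
lemma step_alg2 {s D δ A k c : ℝ} (k' : ℕ) (hs : 1 ≤ s) (hD : 1 ≤ D) (ht : D * s ≤ 4 * |δ|)
    (hA : 0 ≤ A) (hk : 0 ≤ k) (hc : 0 ≤ c)
    {x y z a0 a1 e : ℝ} (ha0 : |a0| * s ^ k' ≤ 4 * A)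
    (ha1 : |a1| * s ^ (k' + 1) ≤ A) (he : |e| * s ^ (k' + 1) ≤ A)
    (hy : |y| * s ^ k' * D ^ 2 ≤ k * A) (hz : |z| * s ^ k' * D ^ 2 ≤ c * s * A)
    (h : δ ^ 2 * x = -(δ * y) - z - (a0 + 2 * s ^ 2 * a1 + e)) :
    |x| * s ^ (k' + 1) * D ^ 2 ≤ (4 * k + 16 * (c + 7)) * A := by
  refine stepY hs hD ht hA hk (by positivity : 0 ≤ c + 7) ?_
  have h1 : |δ| ^ 2 * |x| ≤ |δ| * |y| + |z| + |a0| + 2 * s ^ 2 * |a1| + |e| := by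
    rw [← abs_pow, ← abs_mul, h, ← abs_mul]
    have e1 : |2 * s ^ 2 * a1| = 2 * s ^ 2 * |a1| := by
      rw [abs_mul, abs_of_nonneg (by positivity : 0 ≤ 2 * s ^ 2)]
    have := abs_sub (-(δ * y) - z) (a0 + 2 * s ^ 2 * a1 + e)
    have := abs_sub (-(δ * y)) z
    have := abs_add_le (a0 + 2 * s ^ 2 * a1) e
    have := abs_add_le a0 (2 * s ^ 2 * a1)
    rw [abs_neg] at *
    linarith
  have hs0 : 0 ≤ s := by linarith
  have hss : s ≤ s ^ 2 := by nlinarith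
  have hDD : 1 ≤ D ^ 2 := by nlinarith
  have t1 : |a0| * s ^ k' * s ≤ 4 * A * s := by gcongr
  have t2 : s ^ 2 * (|a1| * s ^ (k' + 1)) ≤ s ^ 2 * A := by gcongr
  have t3 : |δ| * s * (|y| * s ^ k' * D ^ 2) ≤ |δ| * s * (k * A) := by gcongr
  have t4 : s * (|z| * s ^ k' * D ^ 2) ≤ s * (c * s * A) := by gcongr
  have t5 : (|a0| * s ^ k' * s + 2 * (s ^ 2 * (|a1| * s ^ (k' + 1))) + |e| * s ^ (k' + 1)) * D ^ 2
      ≤ (7 * s ^ 2 * A) * D ^ 2 := by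
    gcongr
    nlinarith [mul_le_mul_of_nonneg_right hss hA, mul_le_mul_of_nonneg_right hs hA]
  have t6 : s * (c * s * A) ≤ c * s ^ 2 * D ^ 2 * A := by
    calc s * (c * s * A) = c * s ^ 2 * 1 * A := by ring
      _ ≤ _ := by gcongr
  calc |δ| ^ 2 * (|x| * s ^ (k' + 1) * D ^ 2) = (|δ| ^ 2 * |x|) * (s ^ (k' + 1) * D ^ 2) := by ring
    _ ≤ (|δ| * |y| + |z| + |a0| + 2 * s ^ 2 * |a1| + |e|) * (s ^ (k' + 1) * D ^ 2) := by gcongr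
    _ = |δ| * s * (|y| * s ^ k' * D ^ 2) + s * (|z| * s ^ k' * D ^ 2) +
      (|a0| * s ^ k' * s + 2 * (s ^ 2 * (|a1| * s ^ (k' + 1))) + |e| * s ^ (k' + 1)) * D ^ 2 := by
        ring
    _ ≤ _ := by nlinarith

def Far (p : ℕ → ℝ → ℝ → ℝ) (n m : ℕ) (K : ℝ) : Prop :=
  ∀ ξ η : ℝ, 0 < ξ → 0 < η → 1 ≤ ξ + η → Real.sqrt (ξ + η) ≤ 2 * |ξ - η| → ∀ j l, j + l ≤ 2 →
    |I p n 0 j l ξ η| * Real.sqrt (ξ + η) ^ (2 + j + l) *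
      (1 + |Real.sqrt ξ - Real.sqrt η|) ^ (2 * m) ≤ K * (1 + |Real.sqrt ξ - Real.sqrt η|) ^ 4

lemma abs2 {a b x y s A : ℝ} (hs : 0 ≤ s) (h1 : |x| * s ≤ A) (h2 : |y| * s ≤ A) :
    |a * x - b * y| * s ≤ (|a| + |b|) * A := by
  have := abs_sub (a * x) (b * y)
  rw [abs_mul, abs_mul] at this
  calc _ ≤ (|a| * |x| + |b| * |y|) * s := by gcongr
    _ = |a| * (|x| * s) + |b| * (|y| * s) := by ring
    _ ≤ |a| * A + |b| * A := by gcongr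
    _ = _ := by ring

lemma abs3 {a b c x y z s A : ℝ} (hs : 0 ≤ s) (h1 : |x| * s ≤ A) (h2 : |y| * s ≤ A)
    (h3 : |z| * s ≤ A) : |a * x + b * y + c * z| * s ≤ (|a| + |b| + |c|) * A := by
  have := abs_add_le (a * x + b * y) (c * z)
  have := abs_add_le (a * x) (b * y)
  simp only [abs_mul] at *
  calc _ ≤ (|a| * |x| + |b| * |y| + |c| * |z|) * s := by gcongr; linarith
    _ = |a| * (|x| * s) + |b| * (|y| * s) + |c| * (|z| * s) := by ring
    _ ≤ |a| * A + |b| * A + |c| * A := by gcongr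
    _ = _ := by ring

def MM (n : ℕ) : ℝ := |c1 n| + |c2 n| + |e2 n| + |e3 n| + |e4 n|

lemma MM_nonneg (n : ℕ) : 0 ≤ MM n := by unfold MM; positivity

lemma z_aux {x s D A : ℝ} (hs : 0 ≤ s) (h : x * s ^ 2 * D ^ 2 ≤ 48 * A) :
    2 * x * s ^ 3 * D ^ 2 ≤ 96 * s * A := by
  calc _ = 2 * s * (x * s ^ 2 * D ^ 2) := by ring
    _ ≤ 2 * s * (48 * A) := by gcongr
    _ = _ := by ring

set_option maxHeartbeats 1000000 in
lemma far_step (d : Data p q) (b : Bd p q C) {n m : ℕ} (hn : 2 ≤ n) {K : ℝ} (hK : 0 ≤ K)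
    (f1 : Far p (n + 1) m K) (f2 : Far p (n + 2) m K) (f3 : Far p (n + 3) m K)
    (f4 : Far p (n + 4) m K) : Far p n (m + 1) (10000 * (MM n * K)) := by
  have key : ∀ ξ η : ℝ, 0 < ξ → 0 < η → 1 ≤ ξ + η → Real.sqrt (ξ + η) ≤ 2 * |ξ - η| →
      ∃ A s D : ℝ, A = MM n * (K * (1 + |Real.sqrt ξ - Real.sqrt η|) ^ 4 /
        (1 + |Real.sqrt ξ - Real.sqrt η|) ^ (2 * m)) ∧ s = Real.sqrt (ξ + η) ∧
        D = 1 + |Real.sqrt ξ - Real.sqrt η| ∧ 0 ≤ A ∧ 1 ≤ s ∧ s ^ 2 = ξ + η ∧ 1 ≤ D ∧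
        D * s ≤ 4 * |ξ - η| ∧ ∀ j l, j + l ≤ 2 → |KA p n 0 j l ξ η| * s ^ (2 + j + l) ≤ A ∧
        |KE p n 0 j l ξ η| * s ^ (2 + j + l) ≤ A := by
    intro ξ η hξ hη hσ hf
    refine ⟨_, _, _, rfl, rfl, rfl, ?_, ?_, Real.sq_sqrt (by linarith), ?_, δ_ge2 hξ hη hf, ?_⟩
    · have := MM_nonneg n; positivity
    · rw [Real.one_le_sqrt]; exact hσ
    · linarith [abs_nonneg (Real.sqrt ξ - Real.sqrt η)]
    · intro j l hjl
      have g : ∀ k, Far p k m K → |I p k 0 j l ξ η| * Real.sqrt (ξ + η) ^ (2 + j + l) ≤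
          K * (1 + |Real.sqrt ξ - Real.sqrt η|) ^ 4 /
          (1 + |Real.sqrt ξ - Real.sqrt η|) ^ (2 * m) := by
        intro k hk
        rw [le_div_iff₀ (by positivity)]
        exact hk ξ η hξ hη hσ hf j l hjl
      have hs : 0 ≤ Real.sqrt (ξ + η) ^ (2 + j + l) := by positivity
      have hQ : 0 ≤ K * (1 + |Real.sqrt ξ - Real.sqrt η|) ^ 4 /
          (1 + |Real.sqrt ξ - Real.sqrt η|) ^ (2 * m) := by positivity
      constructor
      · refine (abs2 hs (g _ f1) (g _ f2)).trans (mul_le_mul_of_nonneg_right ?_ hQ)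
        unfold MM
        linarith [abs_nonneg (e2 n), abs_nonneg (e3 n), abs_nonneg (e4 n)]
      · refine (abs3 hs (g _ f2) (g _ f3) (g _ f4)).trans (mul_le_mul_of_nonneg_right ?_ hQ)
        unfold MM
        linarith [abs_nonneg (c1 n), abs_nonneg (c2 n)]
  have key2 : ∀ ξ η : ℝ, 0 < ξ → 0 < η → 1 ≤ ξ + η → Real.sqrt (ξ + η) ≤ 2 * |ξ - η| →
      ∃ A s D : ℝ, A = MM n * (K * (1 + |Real.sqrt ξ - Real.sqrt η|) ^ 4 /
        (1 + |Real.sqrt ξ - Real.sqrt η|) ^ (2 * m)) ∧ s = Real.sqrt (ξ + η) ∧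
        D = 1 + |Real.sqrt ξ - Real.sqrt η| ∧ 0 ≤ A ∧ 1 ≤ s ∧ s ^ 2 = ξ + η ∧ 1 ≤ D ∧
        D * s ≤ 4 * |ξ - η| ∧ (∀ j l, j + l ≤ 2 → |KA p n 0 j l ξ η| * s ^ (2 + j + l) ≤ A ∧
        |KE p n 0 j l ξ η| * s ^ (2 + j + l) ≤ A) ∧
        |I p n 0 0 0 ξ η| * s ^ 2 * D ^ 2 ≤ 48 * A ∧
        |I p n 0 1 0 ξ η| * s ^ 3 * D ^ 2 ≤ 496 * A ∧
        |I p n 0 2 0 ξ η| * s ^ 4 * D ^ 2 ≤ 10000 * A := by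
    intro ξ η hξ hη hσ hf
    obtain ⟨A, s, D, eA, es, eD, hA, hs, hss, hD, ht, H⟩ := key ξ η hξ hη hσ hf
    refine ⟨A, s, D, eA, es, eD, hA, hs, hss, hD, ht, H, ?_⟩
    have hs0 : 0 ≤ s := by linarith
    obtain ⟨z1, z2, z3⟩ := HB_zero d (n := n) (by omega : 0 ≤ 2) (by omega : 0 ≤ 2) ξ η
    obtain ⟨z4, z5, z6⟩ := HB_zero d (n := n) (by omega : 1 ≤ 2) (by omega : 0 ≤ 2) ξ η
    obtain ⟨z7, z8, z9⟩ := HB_zero d (n := n) (by omega : 2 ≤ 2) (by omega : 0 ≤ 2) ξ η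
    have i0 := id0 d b hn le_rfl hξ hη
    have i1 := id1 d b hn le_rfl hξ hη
    have i2 := id20 d b hn le_rfl hξ hη
    rw [z1, ← hss] at i0
    rw [z4, z2, z3, ← hss] at i1
    rw [z7, z5, z6, ← hss] at i2
    have H0 : |KA p n 0 0 0 ξ η| * s ^ 2 ≤ A ∧ |KE p n 0 0 0 ξ η| * s ^ 2 ≤ A :=
      H 0 0 (by omega)
    have H1 : |KA p n 0 1 0 ξ η| * s ^ 3 ≤ A ∧ |KE p n 0 1 0 ξ η| * s ^ 3 ≤ A :=
      H 1 0 (by omega)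
    have H2 : |KA p n 0 2 0 ξ η| * s ^ 4 ≤ A ∧ |KE p n 0 2 0 ξ η| * s ^ 4 ≤ A :=
      H 2 0 (by omega)
    have r0 : |I p n 0 0 0 ξ η| * s ^ 2 * D ^ 2 ≤ 48 * A :=
      step_alg hs hD ht hA H0.1 H0.2 (by linarith)
    have r1 : |I p n 0 1 0 ξ η| * s ^ 3 * D ^ 2 ≤ 496 * A := by
      have := step_alg2 (x := I p n 0 1 0 ξ η) (y := 2 * I p n 0 0 0 ξ η) (z := 0)
        (a0 := 2 * KA p n 0 0 0 ξ η) (k := 96) (c := 0) 2 hs hD ht hA (by norm_num) le_rfl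
        ?_ H1.1 H1.2 ?_ ?_ (by linarith)
      · exact this.trans (by linarith)
      · rw [abs_mul, abs_two]; linarith [H0.1]
      · rw [abs_mul, abs_two]; linarith [r0]
      · simp
    refine ⟨r0, r1, ?_⟩
    have := step_alg2 (x := I p n 0 2 0 ξ η) (y := 4 * I p n 0 1 0 ξ η)
        (z := 2 * I p n 0 0 0 ξ η)
        (a0 := 4 * KA p n 0 1 0 ξ η) (k := 1984) (c := 96) 3 hs hD ht hA (by norm_num)
        (by norm_num) ?_ H2.1 H2.2 ?_ ?_ (by linarith)
    · exact this.trans (by linarith)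
    · rw [abs_mul, abs_of_pos (by norm_num : (0:ℝ) < 4)]; linarith [H1.1]
    · rw [abs_mul, abs_of_pos (by norm_num : (0:ℝ) < 4)]; linarith [r1]
    · rw [abs_mul, abs_two]
      exact z_aux hs0 r0
  have key3 : ∀ ξ η : ℝ, 0 < ξ → 0 < η → 1 ≤ ξ + η → Real.sqrt (ξ + η) ≤ 2 * |ξ - η| →
      ∀ j l, j + l ≤ 2 → |I p n 0 j l ξ η| * Real.sqrt (ξ + η) ^ (2 + j + l) *
      (1 + |Real.sqrt ξ - Real.sqrt η|) ^ 2 ≤ 10000 * (MM n *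
        (K * (1 + |Real.sqrt ξ - Real.sqrt η|) ^ 4 /
        (1 + |Real.sqrt ξ - Real.sqrt η|) ^ (2 * m))) := by
    intro ξ η hξ hη hσ hf j l hjl
    obtain ⟨A, s, D, eA, es, eD, hA, hs, hss, hD, ht, H, r0, r1, r2⟩ := key2 ξ η hξ hη hσ hf
    obtain ⟨A', s', D', eA', es', eD', -, -, -, -, -, -, -, r1', r2'⟩ :=
      key2 η ξ hη hξ (by linarith) (by rw [add_comm, abs_sub_comm]; exact hf)
    rw [D_swap] at eA' eD'
    rw [add_comm η ξ] at es'
    rw [← eA, ← es, ← eD]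
    rw [← eA] at eA'
    rw [← es] at es'
    rw [← eD] at eD'
    subst eA' es' eD'
    rw [I_symm] at r1' r2'
    have hs0 : 0 ≤ s' := by linarith
    have hjl' : (j = 0 ∧ l = 0) ∨ (j = 1 ∧ l = 0) ∨ (j = 0 ∧ l = 1) ∨ (j = 2 ∧ l = 0) ∨
      (j = 0 ∧ l = 2) ∨ (j = 1 ∧ l = 1) := by omega
    rcases hjl' with ⟨rfl, rfl⟩ | ⟨rfl, rfl⟩ | ⟨rfl, rfl⟩ | ⟨rfl, rfl⟩ | ⟨rfl, rfl⟩ | ⟨rfl, rfl⟩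
    · exact r0.trans (by linarith)
    · exact r1.trans (by linarith)
    · exact r1'.trans (by linarith)
    · exact r2
    · exact r2'
    · obtain ⟨z1, z2, z3⟩ := HB_zero d (n := n) (by omega : 1 ≤ 2) (by omega : 1 ≤ 2) ξ η
      obtain ⟨z4, z5, z6⟩ := HB_zero d (n := n) (by omega : 1 ≤ 2) (by omega : 0 ≤ 2) ξ η
      obtain ⟨z7, z8, z9⟩ := HB_zero d (n := n) (by omega : 0 ≤ 2) (by omega : 1 ≤ 2) ξ η
      have i2 := id11 d b hn le_rfl hξ hη
      rw [z1, z5, z6, z8, z9, ← hss] at i2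
      have H2 : |KA p n 0 1 1 ξ η| * s' ^ 4 ≤ A' ∧ |KE p n 0 1 1 ξ η| * s' ^ 4 ≤ A' :=
        H 1 1 (by omega)
      have H3 : |KA p n 0 1 0 ξ η| * s' ^ 3 ≤ A' ∧ |KE p n 0 1 0 ξ η| * s' ^ 3 ≤ A' :=
        H 1 0 (by omega)
      have H4 : |KA p n 0 0 1 ξ η| * s' ^ 3 ≤ A' ∧ |KE p n 0 0 1 ξ η| * s' ^ 3 ≤ A' :=
        H 0 1 (by omega)
      have := step_alg2 (x := I p n 0 1 1 ξ η)
        (y := (-2) * I p n 0 1 0 ξ η - (-2) * I p n 0 0 1 ξ η)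
        (z := -2 * I p n 0 0 0 ξ η)
        (a0 := 2 * KA p n 0 1 0 ξ η - (-2) * KA p n 0 0 1 ξ η) (k := 1984) (c := 96) 3
        hs hD ht hA (by norm_num)
        (by norm_num) ?_ H2.1 H2.2 ?_ ?_ (by linarith)
      · exact this.trans (by linarith)
      · have := abs2 (a := 2) (b := -2) (by positivity) H3.1 H4.1
        rw [abs_neg, abs_two] at this
        exact this.trans (by linarith)
      · rw [mul_assoc] at r1 r1' ⊢
        have := abs2 (a := -2) (b := -2) (by positivity) r1 r1'
        rw [abs_neg, abs_two] at this
        exact this.trans (by linarith)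
      · rw [abs_mul, abs_neg, abs_two]
        exact z_aux hs0 r0
  intro ξ η hξ hη hσ hf j l hjl
  have h := key3 ξ η hξ hη hσ hf j l hjl
  have hD : 0 < (1 + |Real.sqrt ξ - Real.sqrt η|) ^ (2 * m) := by positivity
  rw [← mul_div_assoc, ← mul_div_assoc, le_div_iff₀ hD] at h
  calc _ = _ := by rw [mul_add, pow_add]; ring
    _ ≤ _ := h
    _ = _ := by ring

lemma far_all (d : Data p q) (b : Bd p q C) (m : ℕ) : ∀ n, 3 ≤ n → ∃ K, 0 ≤ K ∧ Far p n m K := by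
  have mono : ∀ {n m K K'}, K ≤ K' → Far p n m K → Far p n m K' := by
    intro n m K K' h f ξ η a b' c e j l hjl
    exact (f ξ η a b' c e j l hjl).trans (by gcongr)
  induction m with
  | zero =>
    intro n hn
    refine ⟨16 * 6 ^ n * C ^ 2, by positivity, fun ξ η hξ hη _ _ j l hjl => ?_⟩
    simpa using far_base d b hjl hn hξ hη
  | succ m ih =>
    intro n hn
    obtain ⟨K1, h1, g1⟩ := ih (n + 1) (by omega)
    obtain ⟨K2, h2, g2⟩ := ih (n + 2) (by omega)
    obtain ⟨K3, h3, g3⟩ := ih (n + 3) (by omega)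
    obtain ⟨K4, h4, g4⟩ := ih (n + 4) (by omega)
    have := MM_nonneg n
    exact ⟨10000 * (MM n * (K1 + K2 + K3 + K4)), by positivity,
      far_step d b (by omega) (by positivity) (mono (by linarith) g1) (mono (by linarith) g2)
      (mono (by linarith) g3) (mono (by linarith) g4)⟩

lemma far_all2 (d : Data p q) (b : Bd p q C) (m n : ℕ) (hn : 2 ≤ n) :
    ∃ K, 0 ≤ K ∧ Far p n (m + 1) K := by
  have mono : ∀ {n m K K'}, K ≤ K' → Far p n m K → Far p n m K' := by
    intro n m K K' h f ξ η a b' c e j l hjl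
    exact (f ξ η a b' c e j l hjl).trans (by gcongr)
  obtain ⟨K1, h1, g1⟩ := far_all d b m (n + 1) (by omega)
  obtain ⟨K2, h2, g2⟩ := far_all d b m (n + 2) (by omega)
  obtain ⟨K3, h3, g3⟩ := far_all d b m (n + 3) (by omega)
  obtain ⟨K4, h4, g4⟩ := far_all d b m (n + 4) (by omega)
  have := MM_nonneg n
  exact ⟨10000 * (MM n * (K1 + K2 + K3 + K4)), by positivity,
    far_step d b (by omega) (by positivity) (mono (by linarith) g1) (mono (by linarith) g2)
    (mono (by linarith) g3) (mono (by linarith) g4)⟩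

lemma high (d : Data p q) (b : Bd p q C) (N n : ℕ) (hn : 2 ≤ n) : ∃ K, 0 ≤ K ∧
    ∀ ξ η : ℝ, 0 < ξ → 0 < η → 1 ≤ ξ + η → ∀ j l, j + l ≤ 2 →
    |I p n 0 j l ξ η| * (Real.sqrt (ξ + η) ^ (2 + j + l) *
      (1 + |Real.sqrt ξ - Real.sqrt η|) ^ N) ≤ K := by
  obtain ⟨K, hK, f⟩ := far_all2 d b (N + 1) n hn
  refine ⟨16 * 6 ^ n * C ^ 2 * 2 ^ N + K, by positivity, fun ξ η hξ hη hσ j l hjl => ?_⟩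
  rcases le_total (2 * |ξ - η|) (Real.sqrt (ξ + η)) with h | h
  · obtain ⟨h1, h2⟩ := near d b hjl hn hξ hη hσ h
    rw [← mul_assoc]
    calc _ ≤ 16 * 6 ^ n * C ^ 2 * 2 ^ N := by gcongr
      _ ≤ _ := by linarith
  · have h1 := f ξ η hξ hη hσ h j l hjl
    have hD1 : 1 ≤ 1 + |Real.sqrt ξ - Real.sqrt η| := by
      linarith [abs_nonneg (Real.sqrt ξ - Real.sqrt η)]
    set D := 1 + |Real.sqrt ξ - Real.sqrt η|
    have h2 : |I p n 0 j l ξ η| * Real.sqrt (ξ + η) ^ (2 + j + l) * D ^ N * D ^ 4 ≤ K * D ^ 4 := by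
      refine le_trans ?_ h1
      rw [mul_assoc _ (D ^ N), ← pow_add]
      gcongr
      omega
    have h3 := le_of_mul_le_mul_right h2 (by positivity)
    rw [← mul_assoc]
    exact h3.trans (by nlinarith [show 0 ≤ 16 * 6 ^ n * C ^ 2 * 2 ^ N by positivity])
end

section
variable {p q : ℕ → ℝ → ℝ → ℝ} {C : ℝ}

lemma Bd.crude' (b : Bd p q C) {j : ℕ} (hj : j ≤ 2) {ξ R : ℝ} (hξ : 0 ≤ ξ) (hR : 0 ≤ R) :
    |p j ξ R| ≤ C * (1 + R) ^ (2 * j) := by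
  have h2 : 1 ≤ Real.sqrt (1 + ξ) := by rw [Real.one_le_sqrt]; linarith
  refine le_trans ?_ (b.crude j hj ξ R hξ hR)
  exact le_mul_of_one_le_right (abs_nonneg _) (one_le_pow₀ h2)

lemma Bd.crude2 (b : Bd p q C) {j l : ℕ} (hj : j ≤ 2) (hl : l ≤ 2) {ξ η R : ℝ} (hξ : 0 ≤ ξ)
    (hη : 0 ≤ η) (hR : 0 ≤ R) :
    |p j ξ R| * |p l η R| ≤ C ^ 2 * (1 + R) ^ (2 * j + 2 * l) := by
  have h1 := b.crude' hj hξ hR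
  have h2 := b.crude' hl hη hR
  have hC := b.one_le
  calc _ ≤ (C * (1 + R) ^ (2 * j)) * (C * (1 + R) ^ (2 * l)) := by gcongr
    _ = _ := by ring

lemma low_crude (d : Data p q) (b : Bd p q C) {n j l e : ℕ} (hj : j ≤ 2) (hl : l ≤ 2)
    (hn : 2 * j + 2 * l + 2 + e ≤ 2 * n) {ξ η r : ℝ} (hξ : 0 ≤ ξ) (hη : 0 ≤ η) (hr : 0 ≤ r) :
    |I p n r j l ξ η| * (1 + r) ^ (e + 1) ≤ 6 ^ n * C ^ 2 := by
  have := I_bound d (n := n) (j := j) (l := l) (m := 2 * j + 2 * l) (e := e) (ξ := ξ) (η := η)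
    (r := r) (W := 1) (A := C ^ 2) hj hl hr one_pos (by positivity) hn (fun R hR => by
      rw [mul_one]; exact b.crude2 hj hl hξ hη (hr.trans hR.le))
  rwa [mul_one] at this

lemma p_lip (d : Data p q) (b : Bd p q C) {ξ R : ℝ} (hξ : 0 ≤ ξ) (hR : 0 ≤ R) :
    |p 0 ξ R - p 0 0 R| ≤ C * (1 + R) ^ 2 * ξ := by
  have := Convex.norm_image_sub_le_of_norm_hasDerivWithin_le (𝕜 := ℝ) (s := Set.Ici (0:ℝ))
    (f := fun ξ => p 0 ξ R) (f' := fun ξ => p 1 ξ R) (C := C * (1 + R) ^ 2) (x := 0) (y := ξ)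
    (fun x _ => (d.dp 0 (by norm_num) x R).hasDerivWithinAt)
    (fun x hx => b.crude' (by norm_num : 1 ≤ 2) hx hR) (convex_Ici 0) (by simp) hξ
  simp only [Real.norm_eq_abs, sub_zero, abs_of_nonneg hξ] at this
  exact this

lemma I_int0 (d : Data p q) (b : Bd p q C) {n : ℕ} (hn : 2 ≤ n) {ξ η : ℝ} (hξ : 0 ≤ ξ)
    (hη : 0 ≤ η) : IntegrableOn (fun R => w R ^ n * p 0 ξ R * p 0 η R) (Set.Ioi 0) := by
  refine (dom_int (A := 6 ^ n * C ^ 2) le_rfl (d.cint (by omega) (by omega) n ξ η)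
    (fun R hR => ?_)).1
  have := pt_dom (n := n) (m := 0) (e := 0) (a := p 0 ξ R) (b := p 0 η R) (B := 0)
    (A := C ^ 2) hR.le (by positivity) (by
      rw [abs_mul]; exact b.crude2 (by omega) (by omega) hξ hη hR.le) (by omega)
      (by linarith) le_rfl
  simpa using this

lemma I_lip (d : Data p q) (b : Bd p q C) {n : ℕ} (hn : 2 ≤ n) {ξ η : ℝ} (hξ : 0 ≤ ξ)
    (hη : 0 ≤ η) : |I p n 0 0 0 ξ η - I p n 0 0 0 0 0| ≤ 6 ^ n * C ^ 2 * (ξ + η) := by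
  unfold I
  rw [← integral_sub (I_int0 d b hn hξ hη) (I_int0 d b hn le_rfl le_rfl)]
  have hC := b.one_le
  have := (dom_int (g := fun R => w R ^ n * p 0 ξ R * p 0 η R - w R ^ n * p 0 0 R * p 0 0 R)
    (A := 6 ^ n * (C ^ 2 * (ξ + η))) le_rfl
    ((d.cint (by omega) (by omega) n ξ η).sub (d.cint (by omega) (by omega) n 0 0))
    (fun R hR => ?_)).2
  · refine this.trans (le_of_eq ?_); simp; ring
  · have := pt_dom (n := n) (m := 2) (e := 0) (a := p 0 ξ R * p 0 η R - p 0 0 R * p 0 0 R)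
      (b := 1) (B := 0) (A := C ^ 2 * (ξ + η)) hR.le (by positivity) ?_ (by omega)
      (by linarith) le_rfl
    · refine le_trans (le_of_eq ?_) this
      rw [pow_zero, mul_one, mul_one]; congr 1; ring
    · have h1 := p_lip d b hξ hR.le
      have h2 := p_lip d b hη hR.le
      have h3 : |p 0 η R| ≤ C := by simpa using b.crude' (by omega : 0 ≤ 2) hη hR.le
      have h4 : |p 0 0 R| ≤ C := by simpa using b.crude' (by omega : 0 ≤ 2) le_rfl hR.le
      calc _ = |(p 0 ξ R - p 0 0 R) * p 0 η R + p 0 0 R * (p 0 η R - p 0 0 R)| := by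
            congr 1; ring
        _ ≤ |p 0 ξ R - p 0 0 R| * |p 0 η R| + |p 0 0 R| * |p 0 η R - p 0 0 R| := by
            rw [← abs_mul, ← abs_mul]; exact abs_add_le _ _
        _ ≤ (C * (1 + R) ^ 2 * ξ) * C + C * (C * (1 + R) ^ 2 * η) := by
            have : 0 < R := hR
            gcongr
        _ = _ := by ring

lemma zero_energy (d : Data p q) (b : Bd p q C) :
    20 * I p 3 0 0 0 0 0 - 10 * I p 2 0 0 0 0 0 = 0 := by
  have i3 := (I_int0 d b (by norm_num : 2 ≤ 3) le_rfl le_rfl).const_mul 20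
  have i2 := (I_int0 d b (le_refl 2) le_rfl le_rfl).const_mul 10
  have hd : ∀ R ∈ Set.Ici (0:ℝ), HasDerivAt
      (fun R => q 0 0 R * (R * q 0 0 R) - q 0 0 R * p 0 0 R + (R * V R) * (p 0 0 R * p 0 0 R))
      (20 * (w R ^ 3 * p 0 0 R * p 0 0 R) - 10 * (w R ^ 2 * p 0 0 R * p 0 0 R)) R := by
    intro R _
    have x := (d.s0 0).1 R
    have y := (d.s0 0).2 R
    refine (((y.mul ((hasDerivAt_id R).mul y)).sub (y.mul x)).add
      (((hasDerivAt_id R).mul (V_deriv R)).mul (x.mul x))).congr_deriv ?_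
    simp only [Pi.mul_apply, id, V]
    have e := w_mul R
    linear_combination (-20) * w R ^ 2 * p 0 0 R ^ 2 * e
  have hq : Tendsto (fun R => q 0 0 R) atTop (𝓝 0) := by
    have h : Tendsto (fun R : ℝ => C * R⁻¹) atTop (𝓝 0) := by
      simpa using tendsto_inv_atTop_zero.const_mul C
    refine squeeze_zero_norm' ?_ h
    filter_upwards [eventually_ge_atTop 1] with R hR
    have := b.qb 0 (by norm_num) 0 R le_rfl hR (by simp)
    rw [Real.norm_eq_abs, ← div_eq_mul_inv, le_div_iff₀ (by linarith)]
    simpa using this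
  have hqR : ∀ᶠ R in atTop, |R * q 0 0 R| ≤ C := by
    filter_upwards [eventually_ge_atTop 1] with R hR
    have := b.qb 0 (by norm_num) 0 R le_rfl hR (by simp)
    rw [abs_mul, abs_of_nonneg (by linarith : 0 ≤ R), mul_comm]
    simpa using this
  have hp : ∀ᶠ R in atTop, |p 0 0 R| ≤ C := by
    filter_upwards [eventually_ge_atTop 1] with R hR
    simpa using b.crude' (by omega : 0 ≤ 2) le_rfl (by linarith : 0 ≤ R)
  have hpp : ∀ᶠ R in atTop, |p 0 0 R * p 0 0 R| ≤ C * C := by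
    filter_upwards [hp] with R hR
    rw [abs_mul]; have := b.one_le; gcongr
  have hV : Tendsto (fun R => R * V R) atTop (𝓝 0) := by
    have h5 : Tendsto (fun R => 5 * w R) atTop (𝓝 0) := by
      simpa using w_tendsto.const_mul 5
    refine (zb h5 1 (g := fun R => R * w R) ?_).congr fun R => by unfold V; ring
    filter_upwards [eventually_ge_atTop 0] with R hR using Rw_le R hR
  have ht := ((zb hq C hqR).sub (zb hq C hp)).add (zb hV (C * C) hpp)
  simp only [sub_zero, add_zero] at ht
  have H := integral_Ioi_of_hasDerivAt_of_tendsto' hd (i3.sub i2) ht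
  have e := integral_sub i3 i2
  simp only [integral_const_mul] at e
  unfold I
  rw [← e, H]
  simp [d.i0]

lemma low0 (d : Data p q) (b : Bd p q C) {ξ η : ℝ} (hξ : 0 < ξ) (hη : 0 < η) :
    |20 * I p 3 0 0 0 ξ η - 10 * I p 2 0 0 0 ξ η| ≤ 5000 * C ^ 2 * (ξ + η) := by
  have h1 := I_lip d b (by norm_num : 2 ≤ 3) hξ.le hη.le
  have h2 := I_lip d b (le_refl 2) hξ.le hη.le
  have h3 := zero_energy d b
  have e : 20 * I p 3 0 0 0 ξ η - 10 * I p 2 0 0 0 ξ η =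
    20 * (I p 3 0 0 0 ξ η - I p 3 0 0 0 0 0) - 10 * (I p 2 0 0 0 ξ η - I p 2 0 0 0 0 0) := by
    linarith
  rw [abs_le] at h1 h2
  have : 0 ≤ C ^ 2 * (ξ + η) := by positivity
  rw [e, abs_le]
  constructor <;> nlinarith

lemma bd_add {a b s A B : ℝ} (hs : 0 ≤ s) (h1 : |a| * s ≤ A) (h2 : |b| * s ≤ B) :
    |a + b| * s ≤ A + B := by
  nlinarith [mul_le_mul_of_nonneg_right (abs_add_le a b) hs]

lemma bd_sub {a b s A B : ℝ} (hs : 0 ≤ s) (h1 : |a| * s ≤ A) (h2 : |b| * s ≤ B) :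
    |a - b| * s ≤ A + B := by
  nlinarith [mul_le_mul_of_nonneg_right (abs_sub a b) hs]

lemma bd_neg {a s A : ℝ} (h1 : |a| * s ≤ A) : |-a| * s ≤ A := by rwa [abs_neg]

lemma bd_mul {c k a s A : ℝ} (hs : 0 ≤ s) (hc : |c| ≤ k) (h1 : |a| * s ≤ A) :
    |c * a| * s ≤ k * A := by
  rw [abs_mul, mul_assoc]
  exact mul_le_mul hc h1 (by positivity) ((abs_nonneg c).trans hc)

lemma bd_mul2 {x y s t A B : ℝ} (hs : 0 ≤ s) (ht : 0 ≤ t) (h1 : |x| * s ≤ A) (h2 : |y| * t ≤ B) :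
    |x * y| * (s * t) ≤ A * B := by
  rw [abs_mul]
  calc |x| * |y| * (s * t) = (|x| * s) * (|y| * t) := by ring
    _ ≤ _ := mul_le_mul h1 h2 (by positivity) (le_trans (by positivity) h1)

lemma coef {s r : ℝ} (hs : 0 < s) (hs1 : s ≤ 1) (hrs : r * s = 1) :
    w r ^ 2 ≤ 9 * s ^ 4 ∧ |B1 2 r| ≤ 36 * s ^ 5 ∧ |B2 2 r| ≤ 828 * s ^ 6 ∧
      |B3 2 r| ≤ 6264 * s ^ 7 ∧ V r ≤ 45 * s ^ 4 := by
  have hr : 0 < r := by by_contra h; push Not at h; nlinarith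
  have hw := w_pos r
  have h1 : w r ≤ 3 * s ^ 2 := by
    have e := w_mul r
    have : w r * r ^ 2 * s ^ 2 = w r := by
      calc _ = w r * (r * s) ^ 2 := by ring
        _ = _ := by rw [hrs]; ring
    have h3 : w r * r ^ 2 ≤ 3 := by nlinarith
    calc w r = w r * r ^ 2 * s ^ 2 := this.symm
      _ ≤ _ := by gcongr
  have h2 : |r * w r| ≤ 3 * s := by
    rw [abs_of_pos (by positivity)]
    calc r * w r ≤ r * (3 * s ^ 2) := by gcongr
      _ = 3 * s * (r * s) := by ring
      _ = _ := by rw [hrs, mul_one]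
  have hpow : ∀ k, w r ^ k ≤ 3 ^ k * s ^ (2 * k) := fun k => by
    rw [pow_mul, ← mul_pow]; exact pow_le_pow_left₀ hw.le h1 k
  have hB1 : ∀ k : ℕ, |B1 k r| ≤ (2 * k / 3) * (3 * s) * (3 ^ k * s ^ (2 * k)) := by
    intro k
    unfold B1
    rw [abs_mul, abs_mul, abs_neg, abs_of_nonneg (by positivity : (0:ℝ) ≤ 2 * k / 3),
      abs_of_pos (pow_pos hw k)]
    have := hpow k
    gcongr
  have p2 := hpow 2
  have p3 := hpow 3
  have p4 := hpow 4
  have q2 := hB1 2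
  have q3 := hB1 3
  have q4 := hB1 4
  have s8 : s ^ 8 ≤ s ^ 6 := pow_le_pow_of_le_one hs.le hs1 (by norm_num)
  have s9 : s ^ 9 ≤ s ^ 7 := pow_le_pow_of_le_one hs.le hs1 (by norm_num)
  norm_num at p2 p3 p4 q2 q3 q4
  refine ⟨by linarith, by linarith, ?_, ?_, ?_⟩
  · have : |B2 2 r| ≤ 20 / 3 * w r ^ 3 + 8 * w r ^ 4 := by
      unfold B2 c1 c2
      refine (abs_sub _ _).trans (le_of_eq ?_)
      rw [abs_mul, abs_mul, abs_of_pos (pow_pos hw _), abs_of_pos (pow_pos hw _)]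
      norm_num [abs_of_pos]
    linarith
  · have : |B3 2 r| ≤ 20 / 3 * |B1 3 r| + 8 * |B1 4 r| := by
      unfold B3 c1 c2
      refine (abs_sub _ _).trans (le_of_eq ?_)
      rw [abs_mul, abs_mul]
      norm_num [abs_of_pos]
    have e1 : s * s ^ 6 = s ^ 7 := by ring
    have e2 : s * s ^ 8 = s ^ 9 := by ring
    have : |B1 3 r| ≤ 162 * s ^ 7 := by linarith
    have : |B1 4 r| ≤ 648 * s ^ 9 := by linarith
    linarith
  · unfold V; linarith

lemma bdry (b : Bd p q C) {s r : ℝ} (hs : 0 < s) (hs1 : s ≤ 1) (hrs : r * s = 1) {ξ η : ℝ}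
    (hξ : 0 < ξ) (hη : 0 < η) (hσ : s ^ 2 = ξ + η) {j l : ℕ} (hj : j ≤ 2) (hl : l ≤ 2) :
    |HB p q 2 j l ξ η r| * s ^ (2 * (j + l)) ≤ 12000 * (16 * C) ^ 2 * s ^ 7 ∧
    |HX p q 2 j l ξ η r| * s ^ (2 * (j + l)) ≤ 12000 * (16 * C) ^ 2 * s ^ 5 ∧
    |HY p 2 j l ξ η r| * s ^ (2 * (j + l)) ≤ 12000 * (16 * C) ^ 2 * s ^ 5 := by
  obtain ⟨k1, k2, k3, k4, k5⟩ := coef hs hs1 hrs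
  have hC := b.one_le
  have hr1 : 1 ≤ r := by nlinarith
  have hQ : 0 < 16 * C := by linarith
  have hp : ∀ j ≤ 2, ∀ ζ, 0 < ζ → |p j ζ r| * s ^ (2 * j) ≤ 16 * C := by
    intro j hj ζ hζ
    have h := b.crude' hj hζ.le (by linarith : 0 ≤ r)
    calc |p j ζ r| * s ^ (2 * j) ≤ (C * (1 + r) ^ (2 * j)) * s ^ (2 * j) := by gcongr
      _ ≤ (C * (2 * r) ^ (2 * j)) * s ^ (2 * j) := by gcongr; linarith
      _ = C * 2 ^ (2 * j) * (r * s) ^ (2 * j) := by rw [mul_pow, mul_pow]; ring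
      _ = C * 2 ^ (2 * j) := by rw [hrs]; simp
      _ ≤ C * 2 ^ 4 := by gcongr; norm_num; omega
      _ = _ := by ring
  have hq : ∀ j ≤ 2, ∀ ζ, 0 < ζ → ζ ≤ s ^ 2 → |q j ζ r| * s ^ (2 * j) ≤ 16 * C * s := by
    intro j hj ζ hζ hζs
    have hz : ζ * r ^ 2 ≤ 1 := by
      calc ζ * r ^ 2 ≤ s ^ 2 * r ^ 2 := by gcongr
        _ = (r * s) ^ 2 := by ring
        _ = 1 := by rw [hrs]; simp
    have h := b.qb j hj ζ r hζ.le hr1 hz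
    calc |q j ζ r| * s ^ (2 * j) = |q j ζ r| * s ^ (2 * j) * (r * s) := by rw [hrs, mul_one]
      _ = (|q j ζ r| * r) * s ^ (2 * j) * s := by ring
      _ ≤ (C * r ^ (2 * j)) * s ^ (2 * j) * s := by gcongr
      _ = C * (r * s) ^ (2 * j) * s := by rw [mul_pow]; ring
      _ = C * s := by rw [hrs]; simp
      _ ≤ _ := by gcongr; linarith
  have hsj : 0 ≤ s ^ (2 * j) := by positivity
  have hsl : 0 ≤ s ^ (2 * l) := by positivity
  have es : s ^ (2 * (j + l)) = s ^ (2 * j) * s ^ (2 * l) := by rw [mul_add, pow_add]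
  have pp := bd_mul2 hsj hsl (hp j hj ξ hξ) (hp l hl η hη)
  have qp := bd_mul2 hsj hsl (hq j hj ξ hξ (by linarith)) (hp l hl η hη)
  have pq := bd_mul2 hsj hsl (hp j hj ξ hξ) (hq l hl η hη (by linarith))
  have qq := bd_mul2 hsj hsl (hq j hj ξ hξ (by linarith)) (hq l hl η hη (by linarith))
  rw [← es] at pp qp pq qq
  have hS : 0 ≤ s ^ (2 * (j + l)) := by positivity
  have hw2 : |w r ^ 2| ≤ 9 * s ^ 4 := by rw [abs_of_pos (pow_pos (w_pos r) 2)]; exact k1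
  have X := bd_mul hS hw2 (bd_sub hS qp pq)
  have Y := bd_mul hS k2 pp
  refine ⟨?_, ?_, ?_⟩
  · have hδ : |-(ξ - η)| ≤ s ^ 2 := by rw [hσ, abs_le]; constructor <;> linarith
    have h21 : |2 * B1 2 r| ≤ 72 * s ^ 5 := by rw [abs_mul, abs_two]; linarith
    have hV := V_nonneg r
    have s4 : s ^ 4 ≤ s ^ 2 := pow_le_pow_of_le_one hs.le hs1 (by norm_num)
    have h4 : |B3 2 r + B1 2 r * (ξ + η + 2 * V r)| ≤ 9540 * s ^ 7 := by
      refine (abs_add_le _ _).trans ?_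
      rw [abs_mul, abs_of_nonneg (by linarith : 0 ≤ ξ + η + 2 * V r)]
      have : |B1 2 r| * (ξ + η + 2 * V r) ≤ (36 * s ^ 5) * (91 * s ^ 2) := by
        gcongr; linarith
      calc _ ≤ 6264 * s ^ 7 + (36 * s ^ 5) * (91 * s ^ 2) := add_le_add k4 this
        _ = _ := by ring
    have T := bd_add hS (bd_sub hS (bd_add hS (bd_mul hS hδ X) (bd_mul hS h21 qq))
      (bd_mul hS k3 (bd_add hS qp pq))) (bd_mul hS h4 pp)
    have e : HB p q 2 j l ξ η r = -(ξ - η) * (w r ^ 2 * (q j ξ r * p l η r - p j ξ r * q l η r))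
      + 2 * B1 2 r * (q j ξ r * q l η r) - B2 2 r * (q j ξ r * p l η r + p j ξ r * q l η r)
      + (B3 2 r + B1 2 r * (ξ + η + 2 * V r)) * (p j ξ r * p l η r) := by
      unfold HB; ring
    rw [e]
    refine T.trans ?_
    have : 0 ≤ (16 * C) ^ 2 * s ^ 7 := by positivity
    calc _ = 11286 * ((16 * C) ^ 2 * s ^ 7) := by ring
      _ ≤ _ := by linarith
  · refine le_trans X ?_
    have : 0 ≤ (16 * C) ^ 2 * s ^ 5 := by positivity
    calc _ = 18 * ((16 * C) ^ 2 * s ^ 5) := by ring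
      _ ≤ _ := by linarith
  · refine le_trans Y ?_
    have : 0 ≤ (16 * C) ^ 2 * s ^ 5 := by positivity
    calc _ = 36 * ((16 * C) ^ 2 * s ^ 5) := by ring
      _ ≤ _ := by linarith
end

section
variable {p q : ℕ → ℝ → ℝ → ℝ} {C : ℝ}

lemma I_tail (d : Data p q) (b : Bd p q C) {s r : ℝ} (hs : 0 < s) (hrs : r * s = 1) {ξ η : ℝ}
    (hξ : 0 < ξ) (hη : 0 < η) {k j l f : ℕ} (hjl : j + l ≤ 2) (hk : k = j + l + 1 + f)
    (hk6 : k ≤ 6) : |I p k r j l ξ η| ≤ 6 ^ 6 * C ^ 2 * s ^ (2 * f + 1) := by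
  have hr : 0 < r := by by_contra h; push Not at h; nlinarith
  have h := low_crude d b (n := k) (j := j) (l := l) (e := 2 * f) (by omega) (by omega)
    (by omega) hξ.le hη.le hr.le
  have hC := b.one_le
  calc |I p k r j l ξ η| = |I p k r j l ξ η| * (r * s) ^ (2 * f + 1) := by rw [hrs]; simp
    _ = |I p k r j l ξ η| * r ^ (2 * f + 1) * s ^ (2 * f + 1) := by rw [mul_pow]; ring
    _ ≤ |I p k r j l ξ η| * (1 + r) ^ (2 * f + 1) * s ^ (2 * f + 1) := by gcongr; linarith
    _ ≤ (6 ^ k * C ^ 2) * s ^ (2 * f + 1) := by gcongr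
    _ ≤ _ := by gcongr; norm_num

lemma ab_mul {c k a A : ℝ} (hc : |c| ≤ k) (h1 : |a| ≤ A) : |c * a| ≤ k * A := by
  rw [abs_mul]
  exact mul_le_mul hc h1 (by positivity) ((abs_nonneg c).trans hc)

lemma ab_add {a b A B : ℝ} (h1 : |a| ≤ A) (h2 : |b| ≤ B) : |a + b| ≤ A + B :=
  (abs_add_le _ _).trans (add_le_add h1 h2)

lemma ab_sub {a b A B : ℝ} (h1 : |a| ≤ A) (h2 : |b| ≤ B) : |a - b| ≤ A + B :=
  (abs_sub _ _).trans (add_le_add h1 h2)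

lemma ab_neg {a A : ℝ} (h1 : |a| ≤ A) : |-a| ≤ A := by rwa [abs_neg]

def KT (C : ℝ) : ℝ := 6 * (6 ^ 6 * C ^ 2) + 5 * (12000 * (16 * C) ^ 2) + 7 * (MM 2 * (6 ^ 6 * C ^ 2))

lemma fin_alg {s δ x K : ℝ} (hs : 0 < s) (hδ : s ^ 2 ≤ 2 * |δ|) (h : |δ ^ 2 * x| ≤ K * s ^ 3) :
    |x| * s ≤ 4 * K := by
  have h1 : (s ^ 2) ^ 2 ≤ (2 * |δ|) ^ 2 := pow_le_pow_left₀ (by positivity) hδ 2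
  have h2 : s ^ 4 ≤ 4 * δ ^ 2 := by rw [mul_pow, sq_abs] at h1; linarith [show (s^2)^2 = s^4 by ring]
  rw [abs_mul, abs_of_nonneg (sq_nonneg δ)] at h
  have h3 : s ^ 3 * (|x| * s) ≤ s ^ 3 * (4 * K) := by
    calc s ^ 3 * (|x| * s) = s ^ 4 * |x| := by ring
      _ ≤ (4 * δ ^ 2) * |x| := by gcongr
      _ = 4 * (δ ^ 2 * |x|) := by ring
      _ ≤ 4 * (K * s ^ 3) := by gcongr
      _ = _ := by ring
  exact le_of_mul_le_mul_left h3 (by positivity)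

set_option maxHeartbeats 1000000 in
lemma low_far (d : Data p q) (b : Bd p q C) {s r : ℝ} (hs : 0 < s) (hs1 : s ≤ 1)
    (hrs : r * s = 1) {ξ η : ℝ} (hξ : 0 < ξ) (hη : 0 < η) (hσ : s ^ 2 = ξ + η)
    (hδ : s ^ 2 ≤ 2 * |ξ - η|) :
    |I p 2 r 2 0 ξ η| * s ≤ 4 * KT C ∧ |I p 2 r 1 1 ξ η| * s ≤ 4 * KT C := by
  have hr : 0 < r := by by_contra h; push Not at h; nlinarith
  have hC := b.one_le
  have T := fun {k j l f : ℕ} => I_tail d b hs hrs hξ hη (k := k) (j := j) (l := l) (f := f)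
  have hM : 0 ≤ 6 ^ 6 * C ^ 2 := by positivity
  unfold KT
  generalize hMM : 6 ^ 6 * C ^ 2 = M at *
  have T3 : ∀ {k j l : ℕ}, j + l ≤ 2 → j + l + 2 ≤ k → k ≤ 6 → |I p k r j l ξ η| ≤ M * s ^ 3 := by
    intro k j l h1 h2 h3
    obtain ⟨f, rfl⟩ := Nat.exists_eq_add_of_le h2
    refine (T h1 (by omega : j + l + 2 + f = j + l + 1 + (f + 1)) h3).trans ?_
    exact mul_le_mul_of_nonneg_left (pow_le_pow_of_le_one hs.le hs1 (by omega)) hM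
  have T1 : ∀ {k j l : ℕ}, j + l ≤ 2 → j + l + 1 ≤ k → k ≤ 6 → |I p k r j l ξ η| ≤ M * s := by
    intro k j l h1 h2 h3
    obtain ⟨f, rfl⟩ := Nat.exists_eq_add_of_le h2
    refine (T h1 rfl h3).trans ?_
    refine mul_le_mul_of_nonneg_left ?_ hM
    calc s ^ (2 * f + 1) ≤ s ^ 1 := pow_le_pow_of_le_one hs.le hs1 (by omega)
      _ = s := pow_one s
  have KA3 : ∀ {j l : ℕ}, j + l ≤ 1 → |KA p 2 r j l ξ η| ≤ MM 2 * (M * s ^ 3) := by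
    intro j l h
    have := abs2 (a := c1 2) (b := c2 2) (s := 1) zero_le_one
      ((mul_one _).trans_le (T3 (k := 2 + 1) (by omega : j + l ≤ 2) (by omega) (by omega)))
      ((mul_one _).trans_le (T3 (k := 2 + 2) (by omega : j + l ≤ 2) (by omega) (by omega)))
    rw [mul_one] at this
    refine this.trans (mul_le_mul_of_nonneg_right ?_ (by positivity))
    unfold MM
    linarith [abs_nonneg (e2 2), abs_nonneg (e3 2), abs_nonneg (e4 2)]
  have KA1 : ∀ {j l : ℕ}, j + l ≤ 2 → |KA p 2 r j l ξ η| ≤ MM 2 * (M * s) := by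
    intro j l h
    have := abs2 (a := c1 2) (b := c2 2) (s := 1) zero_le_one
      ((mul_one _).trans_le (T1 (k := 2 + 1) (by omega : j + l ≤ 2) (by omega) (by omega)))
      ((mul_one _).trans_le (T1 (k := 2 + 2) (by omega : j + l ≤ 2) (by omega) (by omega)))
    rw [mul_one] at this
    refine this.trans (mul_le_mul_of_nonneg_right ?_ (by positivity))
    unfold MM
    linarith [abs_nonneg (e2 2), abs_nonneg (e3 2), abs_nonneg (e4 2)]
  have KE3 : ∀ {j l : ℕ}, j + l ≤ 2 → |KE p 2 r j l ξ η| ≤ MM 2 * (M * s ^ 3) := by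
    intro j l h
    have := abs3 (a := e2 2) (b := e3 2) (c := e4 2) (s := 1) zero_le_one
      ((mul_one _).trans_le (T3 (k := 2 + 2) (by omega : j + l ≤ 2) (by omega) (by omega)))
      ((mul_one _).trans_le (T3 (k := 2 + 3) (by omega : j + l ≤ 2) (by omega) (by omega)))
      ((mul_one _).trans_le (T3 (k := 2 + 4) (by omega : j + l ≤ 2) (by omega) (by omega)))
    rw [mul_one] at this
    refine this.trans (mul_le_mul_of_nonneg_right ?_ (by positivity))
    unfold MM
    linarith [abs_nonneg (c1 2), abs_nonneg (c2 2)]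
  generalize hK : 12000 * (16 * C) ^ 2 = K at *
  have HB3 : ∀ {j l : ℕ}, j + l = 2 → |HB p q 2 j l ξ η r| ≤ K * s ^ 3 := by
    intro j l h
    have := (bdry b hs hs1 hrs hξ hη hσ (by omega : j ≤ 2) (by omega : l ≤ 2)).1
    rw [hK, h] at this
    refine le_of_mul_le_mul_right (a := s ^ (2 * 2)) (this.trans (le_of_eq (by ring)))
      (by positivity)
  have HX3 : ∀ {j l : ℕ}, j + l = 1 → |HX p q 2 j l ξ η r| ≤ K * s ^ 3 := by
    intro j l h
    have := (bdry b hs hs1 hrs hξ hη hσ (by omega : j ≤ 2) (by omega : l ≤ 2)).2.1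
    rw [hK, h] at this
    refine le_of_mul_le_mul_right (a := s ^ (2 * 1)) (this.trans (le_of_eq (by ring)))
      (by positivity)
  have HY3 : ∀ {j l : ℕ}, j + l = 1 → |HY p 2 j l ξ η r| ≤ K * s ^ 3 := by
    intro j l h
    have := (bdry b hs hs1 hrs hξ hη hσ (by omega : j ≤ 2) (by omega : l ≤ 2)).2.2
    rw [hK, h] at this
    refine le_of_mul_le_mul_right (a := s ^ (2 * 1)) (this.trans (le_of_eq (by ring)))
      (by positivity)
  have n2 : |(2:ℝ)| ≤ 2 := by norm_num
  have n4 : |(4:ℝ)| ≤ 4 := by norm_num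
  have nδ : |ξ - η| ≤ s ^ 2 := by rw [hσ, abs_le]; constructor <;> linarith
  have nδ2 : |2 * (ξ - η)| ≤ 2 * s ^ 2 := ab_mul n2 nδ
  have nδ4 : |4 * (ξ - η)| ≤ 4 * s ^ 2 := ab_mul n4 nδ
  have nσ : |2 * (ξ + η)| ≤ 2 * s ^ 2 := by
    rw [hσ]; exact (abs_of_pos (by positivity)).le
  constructor
  · refine fin_alg hs hδ ?_
    have e : (ξ - η) ^ 2 * I p 2 r 2 0 ξ η =
      -(HB p q 2 2 0 ξ η r - 2 * HX p q 2 1 0 ξ η r + 2 * HY p 2 1 0 ξ η r) -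
      (4 * KA p 2 r 1 0 ξ η + 2 * (ξ + η) * KA p 2 r 2 0 ξ η + KE p 2 r 2 0 ξ η)
      - (4 * (ξ - η) * I p 2 r 1 0 ξ η + 2 * I p 2 r 0 0 ξ η) := by
      linarith [id20 d b (le_refl 2) hr.le hξ hη]
    rw [e]
    refine (ab_sub (ab_sub (ab_neg (ab_add (ab_sub (HB3 (by norm_num))
      (ab_mul n2 (HX3 (by norm_num)))) (ab_mul n2 (HY3 (by norm_num)))))
      (ab_add (ab_add (ab_mul n4 (KA3 (by norm_num))) (ab_mul nσ (KA1 (by norm_num))))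
      (KE3 (by norm_num))))
      (ab_add (ab_mul nδ4 (T1 (by norm_num) (by norm_num) (by norm_num)))
      (ab_mul n2 (T3 (by norm_num) (by norm_num) (by norm_num))))).trans (le_of_eq ?_)
    ring
  · refine fin_alg hs hδ ?_
    have e : (ξ - η) ^ 2 * I p 2 r 1 1 ξ η =
      -(HB p q 2 1 1 ξ η r + HX p q 2 1 0 ξ η r + HY p 2 1 0 ξ η r
        - HX p q 2 0 1 ξ η r + HY p 2 0 1 ξ η r) -
      (2 * KA p 2 r 1 0 ξ η + 2 * KA p 2 r 0 1 ξ η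
        + 2 * (ξ + η) * KA p 2 r 1 1 ξ η + KE p 2 r 1 1 ξ η)
      + (2 * (ξ - η) * I p 2 r 1 0 ξ η - 2 * (ξ - η) * I p 2 r 0 1 ξ η
        + 2 * I p 2 r 0 0 ξ η) := by
      linarith [id11 d b (le_refl 2) hr.le hξ hη]
    rw [e]
    refine (ab_add (ab_sub (ab_neg (ab_add (ab_sub (ab_add (ab_add (HB3 (by norm_num))
      (HX3 (by norm_num))) (HY3 (by norm_num))) (HX3 (by norm_num))) (HY3 (by norm_num))))
      (ab_add (ab_add (ab_add (ab_mul n2 (KA3 (by norm_num))) (ab_mul n2 (KA3 (by norm_num))))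
      (ab_mul nσ (KA1 (by norm_num)))) (KE3 (by norm_num))))
      (ab_add (ab_sub (ab_mul nδ2 (T1 (by norm_num) (by norm_num) (by norm_num)))
      (ab_mul nδ2 (T1 (by norm_num) (by norm_num) (by norm_num))))
      (ab_mul n2 (T3 (by norm_num) (by norm_num) (by norm_num))))).trans (le_of_eq ?_)
    ring

lemma low_near (d : Data p q) (b : Bd p q C) {s r : ℝ} (hs : 0 < s)
    (hrs : r * s = 1) {ξ η : ℝ} (hξ : 0 < ξ) (hη : 0 < η) (hσ : s ^ 2 = ξ + η)
    (hδ : 2 * |ξ - η| ≤ s ^ 2) {j l : ℕ} (hjl : j + l = 2) :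
    |I p 2 r j l ξ η| * s ≤ 4 * 36 * C ^ 2 := by
  have hr : 0 < r := by by_contra h; push Not at h; nlinarith
  have hC := b.one_le
  have x1 : s / 2 ≤ Real.sqrt ξ := by
    apply Real.le_sqrt_of_sq_le
    nlinarith [neg_abs_le (ξ - η)]
  have y1 : s / 2 ≤ Real.sqrt η := by
    apply Real.le_sqrt_of_sq_le
    nlinarith [le_abs_self (ξ - η)]
  have x2 : 1 ≤ Real.sqrt (1 + ξ) := by rw [Real.one_le_sqrt]; linarith
  have y2 : 1 ≤ Real.sqrt (1 + η) := by rw [Real.one_le_sqrt]; linarith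
  have := I_bound d (n := 2) (j := j) (l := l) (m := j + l) (e := 0) (ξ := ξ) (η := η)
      (r := r) (W := (s / 2) ^ (j + l)) (A := C ^ 2) (by omega) (by omega) hr.le
      (by positivity) (by positivity) (by omega) ?_
  · rw [hjl] at this
    have h1 : |I p 2 r j l ξ η| * (s / 2) ^ 2 * r ≤ 6 ^ 2 * C ^ 2 := by
      refine le_trans ?_ this
      rw [zero_add, pow_one]
      gcongr; linarith
    have e : |I p 2 r j l ξ η| * (s / 2) ^ 2 * r = |I p 2 r j l ξ η| * s / 4 * (r * s) := by ring
    rw [e, hrs] at h1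
    linarith
  · intro R hR
    have hR0 : 0 < R := hr.trans hR
    have a1 := b.fine j (by omega) ξ R hξ.le hR0.le
    have a2 := b.fine l (by omega) η R hη.le hR0.le
    have k1 : |p j ξ R| * (s / 2) ^ j * 1 ≤ C * (1 + R) ^ j := le_trans (by gcongr) a1
    have k2 : |p l η R| * (s / 2) ^ l * 1 ≤ C * (1 + R) ^ l := le_trans (by gcongr) a2
    calc |p j ξ R| * |p l η R| * (s / 2) ^ (j + l)
          = (|p j ξ R| * (s / 2) ^ j * 1) * (|p l η R| * (s / 2) ^ l * 1) := by ring
      _ ≤ (C * (1 + R) ^ j) * (C * (1 + R) ^ l) := by gcongr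
      _ = _ := by ring

lemma I_split (d : Data p q) (b : Bd p q C) {r : ℝ} (hr : 0 ≤ r) {ξ η : ℝ}
    (hξ : 0 < ξ) (hη : 0 < η) {j l : ℕ} (hjl : j + l = 2) :
    |I p 2 0 j l ξ η| ≤ 36 * C ^ 2 * r + |I p 2 r j l ξ η| := by
  have hi := I_int d b hjl.le (le_refl 2) hξ hη (le_refl 0)
  have e : I p 2 0 j l ξ η = (∫ R in Set.Ioc 0 r, w R ^ 2 * p j ξ R * p l η R) +
      I p 2 r j l ξ η := by
    unfold I
    rw [← setIntegral_union (Set.Ioc_disjoint_Ioi le_rfl) measurableSet_Ioi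
      (hi.mono_set Set.Ioc_subset_Ioi_self) (hi.mono_set (Set.Ioi_subset_Ioi hr)),
      Set.Ioc_union_Ioi_eq_Ioi hr]
  rw [e]
  refine (abs_add_le _ _).trans (add_le_add ?_ le_rfl)
  have := norm_setIntegral_le_of_norm_le_const (μ := volume) (s := Set.Ioc 0 r)
    (f := fun R => w R ^ 2 * p j ξ R * p l η R) (C := 36 * C ^ 2) (by simp) ?_
  · simpa [hr] using this
  · intro R hR
    have h1 := b.crude2 (by omega : j ≤ 2) (by omega : l ≤ 2) hξ.le hη.le hR.1.le
    rw [← mul_add, hjl] at h1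
    have h2 := w_pow_le 2 R hR.1.le
    have hw := w_pos R
    rw [Real.norm_eq_abs, abs_mul, abs_mul, abs_of_pos (pow_pos hw 2), mul_assoc]
    calc w R ^ 2 * (|p j ξ R| * |p l η R|) ≤ w R ^ 2 * (C ^ 2 * (1 + R) ^ (2 * 2)) := by gcongr
      _ = (w R ^ 2 * (1 + R) ^ (2 * 2)) * C ^ 2 := by ring
      _ ≤ 6 ^ 2 * C ^ 2 := by gcongr
      _ = _ := by ring

def KL (C : ℝ) : ℝ := 4 * KT C + 4 * 36 * C ^ 2 + 36 * C ^ 2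

lemma low2 (d : Data p q) (b : Bd p q C) {ξ η : ℝ}
    (hξ : 0 < ξ) (hη : 0 < η) (hσ : ξ + η ≤ 1) {j l : ℕ} (hjl : j + l = 2) :
    |I p 2 0 j l ξ η| * Real.sqrt (ξ + η) ≤ KL C := by
  have hs : 0 < Real.sqrt (ξ + η) := Real.sqrt_pos.2 (by linarith)
  have hs1 : Real.sqrt (ξ + η) ≤ 1 := by rw [Real.sqrt_le_left (by norm_num)]; linarith
  have hss : Real.sqrt (ξ + η) ^ 2 = ξ + η := Real.sq_sqrt (by linarith)
  generalize Real.sqrt (ξ + η) = s at *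
  have hC := b.one_le
  have hrs : s⁻¹ * s = 1 := inv_mul_cancel₀ hs.ne'
  have h1 := I_split d b (r := s⁻¹) (by positivity) hξ hη hjl
  have hKT : 0 ≤ KT C := by unfold KT; have := MM_nonneg 2; positivity
  have h2 : |I p 2 s⁻¹ j l ξ η| * s ≤ 4 * KT C + 4 * 36 * C ^ 2 := by
    rcases le_total (s ^ 2) (2 * |ξ - η|) with h | h
    · have a := low_far d b hs hs1 hrs hξ hη hss h
      have a' := low_far d b hs hs1 hrs hη hξ (by linarith) (by rw [abs_sub_comm]; exact h)
      have : (j = 2 ∧ l = 0) ∨ (j = 1 ∧ l = 1) ∨ (j = 0 ∧ l = 2) := by omega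
      have h0 : 0 ≤ 4 * 36 * C ^ 2 := by positivity
      rcases this with ⟨rfl, rfl⟩ | ⟨rfl, rfl⟩ | ⟨rfl, rfl⟩
      · linarith [a.1]
      · linarith [a.2]
      · rw [I_symm]; linarith [a'.1]
    · have := low_near d b hs hrs hξ hη hss h hjl
      linarith
  calc _ ≤ (36 * C ^ 2 * s⁻¹ + |I p 2 s⁻¹ j l ξ η|) * s := by gcongr
    _ = 36 * C ^ 2 * (s⁻¹ * s) + |I p 2 s⁻¹ j l ξ η| * s := by ring
    _ ≤ _ := by rw [hrs]; unfold KL; linarith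
end

section
variable {p q : ℕ → ℝ → ℝ → ℝ} {C : ℝ}

def J (p : ℕ → ℝ → ℝ → ℝ) (j l : ℕ) (ξ η : ℝ) : ℝ :=
  20 * I p 3 0 j l ξ η - 10 * I p 2 0 j l ξ η

lemma U_eq (R : ℝ) : U R = 20 * w R ^ 3 - 10 * w R ^ 2 := by
  have h : (0 : ℝ) < 1 + R ^ 2 / 3 := by positivity
  unfold U w
  generalize hx : 1 + R ^ 2 / 3 = x at *
  have : R ^ 2 = 3 * (x - 1) := by linarith
  rw [this]
  field_simp
  ring

lemma U_int (d : Data p q) (b : Bd p q C) {ξ η : ℝ} (hξ : 0 < ξ) (hη : 0 < η) :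
    IntegrableOn (fun R => U R * p 0 ξ R * p 0 η R) (Set.Ioi 0) ∧
    ∫ R in Set.Ioi (0 : ℝ), U R * p 0 ξ R * p 0 η R = J p 0 0 ξ η := by
  have e : (fun R => U R * p 0 ξ R * p 0 η R) = fun R =>
      20 * (w R ^ 3 * p 0 ξ R * p 0 η R) - 10 * (w R ^ 2 * p 0 ξ R * p 0 η R) := by
    ext R; rw [U_eq]; ring
  have i3 := (I_int d b (n := 3) (j := 0) (l := 0) (by norm_num) (by norm_num) hξ hη
    le_rfl).const_mul 20
  have i2 := (I_int d b (n := 2) (j := 0) (l := 0) (by norm_num) (by norm_num) hξ hη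
    le_rfl).const_mul 10
  rw [e]
  refine ⟨i3.sub i2, ?_⟩
  rw [integral_sub i3 i2, integral_const_mul, integral_const_mul]
  rfl

lemma J_dξ (d : Data p q) (b : Bd p q C) {j l : ℕ} (hjl : j + l ≤ 1)
    {ξ η : ℝ} (h1 : 0 < ξ) (h2 : 0 < η) :
    HasDerivAt (fun ξ => J p j l ξ η) (J p (j + 1) l ξ η) ξ :=
  ((I_dξ d b hjl (by norm_num) le_rfl h1 h2).const_mul 20).sub
    ((I_dξ d b hjl (by norm_num) le_rfl h1 h2).const_mul 10)

lemma J_dη (d : Data p q) (b : Bd p q C) {j l : ℕ} (hjl : j + l ≤ 1)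
    {ξ η : ℝ} (h1 : 0 < ξ) (h2 : 0 < η) :
    HasDerivAt (fun η => J p j l ξ η) (J p j (l + 1) ξ η) η :=
  ((I_dη d b hjl (by norm_num) le_rfl h1 h2).const_mul 20).sub
    ((I_dη d b hjl (by norm_num) le_rfl h1 h2).const_mul 10)

lemma J_abs {j l : ℕ} {ξ η s A B : ℝ} (hs : 0 ≤ s) (h3 : |I p 3 0 j l ξ η| * s ≤ A)
    (h2 : |I p 2 0 j l ξ η| * s ≤ B) : |J p j l ξ η| * s ≤ 20 * A + 10 * B := by
  have := abs_sub (20 * I p 3 0 j l ξ η) (10 * I p 2 0 j l ξ η)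
  rw [abs_mul, abs_mul, abs_of_pos (by norm_num : (0 : ℝ) < 20),
    abs_of_pos (by norm_num : (0 : ℝ) < 10)] at this
  unfold J
  calc _ ≤ (20 * |I p 3 0 j l ξ η| + 10 * |I p 2 0 j l ξ η|) * s := by gcongr
    _ = 20 * (|I p 3 0 j l ξ η| * s) + 10 * (|I p 2 0 j l ξ η| * s) := by ring
    _ ≤ _ := by gcongr

lemma J_low (d : Data p q) (b : Bd p q C) : ∃ K, 0 ≤ K ∧ ∀ ξ η : ℝ, 0 < ξ → 0 < η → ξ + η ≤ 1 →
    |J p 0 0 ξ η| ≤ K * (ξ + η) ∧ |J p 1 0 ξ η| ≤ K ∧ |J p 0 1 ξ η| ≤ K ∧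
    ∀ j l, j + l = 2 → |J p j l ξ η| * Real.sqrt (ξ + η) ≤ K := by
  have hC := b.one_le
  refine ⟨5000 * C ^ 2 + 10 * |KL C|, by positivity, fun ξ η hξ hη hσ => ⟨?_, ?_, ?_, ?_⟩⟩
  · have := low0 d b hξ hη
    unfold J
    nlinarith [mul_nonneg (abs_nonneg (KL C)) (by linarith : 0 ≤ ξ + η)]
  · have h3 := low_crude d b (n := 3) (j := 1) (l := 0) (e := 0) (r := 0) (by norm_num)
      (by norm_num) (by norm_num) hξ.le hη.le le_rfl
    have h2 := low_crude d b (n := 2) (j := 1) (l := 0) (e := 0) (r := 0) (by norm_num)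
      (by norm_num) (by norm_num) hξ.le hη.le le_rfl
    have := J_abs (by norm_num) h3 h2
    norm_num at this
    nlinarith [sq_nonneg C, abs_nonneg (KL C)]
  · have h3 := low_crude d b (n := 3) (j := 0) (l := 1) (e := 0) (r := 0) (by norm_num)
      (by norm_num) (by norm_num) hξ.le hη.le le_rfl
    have h2 := low_crude d b (n := 2) (j := 0) (l := 1) (e := 0) (r := 0) (by norm_num)
      (by norm_num) (by norm_num) hξ.le hη.le le_rfl
    have := J_abs (by norm_num) h3 h2
    norm_num at this
    nlinarith [sq_nonneg C, abs_nonneg (KL C)]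
  · intro j l hjl
    have h3 := low_crude d b (n := 3) (j := j) (l := l) (e := 0) (r := 0) (by omega)
      (by omega) (by omega) hξ.le hη.le le_rfl
    have hs1 : Real.sqrt (ξ + η) ≤ 1 := by rw [Real.sqrt_le_left (by norm_num)]; linarith
    have h2 := low2 d b hξ hη hσ hjl
    norm_num at h3
    have h3' : |I p 3 0 j l ξ η| * Real.sqrt (ξ + η) ≤ 216 * C ^ 2 := by
      nlinarith [abs_nonneg (I p 3 0 j l ξ η), Real.sqrt_nonneg (ξ + η)]
    have := J_abs (Real.sqrt_nonneg _) h3' h2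
    nlinarith [sq_nonneg C, le_abs_self (KL C)]

lemma J_high (d : Data p q) (b : Bd p q C) (N : ℕ) : ∃ K, 0 ≤ K ∧
    ∀ ξ η : ℝ, 0 < ξ → 0 < η → 1 ≤ ξ + η → ∀ j l, j + l ≤ 2 →
    |J p j l ξ η| * (Real.sqrt (ξ + η) ^ (2 + j + l) *
      (1 + |Real.sqrt ξ - Real.sqrt η|) ^ N) ≤ K := by
  obtain ⟨K3, h3, H3⟩ := high d b N 3 (by norm_num)
  obtain ⟨K2, h2, H2⟩ := high d b N 2 (by norm_num)
  exact ⟨20 * K3 + 10 * K2, by positivity, fun ξ η hξ hη hσ j l hjl =>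
    J_abs (by positivity) (H3 ξ η hξ hη hσ j l hjl) (H2 ξ η hξ hη hσ j l hjl)⟩

lemma kernel_main (d : Data p q) (b : Bd p q C) (F : ℝ → ℝ → ℝ)
    (hF : ∀ ξ η : ℝ, 0 < ξ → 0 < η → F ξ η = J p 0 0 ξ η) :
    (∀ ξ : ℝ, 0 < ξ → ∀ η : ℝ, 0 < η → F ξ η = F η ξ) ∧
    ContDiffOn ℝ 2 (fun p : ℝ × ℝ => F p.1 p.2) (Set.Ioi 0 ×ˢ Set.Ioi 0) ∧
    (∀ N : ℕ, ∃ C : ℝ, 0 < C ∧ ∀ ξ : ℝ, 0 < ξ → ∀ η : ℝ, 0 < η →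
      (ξ + η ≤ 1 → |F ξ η| ≤ C * (ξ + η)) ∧
      (1 ≤ ξ + η →
        |F ξ η| ≤ C / ((ξ + η) * (1 + |Real.sqrt ξ - Real.sqrt η|) ^ N)) ∧
      (ξ + η ≤ 1 →
        |deriv (fun ξ' => F ξ' η) ξ| + |deriv (fun η' => F ξ η') η| ≤ C) ∧
      (1 ≤ ξ + η →
        |deriv (fun ξ' => F ξ' η) ξ| + |deriv (fun η' => F ξ η') η|
          ≤ C / ((ξ + η) * Real.sqrt (ξ + η) * (1 + |Real.sqrt ξ - Real.sqrt η|) ^ N)) ∧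
      (ξ + η ≤ 1 →
        |deriv (fun ξ' => deriv (fun ξ'' => F ξ'' η) ξ') ξ|
          + |deriv (fun η' => deriv (fun η'' => F ξ η'') η') η|
          + |deriv (fun ξ' => deriv (fun η' => F ξ' η') η) ξ|
          ≤ C / Real.sqrt (ξ + η)) ∧
      (1 ≤ ξ + η →
        |deriv (fun ξ' => deriv (fun ξ'' => F ξ'' η) ξ') ξ|
          + |deriv (fun η' => deriv (fun η'' => F ξ η'') η') η|
          + |deriv (fun ξ' => deriv (fun η' => F ξ' η') η) ξ|
          ≤ C / ((ξ + η) ^ 2 * (1 + |Real.sqrt ξ - Real.sqrt η|) ^ N))) := by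
  have dξ : ∀ ξ η : ℝ, 0 < ξ → 0 < η → deriv (fun ξ' => F ξ' η) ξ = J p 1 0 ξ η := by
    intro ξ η hξ hη
    rw [← (J_dξ d b (by norm_num : 0 + 0 ≤ 1) hξ hη).deriv]
    apply Filter.EventuallyEq.deriv_eq
    filter_upwards [lt_mem_nhds hξ] with t ht using hF t η ht hη
  have dη : ∀ ξ η : ℝ, 0 < ξ → 0 < η → deriv (fun η' => F ξ η') η = J p 0 1 ξ η := by
    intro ξ η hξ hη
    rw [← (J_dη d b (by norm_num : 0 + 0 ≤ 1) hξ hη).deriv]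
    apply Filter.EventuallyEq.deriv_eq
    filter_upwards [lt_mem_nhds hη] with t ht using hF ξ t hξ ht
  have d20 : ∀ ξ η : ℝ, 0 < ξ → 0 < η →
      deriv (fun ξ' => deriv (fun ξ'' => F ξ'' η) ξ') ξ = J p 2 0 ξ η := by
    intro ξ η hξ hη
    rw [← (J_dξ d b (by norm_num : 1 + 0 ≤ 1) hξ hη).deriv]
    apply Filter.EventuallyEq.deriv_eq
    filter_upwards [lt_mem_nhds hξ] with t ht using dξ t η ht hη
  have d02 : ∀ ξ η : ℝ, 0 < ξ → 0 < η →
      deriv (fun η' => deriv (fun η'' => F ξ η'') η') η = J p 0 2 ξ η := by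
    intro ξ η hξ hη
    rw [← (J_dη d b (by norm_num : 0 + 1 ≤ 1) hξ hη).deriv]
    apply Filter.EventuallyEq.deriv_eq
    filter_upwards [lt_mem_nhds hη] with t ht using dη ξ t hξ ht
  have d11 : ∀ ξ η : ℝ, 0 < ξ → 0 < η →
      deriv (fun ξ' => deriv (fun η' => F ξ' η') η) ξ = J p 1 1 ξ η := by
    intro ξ η hξ hη
    rw [← (J_dξ d b (by norm_num : 0 + 1 ≤ 1) hξ hη).deriv]
    apply Filter.EventuallyEq.deriv_eq
    filter_upwards [lt_mem_nhds hξ] with t ht using dη t η ht hη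
  refine ⟨?_, ?_, ?_⟩
  · intro ξ hξ η hη
    rw [hF ξ η hξ hη, hF η ξ hη hξ]
    unfold J
    rw [I_symm p 3 0 0 0 ξ η, I_symm p 2 0 0 0 ξ η]
  · have h3 := I_contDiff d b (n := 3) (by norm_num) (le_refl (0 : ℝ))
    have h2 := I_contDiff d b (n := 2) (by norm_num) (le_refl (0 : ℝ))
    exact ((contDiffOn_const.mul h3).sub (contDiffOn_const.mul h2)).congr
      fun x hx => hF x.1 x.2 hx.1 hx.2
  · intro N
    obtain ⟨A, hA, HA⟩ := J_low d b
    obtain ⟨B, hB, HB⟩ := J_high d b N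
    refine ⟨3 * A + 3 * B + 1, by positivity, fun ξ hξ η hη => ?_⟩
    rw [hF ξ η hξ hη, dξ ξ η hξ hη, dη ξ η hξ hη, d20 ξ η hξ hη, d02 ξ η hξ hη, d11 ξ η hξ hη]
    have hσ : 0 < ξ + η := by linarith
    have hs : 0 < Real.sqrt (ξ + η) := Real.sqrt_pos.2 hσ
    have hss : Real.sqrt (ξ + η) ^ 2 = ξ + η := Real.sq_sqrt hσ.le
    have hD : 0 < (1 + |Real.sqrt ξ - Real.sqrt η|) ^ N := by positivity
    have hl := HA ξ η hξ hη
    have hh := HB ξ η hξ hη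
    generalize (1 + |Real.sqrt ξ - Real.sqrt η|) ^ N = D at *
    generalize Real.sqrt (ξ + η) = s at *
    refine ⟨fun h => ?_, fun h => ?_, fun h => ?_, fun h => ?_, fun h => ?_, fun h => ?_⟩
    · have := (hl h).1
      nlinarith [mul_nonneg hA hσ.le, mul_nonneg hB hσ.le]
    · have := hh h 0 0 (by norm_num)
      norm_num at this
      rw [hss] at this
      rw [le_div_iff₀ (by positivity)]
      linarith
    · obtain ⟨-, h1, h2, -⟩ := hl h
      linarith
    · have h1 := hh h 1 0 (by norm_num)
      have h2 := hh h 0 1 (by norm_num)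
      have e : s ^ 3 = (ξ + η) * s := by rw [← hss]; ring
      norm_num at h1 h2
      rw [e] at h1 h2
      rw [le_div_iff₀ (by positivity)]
      linarith
    · obtain ⟨-, -, -, h1⟩ := hl h
      have a1 := h1 2 0 rfl
      have a2 := h1 0 2 rfl
      have a3 := h1 1 1 rfl
      rw [le_div_iff₀ hs]
      linarith
    · have a1 := hh h 2 0 (by norm_num)
      have a2 := hh h 0 2 (by norm_num)
      have a3 := hh h 1 1 (by norm_num)
      have e : s ^ 4 = (ξ + η) ^ 2 := by rw [← hss]; ring
      norm_num at a1 a2 a3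
      rw [e] at a1 a2 a3
      rw [le_div_iff₀ (by positivity)]
      linarith

end

end Helpers

/-- Symmetry, `C²` regularity and pointwise bounds for
`F(ξ,η) = ∫₀^∞ U(R) φ(R,ξ) φ(R,η) dR`. -/
theorem F_kernel_bounds
    (φ : ℝ → ℝ → ℝ)
    (hφ : ∀ ξ : ℝ,
      φ ξ 0 = 0 ∧ deriv (φ ξ) 0 = 1 ∧
      (∀ R : ℝ, HasDerivAt (φ ξ) (deriv (φ ξ) R) R) ∧
      (∀ R : ℝ, HasDerivAt (deriv (φ ξ)) (deriv (deriv (φ ξ)) R) R) ∧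
      (∀ R : ℝ, - deriv (deriv (φ ξ)) R - (5 / (1 + R ^ 2 / 3) ^ 2) * φ ξ R = ξ * φ ξ R)) :
    let F : ℝ → ℝ → ℝ := fun ξ η => ∫ R in Set.Ioi (0 : ℝ), U R * φ ξ R * φ η R
    -- the defining integral converges
    (∀ ξ : ℝ, 0 < ξ → ∀ η : ℝ, 0 < η →
      IntegrableOn (fun R => U R * φ ξ R * φ η R) (Set.Ioi 0)) ∧
    -- symmetry
    (∀ ξ : ℝ, 0 < ξ → ∀ η : ℝ, 0 < η → F ξ η = F η ξ) ∧
    -- C² regularity on (0,∞) × (0,∞)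
    ContDiffOn ℝ 2 (fun p : ℝ × ℝ => F p.1 p.2) (Set.Ioi 0 ×ˢ Set.Ioi 0) ∧
    -- pointwise bounds
    (∀ N : ℕ, ∃ C : ℝ, 0 < C ∧ ∀ ξ : ℝ, 0 < ξ → ∀ η : ℝ, 0 < η →
      (ξ + η ≤ 1 → |F ξ η| ≤ C * (ξ + η)) ∧
      (1 ≤ ξ + η →
        |F ξ η| ≤ C / ((ξ + η) * (1 + |Real.sqrt ξ - Real.sqrt η|) ^ N)) ∧
      (ξ + η ≤ 1 →
        |deriv (fun ξ' => F ξ' η) ξ| + |deriv (fun η' => F ξ η') η| ≤ C) ∧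
      (1 ≤ ξ + η →
        |deriv (fun ξ' => F ξ' η) ξ| + |deriv (fun η' => F ξ η') η|
          ≤ C / ((ξ + η) * Real.sqrt (ξ + η) * (1 + |Real.sqrt ξ - Real.sqrt η|) ^ N)) ∧
      (ξ + η ≤ 1 →
        |deriv (fun ξ' => deriv (fun ξ'' => F ξ'' η) ξ') ξ|
          + |deriv (fun η' => deriv (fun η'' => F ξ η'') η') η|
          + |deriv (fun ξ' => deriv (fun η' => F ξ' η') η) ξ|
          ≤ C / Real.sqrt (ξ + η)) ∧
      (1 ≤ ξ + η →
        |deriv (fun ξ' => deriv (fun ξ'' => F ξ'' η) ξ') ξ|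
          + |deriv (fun η' => deriv (fun η'' => F ξ η'') η') η|
          + |deriv (fun ξ' => deriv (fun η' => F ξ' η') η) ξ|
          ≤ C / ((ξ + η) ^ 2 * (1 + |Real.sqrt ξ - Real.sqrt η|) ^ N))) := by
  intro F
  obtain ⟨p, q, d, rfl⟩ := exists_data φ hφ
  obtain ⟨C, b⟩ := d.bd
  exact ⟨fun ξ hξ η hη => (U_int d b hξ hη).1,
    kernel_main d b F fun ξ η hξ hη => (U_int d b hξ hη).2⟩

end TransferenceKernel
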